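/- Let D be a bounded domain in ℂ and assume that w ∈ ∂D is a regular boundary point. Then K_D(z) → ∞ as D ∋ z → w. -/

import Mathlib

open MeasureTheory Filter Topology Metric Set
open scoped ENNReal NNReal

/-- Truncated circle average of an `EReal`-valued function: the average over the circle of
center `c` and radius `R` of the function truncated below at `-n`. -/
noncomputable def circleAvgTrunc (u : ℂ → EReal) (c : ℂ) (R : ℝ) (n : ℕ) : ℝ :=
  (2 * Real.pi)⁻¹ * ∫ θ in (0:ℝ)..(2 * Real.pi),
    (max (u (c + R * Complex.exp (θ * Complex.I))) (-(n : ℝ) : EReal)).toReal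

/-- `u` is subharmonic on `Ω ⊆ ℂ`: values in `[-∞, ∞)`, upper semicontinuous on `Ω`, and for
every closed disc contained in `Ω` the value at the center is at most the mean over the
boundary circle (in the extended sense, via decreasing truncations). -/
def SubharmonicOn (u : ℂ → EReal) (Ω : Set ℂ) : Prop :=
  UpperSemicontinuousOn u Ω ∧ (∀ z ∈ Ω, u z < ⊤) ∧
    ∀ c ∈ Ω, ∀ R : ℝ, 0 < R → Metric.closedBall c R ⊆ Ω →
      u c ≤ ⨅ n : ℕ, (circleAvgTrunc u c R n : EReal)

/-- `u` is plurisubharmonic on `Ω`: values in `[-∞, ∞)`, upper semicontinuous on `Ω`, and its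
restriction to every complex line is subharmonic. -/
def PlurisubharmonicOn {E : Type*} [NormedAddCommGroup E] [NormedSpace ℂ E]
    (u : E → EReal) (Ω : Set E) : Prop :=
  UpperSemicontinuousOn u Ω ∧ (∀ z ∈ Ω, u z < ⊤) ∧
    ∀ a b : E, SubharmonicOn (fun lam : ℂ => u (a + lam • b)) {lam : ℂ | a + lam • b ∈ Ω}

/-- A set `P ⊆ ℂ` is polar. -/
def PolarSet (P : Set ℂ) : Prop :=
  ∀ z ∈ P, ∃ U : Set ℂ, IsOpen U ∧ IsConnected U ∧ z ∈ U ∧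
    ∃ u : ℂ → EReal, SubharmonicOn u U ∧ (∃ x ∈ U, u x ≠ ⊥) ∧ ∀ x ∈ P ∩ U, u x = ⊥

/-- A set `P ⊆ ℂⁿ` is pluripolar. -/
def PluripolarSet {E : Type*} [NormedAddCommGroup E] [NormedSpace ℂ E] (P : Set E) : Prop :=
  ∀ z ∈ P, ∃ U : Set E, IsOpen U ∧ IsConnected U ∧ z ∈ U ∧
    ∃ u : E → EReal, PlurisubharmonicOn u U ∧ (∃ x ∈ U, u x ≠ ⊥) ∧ ∀ x ∈ P ∩ U, u x = ⊥

/-- A domain `D` is pseudoconvex if `z ↦ -log dist(z, ∂D)` is plurisubharmonic on `D`. -/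
def IsPseudoconvex {E : Type*} [NormedAddCommGroup E] [NormedSpace ℂ E] (D : Set E) : Prop :=
  PlurisubharmonicOn (fun z => ((- Real.log (Metric.infDist z Dᶜ) : ℝ) : EReal)) D

/-- The square-integrable holomorphic functions on an open set `Ω`. -/
def L2h {E : Type*} [NormedAddCommGroup E] [NormedSpace ℂ E] [MeasureSpace E]
    (Ω : Set E) : Set (E → ℂ) :=
  {f | DifferentiableOn ℂ f Ω ∧ (∫⁻ z in Ω, (‖f z‖₊ : ℝ≥0∞) ^ 2) < ⊤}

/-- The Bergman kernel of `Ω` on the diagonal,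
`K_Ω(z) = sup { |f(z)|²/‖f‖²_{L²(Ω)} : f ∈ L²ₕ(Ω), f ≢ 0 }`. -/
noncomputable def bergmanKernel {E : Type*} [NormedAddCommGroup E] [NormedSpace ℂ E]
    [MeasureSpace E] (Ω : Set E) (z : E) : ℝ≥0∞ :=
  ⨆ (f : E → ℂ) (_ : f ∈ L2h Ω) (_ : ∃ w ∈ Ω, f w ≠ 0),
    (‖f z‖₊ : ℝ≥0∞) ^ 2 / ∫⁻ w in Ω, (‖f w‖₊ : ℝ≥0∞) ^ 2

/-- `D` is an `L²ₕ`-domain of holomorphy: there are no domains `D₀, D₁` with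
`∅ ≠ D₀ ⊆ D₁ ∩ D`, `D₁ ⊄ D`, such that every `f ∈ L²ₕ(D)` extends holomorphically to `D₁`
(agreeing with `f` on `D₀`). -/
def IsL2hDomainOfHolomorphy {E : Type*} [NormedAddCommGroup E] [NormedSpace ℂ E]
    [MeasureSpace E] (D : Set E) : Prop :=
  ¬ ∃ D0 D1 : Set E, IsOpen D0 ∧ IsConnected D0 ∧ IsOpen D1 ∧ IsConnected D1 ∧
      D0 ⊆ D1 ∩ D ∧ ¬ (D1 ⊆ D) ∧
      ∀ f ∈ L2h D, ∃ F : E → ℂ, DifferentiableOn ℂ F D1 ∧ Set.EqOn F f D0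

/-- `w` is a regular boundary point of the domain `D ⊆ ℂ`. -/
def RegularBoundaryPt (D : Set ℂ) (w : ℂ) : Prop :=
  ∃ U : Set ℂ, IsOpen U ∧ w ∈ U ∧ ∃ u : ℂ → EReal, SubharmonicOn u (U ∩ D) ∧
    (∀ z ∈ U ∩ D, u z < 0) ∧ Tendsto u (𝓝[U ∩ D] w) (𝓝 (0 : EReal))

/-- The (pluricomplex) Green function of a domain `D ⊆ ℂ` with logarithmic pole at `p`. -/
noncomputable def greenFn (D : Set ℂ) (p z : ℂ) : EReal :=
  sSup {v : EReal | ∃ u : ℂ → EReal, SubharmonicOn u D ∧ (∀ x ∈ D, u x < 0) ∧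
    (∃ C : ℝ, ∀ᶠ x in 𝓝 p, u x ≤ ((Real.log ‖x - p‖ + C : ℝ) : EReal)) ∧ v = u z}

/-- A polydisc in `ℂⁿ` with centre `c` and multiradius `r`. -/
def polydisc {n : ℕ} (c : Fin n → ℂ) (r : Fin n → ℝ) : Set (Fin n → ℂ) :=
  {z | ∀ i, ‖z i - c i‖ < r i}

open scoped ContDiff
/-- cutoff profile -/
noncomputable def kapZ (t : ℝ) : ℝ := Real.smoothTransition (2 - t)

noncomputable def kap (δ : ℝ) (x : ℂ) : ℝ := kapZ (Complex.normSq x / δ ^ 2)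

noncomputable def chi (δ : ℝ) (x : ℂ) : ℝ := -2 * deriv kapZ (Complex.normSq x / δ ^ 2) / δ ^ 2

noncomputable def pdx {F : Type*} [NormedAddCommGroup F] [NormedSpace ℝ F] (f : ℂ → F) (z : ℂ) : F :=
  fderiv ℝ f z 1

noncomputable def pdy {F : Type*} [NormedAddCommGroup F] [NormedSpace ℝ F] (f : ℂ → F) (z : ℂ) : F :=
  fderiv ℝ f z Complex.I

noncomputable def dbar (f : ℂ → ℂ) (z : ℂ) : ℂ := pdx f z + Complex.I * pdy f z

lemma kapZ_contDiff : ContDiff ℝ ∞ kapZ := by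
  unfold kapZ
  exact Real.smoothTransition.contDiff.comp (contDiff_const.sub contDiff_id)

lemma kapZ_deriv_contDiff : ContDiff ℝ ∞ (deriv kapZ) :=
  (contDiff_infty_iff_deriv.1 kapZ_contDiff).2

lemma normSq_contDiff : ContDiff ℝ ∞ (fun x : ℂ => Complex.normSq x) := by
  have : (fun x : ℂ => Complex.normSq x) = fun x => x.re * x.re + x.im * x.im := by
    ext x; exact Complex.normSq_apply x
  rw [this]
  have h1 : ContDiff ℝ ∞ (fun x : ℂ => x.re) := Complex.reCLM.contDiff
  have h2 : ContDiff ℝ ∞ (fun x : ℂ => x.im) := Complex.imCLM.contDiff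
  exact (h1.mul h1).add (h2.mul h2)

lemma kap_contDiff (δ : ℝ) : ContDiff ℝ ∞ (kap δ) :=
  kapZ_contDiff.comp (normSq_contDiff.div_const _)

lemma chi_contDiff (δ : ℝ) : ContDiff ℝ ∞ (chi δ) :=
  (contDiff_const.mul (kapZ_deriv_contDiff.comp (normSq_contDiff.div_const _))).div_const _

lemma kap_nonneg (δ : ℝ) (x : ℂ) : 0 ≤ kap δ x := Real.smoothTransition.nonneg _

lemma kap_le_one (δ : ℝ) (x : ℂ) : kap δ x ≤ 1 := Real.smoothTransition.le_one _

lemma kap_eq_one {δ : ℝ} (hδ : 0 < δ) {x : ℂ} (hx : ‖x‖ ≤ δ) : kap δ x = 1 := by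
  apply Real.smoothTransition.one_of_one_le
  have : Complex.normSq x / δ ^ 2 ≤ 1 := by
    rw [div_le_one (by positivity), Complex.normSq_eq_norm_sq]
    gcongr
  linarith

lemma kap_eq_zero {δ : ℝ} (hδ : 0 < δ) {x : ℂ} (hx : 2 * δ ≤ ‖x‖) : kap δ x = 0 := by
  apply Real.smoothTransition.zero_of_nonpos
  have : 2 ≤ Complex.normSq x / δ ^ 2 := by
    rw [le_div_iff₀ (by positivity), Complex.normSq_eq_norm_sq]
    nlinarith
  linarith

lemma kapZ_deriv_zero_lt {t : ℝ} (ht : t < 1) : deriv kapZ t = 0 := by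
  have : kapZ =ᶠ[𝓝 t] fun _ => (1:ℝ) := by
    filter_upwards [Iio_mem_nhds ht] with s hs
    exact Real.smoothTransition.one_of_one_le (by simp at hs; linarith)
  rw [this.deriv_eq]; simp

lemma kapZ_deriv_zero_gt {t : ℝ} (ht : 2 < t) : deriv kapZ t = 0 := by
  have : kapZ =ᶠ[𝓝 t] fun _ => (0:ℝ) := by
    filter_upwards [Ioi_mem_nhds ht] with s hs
    exact Real.smoothTransition.zero_of_nonpos (by simp at hs; linarith)
  rw [this.deriv_eq]; simp

lemma kapZ_deriv_nonpos (t : ℝ) : deriv kapZ t ≤ 0 := by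
  have : Antitone kapZ := fun a b h => Real.smoothTransition.monotone (by linarith)
  exact this.deriv_nonpos

lemma chi_nonneg (δ : ℝ) (x : ℂ) : 0 ≤ chi δ x := by
  unfold chi
  have := kapZ_deriv_nonpos (Complex.normSq x / δ ^ 2)
  apply div_nonneg _ (sq_nonneg _)
  linarith

lemma chi_eq_zero_in {δ : ℝ} (hδ : 0 < δ) {x : ℂ} (hx : ‖x‖ < δ) : chi δ x = 0 := by
  unfold chi
  rw [kapZ_deriv_zero_lt]; · simp
  rw [div_lt_one (by positivity), Complex.normSq_eq_norm_sq]
  gcongr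

lemma chi_eq_zero_out {δ : ℝ} (hδ : 0 < δ) {x : ℂ} (hx : 2 * δ ≤ ‖x‖) : chi δ x = 0 := by
  unfold chi
  rw [kapZ_deriv_zero_gt]; · simp
  rw [lt_div_iff₀ (by positivity), Complex.normSq_eq_norm_sq]
  nlinarith

lemma chi_even (δ : ℝ) (x : ℂ) : chi δ (-x) = chi δ x := by
  simp [chi]

lemma kapZ_deriv_bound : ∃ C : ℝ, 0 < C ∧ ∀ t, |deriv kapZ t| ≤ C := by
  have hc : HasCompactSupport (deriv kapZ) := by
    apply HasCompactSupport.intro (isCompact_Icc (a := 1) (b := 2))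
    intro t ht
    rw [mem_Icc, not_and_or] at ht
    rcases ht with h | h
    · exact kapZ_deriv_zero_lt (by linarith)
    · exact kapZ_deriv_zero_gt (by linarith)
  obtain ⟨C, hC⟩ := hc.exists_bound_of_continuous kapZ_deriv_contDiff.continuous
  exact ⟨|C| + 1, by positivity, fun t => (hC t).trans (by linarith [le_abs_self C])⟩

lemma chi_bound : ∃ C : ℝ, 0 < C ∧ ∀ δ : ℝ, ∀ x, chi δ x ≤ C / δ ^ 2 := by
  obtain ⟨C, hC, h⟩ := kapZ_deriv_bound
  refine ⟨2 * C, by positivity, fun δ x => ?_⟩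
  unfold chi
  apply div_le_div_of_nonneg_right _ (sq_nonneg _)
  have := (abs_le.1 (h (Complex.normSq x / δ ^ 2))).1
  linarith

lemma chi_hasCompactSupport {δ : ℝ} (hδ : 0 < δ) : HasCompactSupport (chi δ) := by
  apply HasCompactSupport.intro (isCompact_closedBall (0:ℂ) (2 * δ))
  intro x hx
  apply chi_eq_zero_out hδ
  simp at hx; exact hx.le

lemma kap_hasCompactSupport {δ : ℝ} (hδ : 0 < δ) : HasCompactSupport (kap δ) := by
  apply HasCompactSupport.intro (isCompact_closedBall (0:ℂ) (2 * δ))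
  intro x hx
  apply kap_eq_zero hδ
  simp at hx; exact hx.le

lemma chi_scale {δ : ℝ} (hδ : 0 < δ) (x : ℂ) :
    chi δ x = (δ ^ 2)⁻¹ * chi 1 ((δ⁻¹ : ℝ) • x) := by
  unfold chi
  simp only [Complex.real_smul, map_mul, Complex.normSq_ofReal]
  rw [show Complex.normSq x / δ ^ 2 = δ⁻¹ * δ⁻¹ * Complex.normSq x / 1 ^ 2 by field_simp]
  field_simp

noncomputable def mZ : ℝ := ∫ x, chi 1 x

lemma integral_chi {δ : ℝ} (hδ : 0 < δ) : ∫ x, chi δ x = mZ := by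
  simp_rw [chi_scale hδ]
  rw [integral_const_mul, Measure.integral_comp_smul]
  simp only [Complex.finrank_real_complex, inv_pow, inv_inv, smul_eq_mul, mZ]
  rw [abs_of_pos (by positivity)]
  field_simp

lemma mZ_pos : 0 < mZ := by
  obtain ⟨t, ht, h⟩ := exists_deriv_eq_slope kapZ (show (1:ℝ) < 2 by norm_num)
    kapZ_contDiff.continuous.continuousOn (kapZ_contDiff.differentiable (by simp)).differentiableOn
  have e1 : kapZ 1 = 1 := Real.smoothTransition.one_of_one_le (by norm_num)
  have e2 : kapZ 2 = 0 := Real.smoothTransition.zero_of_nonpos (by norm_num)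
  rw [e1, e2] at h
  unfold mZ
  refine (chi_contDiff 1).continuous.integral_pos_of_hasCompactSupport_nonneg_nonzero
    (chi_hasCompactSupport one_pos) (chi_nonneg 1) (x := ((Real.sqrt t : ℝ) : ℂ)) ?_
  unfold chi
  rw [Complex.normSq_ofReal, Real.mul_self_sqrt (by linarith [ht.1])]
  simp only [one_pow, div_one]
  rw [h]; norm_num

lemma hasFDerivAt_normSq (x : ℂ) : HasFDerivAt (fun x : ℂ => Complex.normSq x)
    ((2 * x.re) • Complex.reCLM + (2 * x.im) • Complex.imCLM) x := by
  have : (fun x : ℂ => Complex.normSq x) = fun x => Complex.reCLM x * Complex.reCLM x + Complex.imCLM x * Complex.imCLM x := by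
    ext x; exact Complex.normSq_apply x
  rw [this]
  have h1 := (Complex.reCLM.hasFDerivAt (x := x))
  have h2 := (Complex.imCLM.hasFDerivAt (x := x))
  refine ((h1.mul h1).add (h2.mul h2)).congr_fderiv ?_
  ext y
  simp
  ring

lemma hasFDerivAt_kap (δ : ℝ) (x : ℂ) : HasFDerivAt (kap δ)
    ((-chi δ x * x.re) • Complex.reCLM + (-chi δ x * x.im) • Complex.imCLM) x := by
  have h1 := (hasFDerivAt_normSq x).mul_const (δ ^ 2)⁻¹
  have h2 : HasDerivAt kapZ (deriv kapZ (Complex.normSq x * (δ ^ 2)⁻¹)) (Complex.normSq x * (δ ^ 2)⁻¹) :=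
    (kapZ_contDiff.differentiable (by simp)).differentiableAt.hasDerivAt
  have := h2.comp_hasFDerivAt x h1
  unfold kap
  simp only [div_eq_mul_inv]
  refine this.congr_fderiv ?_
  ext <;> simp [chi, div_eq_mul_inv] <;> ring

lemma pdx_kap (δ : ℝ) (x : ℂ) : pdx (kap δ) x = -chi δ x * x.re := by
  simp [pdx, (hasFDerivAt_kap δ x).fderiv]

lemma pdy_kap (δ : ℝ) (x : ℂ) : pdy (kap δ) x = -chi δ x * x.im := by
  simp [pdy, (hasFDerivAt_kap δ x).fderiv]

section pdcalc
variable {F : Type*} [NormedAddCommGroup F] [NormedSpace ℝ F]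

lemma pdx_contDiff {f : ℂ → F} (hf : ContDiff ℝ ∞ f) : ContDiff ℝ ∞ (pdx f) :=
  (hf.fderiv_right (m := ∞) (by simp)).clm_apply contDiff_const

lemma pdy_contDiff {f : ℂ → F} (hf : ContDiff ℝ ∞ f) : ContDiff ℝ ∞ (pdy f) :=
  (hf.fderiv_right (m := ∞) (by simp)).clm_apply contDiff_const

lemma pdx_supp {f : ℂ → F} (hf : HasCompactSupport f) : HasCompactSupport (pdx f) :=
  hf.fderiv_apply ℝ 1

lemma pdy_supp {f : ℂ → F} (hf : HasCompactSupport f) : HasCompactSupport (pdy f) :=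
  hf.fderiv_apply ℝ Complex.I

lemma smooth_diff {f : ℂ → F} (hf : ContDiff ℝ ∞ f) : Differentiable ℝ f :=
  hf.differentiable (by simp)

lemma pdx_add {f g : ℂ → F} (hf : ContDiff ℝ ∞ f) (hg : ContDiff ℝ ∞ g) (z : ℂ) :
    pdx (fun z => f z + g z) z = pdx f z + pdx g z := by
  unfold pdx
  rw [fderiv_fun_add (smooth_diff hf z) (smooth_diff hg z)]; rfl

lemma pdy_add {f g : ℂ → F} (hf : ContDiff ℝ ∞ f) (hg : ContDiff ℝ ∞ g) (z : ℂ) :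
    pdy (fun z => f z + g z) z = pdy f z + pdy g z := by
  unfold pdy
  rw [fderiv_fun_add (smooth_diff hf z) (smooth_diff hg z)]; rfl

lemma pdx_sub {f g : ℂ → F} (hf : ContDiff ℝ ∞ f) (hg : ContDiff ℝ ∞ g) (z : ℂ) :
    pdx (fun z => f z - g z) z = pdx f z - pdx g z := by
  unfold pdx
  rw [fderiv_fun_sub (smooth_diff hf z) (smooth_diff hg z)]; rfl

lemma pdy_sub {f g : ℂ → F} (hf : ContDiff ℝ ∞ f) (hg : ContDiff ℝ ∞ g) (z : ℂ) :
    pdy (fun z => f z - g z) z = pdy f z - pdy g z := by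
  unfold pdy
  rw [fderiv_fun_sub (smooth_diff hf z) (smooth_diff hg z)]; rfl

lemma pdx_mul {A : Type*} [NormedCommRing A] [NormedAlgebra ℝ A] {f g : ℂ → A}
    (hf : ContDiff ℝ ∞ f) (hg : ContDiff ℝ ∞ g) (z : ℂ) :
    pdx (fun z => f z * g z) z = pdx f z * g z + f z * pdx g z := by
  unfold pdx
  rw [fderiv_fun_mul (smooth_diff hf z) (smooth_diff hg z)]
  simp [mul_comm, add_comm]

lemma pdy_mul {A : Type*} [NormedCommRing A] [NormedAlgebra ℝ A] {f g : ℂ → A}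
    (hf : ContDiff ℝ ∞ f) (hg : ContDiff ℝ ∞ g) (z : ℂ) :
    pdy (fun z => f z * g z) z = pdy f z * g z + f z * pdy g z := by
  unfold pdy
  rw [fderiv_fun_mul (smooth_diff hf z) (smooth_diff hg z)]
  simp [mul_comm, add_comm]

lemma pdx_trans (f : ℂ → F) (w z : ℂ) : pdx (fun z => f (z - w)) z = pdx f (z - w) := by
  unfold pdx; rw [fderiv_comp_sub]

lemma pdy_trans (f : ℂ → F) (w z : ℂ) : pdy (fun z => f (z - w)) z = pdy f (z - w) := by
  unfold pdy; rw [fderiv_comp_sub]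

lemma pdx_clm {G : Type*} [NormedAddCommGroup G] [NormedSpace ℝ G] (L : F →L[ℝ] G) {f : ℂ → F}
    (hf : ContDiff ℝ ∞ f) (z : ℂ) : pdx (fun z => L (f z)) z = L (pdx f z) := by
  unfold pdx
  have := (L.hasFDerivAt.comp z (smooth_diff hf z).hasFDerivAt).fderiv
  rw [show (fun z => L (f z)) = L ∘ f from rfl, this]; rfl

lemma pdy_clm {G : Type*} [NormedAddCommGroup G] [NormedSpace ℝ G] (L : F →L[ℝ] G) {f : ℂ → F}
    (hf : ContDiff ℝ ∞ f) (z : ℂ) : pdy (fun z => L (f z)) z = L (pdy f z) := by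
  unfold pdy
  have := (L.hasFDerivAt.comp z (smooth_diff hf z).hasFDerivAt).fderiv
  rw [show (fun z => L (f z)) = L ∘ f from rfl, this]; rfl

lemma integral_fd_zero [CompleteSpace F] {f : ℂ → F} (hf : ContDiff ℝ ∞ f)
    (hc : HasCompactSupport f) (e : ℂ) : ∫ z, fderiv ℝ f z e = 0 := by
  have hfd : Continuous (fun z => fderiv ℝ f z e) :=
    ((hf.fderiv_right (m := ∞) (by simp)).clm_apply contDiff_const).continuous
  have := integral_bilinear_fderiv_right_eq_neg_left_of_integrable (μ := (volume : Measure ℂ))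
    (f := fun _ : ℂ => (1:ℝ)) (g := f) (v := e) (B := ContinuousLinearMap.lsmul ℝ ℝ)
    (by simp) (by simpa using hfd.integrable_of_hasCompactSupport (hc.fderiv_apply ℝ e))
    (by simpa using hf.continuous.integrable_of_hasCompactSupport hc)
    (fun x _ => differentiableAt_const _) (fun x _ => smooth_diff hf x)
  simpa using this

lemma integral_pdx [CompleteSpace F] {f : ℂ → F} (hf : ContDiff ℝ ∞ f)
    (hc : HasCompactSupport f) : ∫ z, pdx f z = 0 := integral_fd_zero hf hc 1

lemma integral_pdy [CompleteSpace F] {f : ℂ → F} (hf : ContDiff ℝ ∞ f)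
    (hc : HasCompactSupport f) : ∫ z, pdy f z = 0 := integral_fd_zero hf hc Complex.I

end pdcalc

/-- divergence theorem -/
lemma div_thm {q X Y : ℂ → ℝ} (hq : ContDiff ℝ ∞ q) (hX : ContDiff ℝ ∞ X) (hY : ContDiff ℝ ∞ Y)
    (hc : HasCompactSupport q) :
    ∫ z, (pdx q z * X z + pdy q z * Y z) = - ∫ z, q z * (pdx X z + pdy Y z) := by
  have h1 := integral_pdx (hq.mul hX) hc.mul_right
  have h2 := integral_pdy (hq.mul hY) hc.mul_right
  have i1 : Integrable (fun z => pdx q z * X z) :=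
    ((pdx_contDiff hq).continuous.mul hX.continuous).integrable_of_hasCompactSupport
      (pdx_supp hc).mul_right
  have i2 : Integrable (fun z => pdy q z * Y z) :=
    ((pdy_contDiff hq).continuous.mul hY.continuous).integrable_of_hasCompactSupport
      (pdy_supp hc).mul_right
  have i3 : Integrable (fun z => q z * pdx X z) :=
    (hq.continuous.mul (pdx_contDiff hX).continuous).integrable_of_hasCompactSupport hc.mul_right
  have i4 : Integrable (fun z => q z * pdy Y z) :=
    (hq.continuous.mul (pdy_contDiff hY).continuous).integrable_of_hasCompactSupport hc.mul_right
  simp_rw [pdx_mul hq hX] at h1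
  simp_rw [pdy_mul hq hY] at h2
  rw [integral_add i1 i3] at h1
  rw [integral_add i2 i4] at h2
  simp_rw [mul_add]
  rw [integral_add i1 i2, integral_add i3 i4]
  linarith

lemma pd_symm {b : ℂ → ℝ} (hb : ContDiff ℝ ∞ b) (z : ℂ) : pdx (pdy b) z = pdy (pdx b) z := by
  have hs : IsSymmSndFDerivAt ℝ b z := hb.contDiffAt.isSymmSndFDerivAt (by
    rw [minSmoothness_of_isRCLikeNormedField]; exact WithTop.coe_le_coe.2 (le_top : (2:ℕ∞) ≤ ⊤))
  have hd : Differentiable ℝ (fderiv ℝ b) :=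
    (hb.fderiv_right (m := ∞) (by simp)).differentiable (by simp)
  unfold pdx pdy
  have e1 : ∀ v u : ℂ, fderiv ℝ (fun z => fderiv ℝ b z v) z u = fderiv ℝ (fderiv ℝ b) z u v := by
    intro v u
    rw [fderiv_clm_apply (hd z) (differentiableAt_const _)]
    simp
  have := hs 1 Complex.I
  change fderiv ℝ (fun z => fderiv ℝ b z Complex.I) z 1 = fderiv ℝ (fun z => fderiv ℝ b z 1) z Complex.I
  rw [e1, e1]; exact this

/-- Squared norm of the gradient. -/
noncomputable def gsq (h : ℂ → ℂ) (z : ℂ) : ℝ := ‖pdx h z‖ ^ 2 + ‖pdy h z‖ ^ 2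

lemma gsq_continuous {h : ℂ → ℂ} (hh : ContDiff ℝ ∞ h) : Continuous (gsq h) :=
  ((pdx_contDiff hh).continuous.norm.pow 2).add ((pdy_contDiff hh).continuous.norm.pow 2)

lemma gsq_nonneg (h : ℂ → ℂ) (z : ℂ) : 0 ≤ gsq h z := by unfold gsq; positivity

lemma gsq_supp {h : ℂ → ℂ} (hc : HasCompactSupport h) : HasCompactSupport (gsq h) := by
  have h1 := (pdx_supp hc).comp_left (g := fun x : ℂ => ‖x‖ ^ 2) (by simp)
  have h2 := (pdy_supp hc).comp_left (g := fun x : ℂ => ‖x‖ ^ 2) (by simp)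
  exact h1.add h2

lemma integral_dbar_sq {h : ℂ → ℂ} (hh : ContDiff ℝ ∞ h) (hc : HasCompactSupport h) :
    ∫ z, gsq h z = ∫ z, ‖dbar h z‖ ^ 2 := by
  set a : ℂ → ℝ := fun z => Complex.reCLM (h z) with ha
  set b : ℂ → ℝ := fun z => Complex.imCLM (h z) with hb
  have sa : ContDiff ℝ ∞ a := Complex.reCLM.contDiff.comp hh
  have sb : ContDiff ℝ ∞ b := Complex.imCLM.contDiff.comp hh
  have ca : HasCompactSupport a := hc.comp_left (g := fun x => Complex.reCLM x) (by simp)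
  have key : ∀ z, gsq h z = ‖dbar h z‖ ^ 2 + 2 * (pdx a z * pdy b z + pdy a z * (- pdx b z)) := by
    intro z
    rw [ha, hb, pdx_clm _ hh, pdy_clm _ hh, pdx_clm _ hh, pdy_clm _ hh]
    unfold gsq dbar
    simp only [← Complex.normSq_eq_norm_sq, Complex.normSq_apply]
    simp
    ring
  have h0 := div_thm sa (pdy_contDiff sb) (pdx_contDiff sb).neg ca
  have hz : ∀ z, pdx (pdy b) z + pdy (fun z => - pdx b z) z = 0 := by
    intro z
    have : pdy (fun z => - pdx b z) z = - pdy (pdx b) z := by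
      unfold pdy; rw [fderiv_fun_neg]; rfl
    rw [this, pd_symm sb]; ring
  simp_rw [hz] at h0
  simp_rw [key]
  have i1 : Integrable (fun z => ‖dbar h z‖ ^ 2) := by
    apply Continuous.integrable_of_hasCompactSupport
    · exact (((pdx_contDiff hh).continuous.add (continuous_const.mul (pdy_contDiff hh).continuous)).norm.pow 2)
    · exact ((pdx_supp hc).add ((pdy_supp hc).mul_left)).comp_left (g := fun x : ℂ => ‖x‖ ^ 2) (by simp)
  have i2 : Integrable (fun z => (pdx a z * pdy b z + pdy a z * (- pdx b z))) := by
    apply Continuous.integrable_of_hasCompactSupport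
    · have := (pdx_contDiff sa).continuous
      have := (pdy_contDiff sa).continuous
      have := (pdx_contDiff sb).continuous
      have := (pdy_contDiff sb).continuous
      fun_prop
    · exact (pdx_supp ca).mul_right.add (pdy_supp ca).mul_right
  rw [integral_add i1 (i2.const_mul 2), integral_const_mul, h0]
  simp

lemma pdx_normSq {k : ℂ → ℂ} (hk : ContDiff ℝ ∞ k) (z : ℂ) :
    pdx (fun z => Complex.normSq (k z)) z = 2 * ((k z).re * (pdx k z).re + (k z).im * (pdx k z).im) := by
  unfold pdx
  have := ((hasFDerivAt_normSq (k z)).comp z (smooth_diff hk z).hasFDerivAt).fderiv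
  rw [show (fun z => Complex.normSq (k z)) = (fun x : ℂ => Complex.normSq x) ∘ k from rfl, this]
  simp; ring

lemma pdy_normSq {k : ℂ → ℂ} (hk : ContDiff ℝ ∞ k) (z : ℂ) :
    pdy (fun z => Complex.normSq (k z)) z = 2 * ((k z).re * (pdy k z).re + (k z).im * (pdy k z).im) := by
  unfold pdy
  have := ((hasFDerivAt_normSq (k z)).comp z (smooth_diff hk z).hasFDerivAt).fderiv
  rw [show (fun z => Complex.normSq (k z)) = (fun x : ℂ => Complex.normSq x) ∘ k from rfl, this]
  simp; ring

lemma dot_sq_le (a b c d : ℝ) : (a * c + b * d) ^ 2 ≤ (a ^ 2 + b ^ 2) * (c ^ 2 + d ^ 2) := by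
  nlinarith [sq_nonneg (a * d - b * c)]

lemma grad_normSq_sq {k : ℂ → ℂ} (hk : ContDiff ℝ ∞ k) (z : ℂ) :
    pdx (fun z => Complex.normSq (k z)) z ^ 2 + pdy (fun z => Complex.normSq (k z)) z ^ 2
      ≤ 4 * ‖k z‖ ^ 2 * gsq k z := by
  rw [pdx_normSq hk, pdy_normSq hk]
  unfold gsq
  simp only [← Complex.normSq_eq_norm_sq, Complex.normSq_apply]
  have h1 := dot_sq_le (k z).re (k z).im (pdx k z).re (pdx k z).im
  have h2 := dot_sq_le (k z).re (k z).im (pdy k z).re (pdy k z).im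
  nlinarith

/-- pairing of the gradient of `|k|^2` with a vector. -/
lemma grad_normSq_dot {k : ℂ → ℂ} (hk : ContDiff ℝ ∞ k) (z : ℂ) (a b : ℝ) :
    |pdx (fun z => Complex.normSq (k z)) z * a + pdy (fun z => Complex.normSq (k z)) z * b|
      ≤ 2 * ‖k z‖ * Real.sqrt (gsq k z) * Real.sqrt (a ^ 2 + b ^ 2) := by
  have h1 := dot_sq_le (pdx (fun z => Complex.normSq (k z)) z) (pdy (fun z => Complex.normSq (k z)) z) a b
  have h2 := grad_normSq_sq hk z
  apply abs_le_of_sq_le_sq _ (by positivity)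
  rw [mul_pow, mul_pow, mul_pow, Real.sq_sqrt (gsq_nonneg _ _), Real.sq_sqrt (by positivity)]
  refine h1.trans ?_
  have := mul_le_mul_of_nonneg_right h2 (show 0 ≤ a ^ 2 + b ^ 2 by positivity)
  linarith

lemma ofReal_contDiff {f : ℂ → ℝ} (hf : ContDiff ℝ ∞ f) : ContDiff ℝ ∞ (fun z => (f z : ℂ)) :=
  Complex.ofRealCLM.contDiff.comp hf

lemma dbar_contDiff {f : ℂ → ℂ} (hf : ContDiff ℝ ∞ f) : ContDiff ℝ ∞ (dbar f) :=
  (pdx_contDiff hf).add (contDiff_const.mul (pdy_contDiff hf))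

lemma dbar_supp {f : ℂ → ℂ} (hf : HasCompactSupport f) : HasCompactSupport (dbar f) :=
  (pdx_supp hf).add ((pdy_supp hf).mul_left)

lemma dbar_add {f g : ℂ → ℂ} (hf : ContDiff ℝ ∞ f) (hg : ContDiff ℝ ∞ g) (z : ℂ) :
    dbar (fun z => f z + g z) z = dbar f z + dbar g z := by
  unfold dbar; rw [pdx_add hf hg, pdy_add hf hg]; ring

lemma dbar_sub {f g : ℂ → ℂ} (hf : ContDiff ℝ ∞ f) (hg : ContDiff ℝ ∞ g) (z : ℂ) :
    dbar (fun z => f z - g z) z = dbar f z - dbar g z := by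
  unfold dbar; rw [pdx_sub hf hg, pdy_sub hf hg]; ring

lemma dbar_mul {f g : ℂ → ℂ} (hf : ContDiff ℝ ∞ f) (hg : ContDiff ℝ ∞ g) (z : ℂ) :
    dbar (fun z => f z * g z) z = dbar f z * g z + f z * dbar g z := by
  unfold dbar; rw [pdx_mul hf hg, pdy_mul hf hg]; ring

lemma dbar_trans (f : ℂ → ℂ) (w z : ℂ) : dbar (fun z => f (z - w)) z = dbar f (z - w) := by
  unfold dbar; rw [pdx_trans, pdy_trans]

lemma sub_contDiff (w : ℂ) : ContDiff ℝ ∞ (fun z : ℂ => z - w) := contDiff_id.sub contDiff_const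

lemma pdx_idsub (w z : ℂ) : pdx (fun z : ℂ => z - w) z = 1 := by
  unfold pdx; rw [fderiv_sub_const]; simp

lemma pdy_idsub (w z : ℂ) : pdy (fun z : ℂ => z - w) z = Complex.I := by
  unfold pdy; rw [fderiv_sub_const]; simp

lemma dbar_idsub (w z : ℂ) : dbar (fun z : ℂ => z - w) z = 0 := by
  unfold dbar; rw [pdx_idsub, pdy_idsub]; simp

lemma quot_contDiff {g : ℂ → ℂ} (hg : ContDiff ℝ ∞ g) {z : ℂ} {δ : ℝ} (hδ : 0 < δ)
    (h0 : ∀ t, ‖t - z‖ < δ → g t = 0) : ContDiff ℝ ∞ (fun t => g t / (t - z)) := by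
  rw [contDiff_iff_contDiffAt]
  intro t
  by_cases ht : t = z
  · subst ht
    have : (fun s => g s / (s - t)) =ᶠ[𝓝 t] fun _ => 0 := by
      filter_upwards [ball_mem_nhds t hδ] with s hs
      rw [h0 s (by simpa [dist_eq_norm] using hs)]; simp
    exact contDiffAt_const.congr_of_eventuallyEq this
  · simp_rw [div_eq_mul_inv]
    exact hg.contDiffAt.mul ((sub_contDiff z).contDiffAt.inv (sub_ne_zero.2 ht))

lemma quot_dbar {g : ℂ → ℂ} (hg : ContDiff ℝ ∞ g) {z : ℂ} {δ : ℝ} (hδ : 0 < δ)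
    (h0 : ∀ t, ‖t - z‖ < δ → g t = 0) (t : ℂ) (ht : t ≠ z) :
    dbar (fun t => g t / (t - z)) t = dbar g t / (t - z) := by
  have e : g = fun t => (t - z) * (g t / (t - z)) := by
    ext s
    by_cases hs : s = z
    · subst hs; simp [h0 s (by simpa using hδ)]
    · field_simp [sub_ne_zero.2 hs]
  have := dbar_mul (sub_contDiff z) (quot_contDiff hg hδ h0) t
  rw [← e, dbar_idsub] at this
  rw [this, zero_mul, zero_add]
  field_simp [sub_ne_zero.2 ht]

lemma dbar_kap (δ : ℝ) (x : ℂ) : dbar (fun x => (kap δ x : ℂ)) x = - chi δ x * x := by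
  unfold dbar
  have h1 := pdx_clm Complex.ofRealCLM (kap_contDiff δ) x
  have h2 := pdy_clm Complex.ofRealCLM (kap_contDiff δ) x
  simp only [Complex.ofRealCLM_apply] at h1 h2
  rw [h1, h2, pdx_kap, pdy_kap]
  apply Complex.ext <;> simp

lemma dbar_eq_zero_of_eventually {f : ℂ → ℂ} {z : ℂ} (h : f =ᶠ[𝓝 z] fun _ => 0) : dbar f z = 0 := by
  unfold dbar pdx pdy
  rw [h.fderiv_eq]; simp

/-- The basic kernel-quotient: `(g - kap)/(t-z)` where `g = 1` near `z`. -/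
lemma dbar_quot_kap {g : ℂ → ℂ} (hg : ContDiff ℝ ∞ g) {z : ℂ} {δ δ' : ℝ} (hδ : 0 < δ) (hδ' : 0 < δ')
    (h1 : ∀ t, ‖t - z‖ < δ' → g t = 1) :
    ContDiff ℝ ∞ (fun t => (g t - kap δ (t - z)) / (t - z)) ∧
    ∀ t, dbar (fun t => (g t - kap δ (t - z)) / (t - z)) t = dbar g t / (t - z) + chi δ (t - z) := by
  have hk : ContDiff ℝ ∞ (fun t : ℂ => ((kap δ (t - z) : ℝ) : ℂ)) :=
    ofReal_contDiff ((kap_contDiff δ).comp (sub_contDiff z))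
  have hs : ContDiff ℝ ∞ (fun t => g t - ((kap δ (t - z) : ℝ) : ℂ)) := hg.sub hk
  have hm : 0 < min δ δ' := lt_min hδ hδ'
  have h0 : ∀ t, ‖t - z‖ < min δ δ' → g t - ((kap δ (t - z) : ℝ) : ℂ) = 0 := by
    intro t ht
    rw [h1 t (ht.trans_le (min_le_right _ _)), kap_eq_one hδ (ht.trans_le (min_le_left _ _)).le]
    simp
  refine ⟨quot_contDiff hs hm h0, fun t => ?_⟩
  by_cases ht : t = z
  · subst ht
    rw [dbar_eq_zero_of_eventually]
    · simp [chi_eq_zero_in hδ (x := 0) (by simpa using hδ)]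
    · filter_upwards [ball_mem_nhds t hm] with s hs
      rw [h0 s (by simpa [dist_eq_norm] using hs)]; simp
  · rw [quot_dbar hs hm h0 t ht, dbar_sub hg hk, dbar_trans (fun x => ((kap δ x : ℝ) : ℂ)), dbar_kap]
    have := sub_ne_zero.2 ht
    field_simp
    ring

lemma tsupport_kap_sub {δ : ℝ} (hδ : 0 < δ) (z : ℂ) :
    tsupport (fun t : ℂ => ((kap δ (t - z) : ℝ) : ℂ)) ⊆ closedBall z (2 * δ) := by
  apply closure_minimal _ isClosed_closedBall
  intro t ht
  by_contra h
  apply ht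
  simp only
  rw [kap_eq_zero hδ]; · simp
  rw [mem_closedBall, dist_eq_norm] at h; exact (not_le.1 h).le

lemma tsupport_chi_sub {δ : ℝ} (hδ : 0 < δ) (z : ℂ) :
    tsupport (fun t : ℂ => ((chi δ (t - z) : ℝ) : ℂ)) ⊆ closedBall z (2 * δ) := by
  apply closure_minimal _ isClosed_closedBall
  intro t ht
  by_contra h
  apply ht
  simp only
  rw [chi_eq_zero_out hδ]; · simp
  rw [mem_closedBall, dist_eq_norm] at h; exact (not_le.1 h).le

/-- Weak holomorphy -/
def WeakHol (f : ℂ → ℂ) (D : Set ℂ) : Prop :=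
  ∀ φ : ℂ → ℂ, ContDiff ℝ ∞ φ → HasCompactSupport φ → tsupport φ ⊆ D → ∫ t, f t * dbar φ t = 0

noncomputable def Phi (f : ℂ → ℂ) (δ : ℝ) (z : ℂ) : ℂ := ∫ t, f t * (chi δ (t - z) : ℂ)

lemma integrable_mul_smooth {f g : ℂ → ℂ} (hf : LocallyIntegrable f) (hg : Continuous g)
    (hc : HasCompactSupport g) : Integrable (fun t => f t * g t) := by
  have := hf.integrable_smul_right_of_hasCompactSupport hg hc
  simpa using this

lemma Phi_indep {f : ℂ → ℂ} {D : Set ℂ} (hf : LocallyIntegrable f) (hw : WeakHol f D) {z : ℂ} {δ δ' : ℝ}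
    (hδ : 0 < δ) (hδ' : 0 < δ') (h : closedBall z (2 * δ) ⊆ D) (h' : closedBall z (2 * δ') ⊆ D) :
    Phi f δ z = Phi f δ' z := by
  have hk : ContDiff ℝ ∞ (fun t : ℂ => ((kap δ' (t - z) : ℝ) : ℂ)) :=
    ofReal_contDiff ((kap_contDiff δ').comp (sub_contDiff z))
  obtain ⟨s1, s2⟩ := dbar_quot_kap hk hδ hδ' (z := z) (fun t ht => by rw [kap_eq_one hδ' ht.le]; simp)
  have hts : tsupport (fun t => (((kap δ' (t - z) : ℝ) : ℂ) - kap δ (t - z)) / (t - z)) ⊆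
      closedBall z (2 * δ) ∪ closedBall z (2 * δ') := by
    apply closure_minimal _ (isClosed_closedBall.union isClosed_closedBall)
    intro t ht
    by_contra hn
    simp only [mem_union, not_or, mem_closedBall, dist_eq_norm, not_le] at hn
    apply ht
    simp only
    rw [kap_eq_zero hδ hn.1.le, kap_eq_zero hδ' hn.2.le]; simp
  have hcs : HasCompactSupport (fun t => (((kap δ' (t - z) : ℝ) : ℂ) - kap δ (t - z)) / (t - z)) :=
    ((isCompact_closedBall z (2*δ)).union (isCompact_closedBall z (2*δ'))).of_isClosed_subset
      (isClosed_tsupport _) hts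
  have := hw _ s1 hcs (hts.trans (union_subset h h'))
  have e : ∀ t, dbar (fun t => (((kap δ' (t - z) : ℝ) : ℂ) - kap δ (t - z)) / (t - z)) t =
      chi δ (t - z) - chi δ' (t - z) := by
    intro t
    rw [s2, dbar_trans (fun x => ((kap δ' x : ℝ) : ℂ)), dbar_kap]
    by_cases ht : t = z
    · subst ht
      simp [chi_eq_zero_in hδ' (x := 0) (by simpa using hδ')]
    · have := sub_ne_zero.2 ht
      field_simp
      ring
  simp_rw [e, mul_sub] at this
  have I : ∀ {d : ℝ}, 0 < d → Integrable (fun t => f t * ((chi d (t - z) : ℝ) : ℂ)) := fun {d} hd =>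
    integrable_mul_smooth hf (ofReal_contDiff ((chi_contDiff d).comp (sub_contDiff z))).continuous
      ((isCompact_closedBall z (2*d)).of_isClosed_subset (isClosed_tsupport _) (tsupport_chi_sub hd z))
  rw [integral_sub (I hδ) (I hδ')] at this
  exact sub_eq_zero.1 this

open scoped Convolution in
lemma Phi_conv (f : ℂ → ℂ) (δ : ℝ) :
    Phi f δ = (f ⋆[ContinuousLinearMap.mul ℝ ℂ, volume] (fun x : ℂ => ((chi δ x : ℝ) : ℂ))) := by
  ext z
  rw [convolution_def]
  unfold Phi
  congr 1; ext t
  rw [← neg_sub, chi_even]; simp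

lemma Phi_diff {f : ℂ → ℂ} {D : Set ℂ} (hf : LocallyIntegrable f) (hw : WeakHol f D) {z : ℂ} {δ : ℝ}
    (hδ : 0 < δ) (h : closedBall z (2 * δ) ⊆ D) : DifferentiableAt ℂ (Phi f δ) z := by
  have hg : ContDiff ℝ ∞ (fun x : ℂ => ((chi δ x : ℝ) : ℂ)) := ofReal_contDiff (chi_contDiff δ)
  have hc : HasCompactSupport (fun x : ℂ => ((chi δ x : ℝ) : ℂ)) :=
    (chi_hasCompactSupport hδ).comp_left (g := fun x : ℝ => (x : ℂ)) (by simp)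
  have hd := hc.hasFDerivAt_convolution_right (ContinuousLinearMap.mul ℝ ℂ) hf (hg.of_le (by simp)) z
  rw [← Phi_conv] at hd
  rw [differentiableAt_complex_iff_differentiableAt_real]
  refine ⟨hd.differentiableAt, ?_⟩
  rw [hd.fderiv]
  have hcf := hc.fderiv ℝ
  have hcc : Continuous (fderiv ℝ (fun x : ℂ => ((chi δ x : ℝ) : ℂ))) :=
    (hg.fderiv_right (m := ∞) (by simp)).continuous
  rw [convolution_precompR_apply _ hf hcf hcc, convolution_precompR_apply _ hf hcf hcc]
  rw [convolution_def, convolution_def]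
  simp only [ContinuousLinearMap.mul_apply', smul_eq_mul]
  have hgz : ContDiff ℝ ∞ (fun t : ℂ => ((chi δ (t - z) : ℝ) : ℂ)) :=
    ofReal_contDiff ((chi_contDiff δ).comp (sub_contDiff z))
  have hcz := ((isCompact_closedBall z (2*δ)).of_isClosed_subset (isClosed_tsupport _) (tsupport_chi_sub hδ z))
  have h0 := hw _ hgz hcz ((tsupport_chi_sub hδ z).trans h)
  have e : ∀ t v, fderiv ℝ (fun x : ℂ => ((chi δ x : ℝ) : ℂ)) (z - t) v =
      - fderiv ℝ (fun t : ℂ => ((chi δ (t - z) : ℝ) : ℂ)) t v := by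
    intro t v
    have e1 : (fun t : ℂ => ((chi δ (t - z) : ℝ) : ℂ)) = fun t => (fun x : ℂ => ((chi δ x : ℝ) : ℂ)) (z - t) := by
      ext t; simp only; rw [← neg_sub, chi_even]
    have e2 := ((smooth_diff hg (z - t)).hasFDerivAt.comp t ((hasFDerivAt_id t).const_sub z)).fderiv
    rw [e1, show (fun t => (fun x : ℂ => ((chi δ x : ℝ) : ℂ)) (z - t)) =
      (fun x : ℂ => ((chi δ x : ℝ) : ℂ)) ∘ (HSub.hSub z) from rfl, e2]
    simp
  simp_rw [e]
  unfold dbar at h0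
  have J1 : Integrable (fun t => f t * pdx (fun t : ℂ => ((chi δ (t - z) : ℝ) : ℂ)) t) :=
    integrable_mul_smooth hf (pdx_contDiff hgz).continuous (pdx_supp hcz)
  have J2 : Integrable (fun t => f t * pdy (fun t : ℂ => ((chi δ (t - z) : ℝ) : ℂ)) t) :=
    integrable_mul_smooth hf (pdy_contDiff hgz).continuous (pdy_supp hcz)
  simp_rw [mul_add, mul_left_comm _ Complex.I] at h0
  rw [integral_add J1 (J2.const_mul _), integral_const_mul] at h0
  simp_rw [mul_neg]
  rw [integral_neg, integral_neg]
  change - (∫ t, f t * pdy (fun t : ℂ => ((chi δ (t - z) : ℝ) : ℂ)) t) =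
    Complex.I * - (∫ t, f t * pdx (fun t : ℂ => ((chi δ (t - z) : ℝ) : ℂ)) t)
  rw [eq_neg_of_add_eq_zero_left h0]
  linear_combination (-∫ t, f t * pdy (fun t : ℂ => ((chi δ (t - z) : ℝ) : ℂ)) t) * (Complex.I_mul_I)

lemma Phi_ae_tendsto {f : ℂ → ℂ} (hf : LocallyIntegrable f) :
    ∀ᵐ x, Tendsto (fun δ : ℝ => Phi f δ x) (𝓝[>] 0) (𝓝 (mZ * f x)) := by
  obtain ⟨C, hC, hb⟩ := chi_bound
  filter_upwards [(Besicovitch.vitaliFamily volume).ae_tendsto_average_norm_sub hf] with x h₀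
  have hφ' : Tendsto (fun δ : ℝ ↦ 2 * δ) (𝓝[>] 0) (𝓝[>] 0) := by
    refine tendsto_nhdsWithin_iff.2 ⟨?_, ?_⟩
    · have : Tendsto (fun δ : ℝ ↦ 2 * δ) (𝓝 0) (𝓝 (2 * 0)) := (continuous_const.mul continuous_id).tendsto 0
      rw [mul_zero] at this
      exact this.mono_left nhdsWithin_le_nhds
    · filter_upwards [self_mem_nhdsWithin] with δ hδ
      have : (0:ℝ) < δ := hδ
      simpa using this
  have h1 := (h₀.comp (Besicovitch.tendsto_filterAt volume x)).comp hφ'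
  have h2 := tendsto_integral_smul_of_tendsto_average_norm_sub (μ := volume) (f := f) (c := f x)
    (a := fun δ : ℝ => closedBall x (2 * δ)) (l := 𝓝[>] 0) (g := fun δ t => mZ⁻¹ * chi δ (t - x))
    (mZ⁻¹ * C * 4 * Real.pi) h1 ?_ ?_ ?_ ?_
  · have h3 := h2.const_mul (mZ : ℂ)
    refine h3.congr fun δ => ?_
    unfold Phi
    rw [← integral_const_mul]
    congr 1; ext t
    have := mZ_pos.ne'
    simp only [Complex.real_smul]
    push_cast
    have h' : (mZ : ℂ) ≠ 0 := by exact_mod_cast this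
    field_simp
  · filter_upwards with δ using hf.integrableOn_isCompact (isCompact_closedBall _ _)
  · apply tendsto_const_nhds.congr'
    filter_upwards [self_mem_nhdsWithin] with δ hδ
    rw [integral_const_mul, integral_sub_right_eq_self (fun t => chi δ t), integral_chi hδ,
      inv_mul_cancel₀ mZ_pos.ne']
  · filter_upwards [self_mem_nhdsWithin] with δ hδ
    intro t ht
    by_contra hn
    apply ht
    simp only
    rw [chi_eq_zero_out hδ, mul_zero]
    rw [mem_closedBall, dist_eq_norm] at hn; exact (not_le.1 hn).le
  · filter_upwards [self_mem_nhdsWithin] with δ hδ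
    intro t
    have hδ : (0:ℝ) < δ := hδ
    have hm := mZ_pos
    rw [abs_of_nonneg (mul_nonneg (inv_nonneg.2 hm.le) (chi_nonneg _ _))]
    have : volume.real (closedBall x (2 * δ)) = 4 * δ ^ 2 * Real.pi := by
      rw [Measure.real, Complex.volume_closedBall]
      simp [ENNReal.toReal_ofReal hδ.le]; ring
    rw [this]
    have hp := Real.pi_pos
    have : mZ⁻¹ * C * 4 * Real.pi / (4 * δ ^ 2 * Real.pi) = mZ⁻¹ * (C / δ ^ 2) := by field_simp
    rw [this]
    gcongr
    exact hb δ _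

/-- Weyl's lemma. -/
lemma weyl {f : ℂ → ℂ} {D : Set ℂ} (hD : IsOpen D) (hf : LocallyIntegrable f) (hw : WeakHol f D) :
    ∃ F : ℂ → ℂ, DifferentiableOn ℂ F D ∧ (∀ᵐ x, x ∈ D → F x = f x) ∧
      ∀ z δ, 0 < δ → closedBall z (2 * δ) ⊆ D → mZ * F z = ∫ t, f t * (chi δ (t - z) : ℂ) := by
  have hex : ∀ z ∈ D, ∃ δ : ℝ, 0 < δ ∧ closedBall z (2 * δ) ⊆ D := by
    intro z hz
    obtain ⟨ε, hε, h⟩ := Metric.isOpen_iff.1 hD z hz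
    exact ⟨ε / 4, by positivity, (closedBall_subset_ball (by linarith)).trans h⟩
  choose! d hd0 hd using hex
  have hmZ : (mZ : ℂ) ≠ 0 := by exact_mod_cast mZ_pos.ne'
  have key : ∀ z δ, 0 < δ → closedBall z (2 * δ) ⊆ D → (mZ : ℂ)⁻¹ * Phi f (d z) z = (mZ : ℂ)⁻¹ * Phi f δ z := by
    intro z δ hδ h
    have hz : z ∈ D := h (mem_closedBall_self (by positivity))
    rw [Phi_indep hf hw (hd0 z hz) hδ (hd z hz) h]
  refine ⟨fun z => (mZ : ℂ)⁻¹ * Phi f (d z) z, ?_, ?_, ?_⟩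
  · intro z hz
    apply DifferentiableAt.differentiableWithinAt
    obtain ⟨ε, hε, h⟩ := Metric.isOpen_iff.1 hD z hz
    have h2 : ∀ y ∈ ball z (ε / 4), closedBall y (2 * (ε / 4)) ⊆ D := by
      intro y hy
      refine Subset.trans ?_ h
      apply closedBall_subset_ball'
      have := mem_ball.1 hy
      linarith
    have hp : 0 < ε / 4 := by positivity
    refine ((Phi_diff hf hw hp (h2 z (mem_ball_self hp))).const_mul (mZ : ℂ)⁻¹).congr_of_eventuallyEq ?_
    filter_upwards [ball_mem_nhds z hp] with y hy
    exact key y _ hp (h2 y hy)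
  · filter_upwards [Phi_ae_tendsto hf] with x hx hxD
    have h1 : Tendsto (fun δ : ℝ => Phi f δ x) (𝓝[>] 0) (𝓝 (Phi f (d x) x)) := by
      apply tendsto_const_nhds.congr'
      filter_upwards [Ioc_mem_nhdsGT (hd0 x hxD)] with δ hδ
      exact Phi_indep hf hw (hd0 x hxD) hδ.1 (hd x hxD)
        ((closedBall_subset_closedBall (by linarith [hδ.2])).trans (hd x hxD))
    have := tendsto_nhds_unique h1 hx
    rw [this]; field_simp
  · intro z δ hδ h
    simp only
    rw [key z δ hδ h]
    unfold Phi
    field_simp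

def IsTest (D : Set ℂ) (φ : ℂ → ℂ) : Prop :=
  ContDiff ℝ ∞ φ ∧ HasCompactSupport φ ∧ tsupport φ ⊆ D

lemma memLp_of_cs {g : ℂ → ℂ} (hg : Continuous g) (hc : HasCompactSupport g) :
    MemLp g 2 (volume : Measure ℂ) := hg.memLp_of_hasCompactSupport hc

lemma Lp_norm_sq (x : Lp ℂ 2 (volume : Measure ℂ)) : ‖x‖ ^ 2 = ∫ t, ‖x t‖ ^ 2 := by
  have h := inner_self_eq_norm_sq_to_K (𝕜 := ℂ) x
  rw [L2.inner_def] at h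
  have : ∀ t, inner ℂ (x t) (x t) = ((‖x t‖ ^ 2 : ℝ) : ℂ) := by
    intro t; rw [inner_self_eq_norm_sq_to_K]; simp
  simp_rw [this] at h
  rw [integral_complex_ofReal] at h
  have h' := congrArg Complex.re h
  simp only [Complex.ofReal_re] at h'
  rw [h']; norm_cast

lemma Lp_lint (x : Lp ℂ 2 (volume : Measure ℂ)) :
    ∫⁻ t, (‖x t‖₊ : ℝ≥0∞) ^ 2 = ENNReal.ofReal (‖x‖ ^ 2) := by
  rw [Lp_norm_sq, ofReal_integral_eq_lintegral_ofReal]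
  · congr 1; ext t
    rw [ENNReal.ofReal_pow (norm_nonneg _), ofReal_norm]; rfl
  · exact (Lp.memLp x).integrable_norm_pow (by norm_num)
  · exact ae_of_all _ fun t => by positivity

def testSub (D : Set ℂ) : Submodule ℂ (Lp ℂ 2 (volume : Measure ℂ)) where
  carrier := {g | ∃ φ, IsTest D φ ∧ g =ᵐ[volume] dbar φ}
  add_mem' := by
    rintro a b ⟨φ, hφ, ha⟩ ⟨ψ, hψ, hb⟩
    refine ⟨fun z => φ z + ψ z, ⟨hφ.1.add hψ.1, hφ.2.1.add hψ.2.1,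
      (tsupport_add _ _).trans (union_subset hφ.2.2 hψ.2.2)⟩, ?_⟩
    filter_upwards [Lp.coeFn_add a b, ha, hb] with t h1 h2 h3
    rw [h1, Pi.add_apply, h2, h3, dbar_add hφ.1 hψ.1]
  zero_mem' := by
    refine ⟨fun _ => 0, ⟨contDiff_const, HasCompactSupport.zero, by simp⟩, ?_⟩
    filter_upwards [Lp.coeFn_zero ℂ 2 (volume : Measure ℂ)] with t h1
    rw [h1, dbar_eq_zero_of_eventually (Eventually.of_forall fun _ => rfl)]; rfl
  smul_mem' := by
    rintro c a ⟨φ, hφ, ha⟩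
    refine ⟨fun z => c * φ z, ⟨contDiff_const.mul hφ.1, hφ.2.1.mul_left, ?_⟩, ?_⟩
    · exact (tsupport_mul_subset_right (f := fun _ => c)).trans hφ.2.2
    filter_upwards [Lp.coeFn_smul c a, ha] with t h1 h2
    rw [h1, Pi.smul_apply, h2, dbar_mul contDiff_const hφ.1]
    have : dbar (fun _ => c) t = 0 := by unfold dbar pdx pdy; simp
    rw [this]; simp

lemma duality {D : Set ℂ} (hD : IsOpen D) {z : ℂ} {M : ℝ≥0} (hK : bergmanKernel D z ≤ M) {δ : ℝ}
    (hδ : 0 < δ) (hb : closedBall z (2 * δ) ⊆ D) :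
    ∃ φ, IsTest D φ ∧ ∫ t, ‖(chi δ (t - z) : ℂ) - dbar φ t‖ ^ 2 ≤ mZ ^ 2 * M + 1 := by
  have hgz : ContDiff ℝ ∞ (fun t : ℂ => ((chi δ (t - z) : ℝ) : ℂ)) :=
    ofReal_contDiff ((chi_contDiff δ).comp (sub_contDiff z))
  have hcz := ((isCompact_closedBall z (2*δ)).of_isClosed_subset (isClosed_tsupport _) (tsupport_chi_sub hδ z))
  have hmem := memLp_of_cs hgz.continuous hcz
  set χ : Lp ℂ 2 (volume : Measure ℂ) := hmem.toLp with hχ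
  have hχe : χ =ᵐ[volume] (fun t : ℂ => ((chi δ (t - z) : ℝ) : ℂ)) := hmem.coeFn_toLp
  set V := testSub D with hV
  set K := V.topologicalClosure with hKdef
  have : CompleteSpace K := V.isClosed_topologicalClosure.completeSpace_coe
  set P : Lp ℂ 2 (volume : Measure ℂ) := K.starProjection χ with hP
  have hPK : P ∈ K := K.starProjection_apply_mem χ
  set f := χ - P with hf
  have hort : ∀ g ∈ K, inner ℂ f g = 0 := fun g hg =>
    K.starProjection_inner_eq_zero χ g hg
  have hfl : LocallyIntegrable (fun t => (starRingEnd ℂ) (f t)) := by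
    have := (Lp.memLp f).star
    exact this.locallyIntegrable (by norm_num)
  have hin : ∀ (g : Lp ℂ 2 (volume : Measure ℂ)) (g' : ℂ → ℂ), g =ᵐ[volume] g' →
      inner ℂ f g = ∫ t, (starRingEnd ℂ) (f t) * g' t := by
    intro g g' hgg
    rw [L2.inner_def]
    apply integral_congr_ae
    filter_upwards [hgg] with t ht
    rw [ht]; simp [mul_comm]
  have hw : WeakHol (fun t => (starRingEnd ℂ) (f t)) D := by
    intro φ h1 h2 h3
    have hm := memLp_of_cs (dbar_contDiff h1).continuous (dbar_supp h2)
    rw [← hin hm.toLp _ hm.coeFn_toLp]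
    exact hort _ (V.le_topologicalClosure ⟨φ, ⟨h1, h2, h3⟩, hm.coeFn_toLp⟩)
  obtain ⟨F, hF1, hF2, hF3⟩ := weyl hD hfl hw
  have hz : z ∈ D := hb (mem_closedBall_self (by positivity))
  have hFz := hF3 z δ hδ hb
  rw [← hin χ _ hχe] at hFz
  have hff : inner ℂ f χ = ((‖f‖ ^ 2 : ℝ) : ℂ) := by
    have : χ = f + P := by rw [hf]; abel
    rw [this, inner_add_right, hort P hPK, add_zero, inner_self_eq_norm_sq_to_K]; norm_cast
  rw [hff] at hFz
  have hint : ∫⁻ t in D, (‖F t‖₊ : ℝ≥0∞) ^ 2 ≤ ENNReal.ofReal (‖f‖ ^ 2) := by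
    rw [← Lp_lint]
    refine le_trans (le_of_eq ?_) (setLIntegral_le_lintegral D _)
    apply setLIntegral_congr_fun_ae hD.measurableSet
    filter_upwards [hF2] with t ht htD
    rw [ht htD]; simp
  have hmain : ‖f‖ ^ 2 ≤ mZ ^ 2 * M := by
    by_cases h0 : ‖f‖ = 0
    · rw [h0, zero_pow two_ne_zero]; positivity
    have hpos : 0 < ‖f‖ ^ 2 := by positivity
    have hnF : mZ * ‖F z‖ = ‖f‖ ^ 2 := by
      have := congrArg norm hFz
      rw [norm_mul, Complex.norm_real, Complex.norm_real] at this
      simpa [abs_of_pos mZ_pos] using this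
    have hF0 : F z ≠ 0 := by
      intro h; rw [h] at hnF; simp at hnF; exact hpos.ne hnF
    have hmemF : F ∈ L2h D := ⟨hF1, hint.trans_lt ENNReal.ofReal_lt_top⟩
    have hle : (‖F z‖₊ : ℝ≥0∞) ^ 2 / (∫⁻ w in D, (‖F w‖₊ : ℝ≥0∞) ^ 2) ≤ M := by
      refine le_trans ?_ hK
      unfold bergmanKernel
      exact le_iSup₂_of_le F hmemF (le_iSup_of_le ⟨z, hz, hF0⟩ le_rfl)
    have h2 : (‖F z‖₊ : ℝ≥0∞) ^ 2 / ENNReal.ofReal (‖f‖ ^ 2) ≤ M :=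
      (ENNReal.div_le_div_left hint _).trans hle
    rw [ENNReal.div_le_iff (by simpa using h0) (by simp)] at h2
    have h3 : ‖F z‖ ^ 2 ≤ M * ‖f‖ ^ 2 := by
      have := ENNReal.toReal_mono (by finiteness) h2
      simpa using this
    have h4 : ‖f‖ ^ 2 * ‖f‖ ^ 2 ≤ (mZ ^ 2 * M) * ‖f‖ ^ 2 := by
      have hh : ‖f‖ ^ 2 * ‖f‖ ^ 2 = mZ ^ 2 * ‖F z‖ ^ 2 := by rw [← hnF]; ring
      rw [hh, mul_assoc]
      exact mul_le_mul_of_nonneg_left h3 (by positivity)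
    exact le_of_mul_le_mul_right h4 hpos
  have hop : IsOpen {x : Lp ℂ 2 (volume : Measure ℂ) | ‖χ - x‖ ^ 2 < ‖f‖ ^ 2 + 1} :=
    isOpen_lt (by fun_prop) continuous_const
  have hPc : P ∈ closure (V : Set (Lp ℂ 2 (volume : Measure ℂ))) := by
    have := hPK; rw [hKdef, ← SetLike.mem_coe, Submodule.topologicalClosure_coe] at this; exact this
  obtain ⟨g, hg1, φ, hφ, hg2⟩ := mem_closure_iff.1 hPc _ hop (by simp [hf])
  refine ⟨φ, hφ, ?_⟩
  have : ∫ t, ‖(chi δ (t - z) : ℂ) - dbar φ t‖ ^ 2 = ‖χ - g‖ ^ 2 := by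
    rw [Lp_norm_sq]
    apply integral_congr_ae
    filter_upwards [Lp.coeFn_sub χ g, hχe, hg2] with t h1 h2 h3
    rw [h1, Pi.sub_apply, h2, h3]
  rw [this]
  have := hg1
  simp only [mem_ofPred_eq] at this
  linarith

lemma pdx_comp {g : ℂ → ℝ} (hg : ContDiff ℝ ∞ g) {q : ℝ → ℝ} {q' : ℝ} {z : ℂ} (hq : HasDerivAt q q' (g z)) :
    pdx (fun z => q (g z)) z = q' * pdx g z := by
  have := (hq.comp_hasFDerivAt z (smooth_diff hg z).hasFDerivAt).fderiv
  unfold pdx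
  rw [show (fun z => q (g z)) = q ∘ g from rfl, this]; simp

lemma pdy_comp {g : ℂ → ℝ} (hg : ContDiff ℝ ∞ g) {q : ℝ → ℝ} {q' : ℝ} {z : ℂ} (hq : HasDerivAt q q' (g z)) :
    pdy (fun z => q (g z)) z = q' * pdy g z := by
  have := (hq.comp_hasFDerivAt z (smooth_diff hg z).hasFDerivAt).fderiv
  unfold pdy
  rw [show (fun z => q (g z)) = q ∘ g from rfl, this]; simp

/-- `|z-w|^2 + ρ^2` -/
noncomputable def nn (w : ℂ) (ρ : ℝ) (z : ℂ) : ℝ := Complex.normSq (z - w) + ρ ^ 2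

lemma nn_contDiff (w : ℂ) (ρ : ℝ) : ContDiff ℝ ∞ (nn w ρ) :=
  (normSq_contDiff.comp (sub_contDiff w)).add contDiff_const

lemma nn_pos (w : ℂ) {ρ : ℝ} (hρ : 0 < ρ) (z : ℂ) : 0 < nn w ρ z := by
  unfold nn; have := Complex.normSq_nonneg (z - w); positivity

lemma nn_eq (w : ℂ) (ρ : ℝ) (z : ℂ) : nn w ρ z = (z - w).re ^ 2 + (z - w).im ^ 2 + ρ ^ 2 := by
  unfold nn; rw [Complex.normSq_apply]; ring

lemma nn_eq' (w : ℂ) (ρ : ℝ) (z : ℂ) : nn w ρ z = ‖z - w‖ ^ 2 + ρ ^ 2 := by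
  unfold nn; rw [Complex.normSq_eq_norm_sq]

lemma pdx_nn (w : ℂ) (ρ : ℝ) (z : ℂ) : pdx (nn w ρ) z = 2 * (z - w).re := by
  have h1 : pdx (nn w ρ) z = pdx (fun z => Complex.normSq (z - w)) z := by
    unfold pdx nn; rw [fderiv_add_const]
  rw [h1, pdx_normSq (sub_contDiff w), pdx_idsub]; simp

lemma pdy_nn (w : ℂ) (ρ : ℝ) (z : ℂ) : pdy (nn w ρ) z = 2 * (z - w).im := by
  have h1 : pdy (nn w ρ) z = pdy (fun z => Complex.normSq (z - w)) z := by
    unfold pdy nn; rw [fderiv_add_const]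
  rw [h1, pdy_normSq (sub_contDiff w), pdy_idsub]; simp

noncomputable def WW (w : ℂ) (ρ : ℝ) (z : ℂ) : ℝ := (Real.sqrt (nn w ρ z))⁻¹

lemma WW_pos (w : ℂ) {ρ : ℝ} (hρ : 0 < ρ) (z : ℂ) : 0 < WW w ρ z :=
  inv_pos.2 (Real.sqrt_pos.2 (nn_pos w hρ z))

lemma WW_sq (w : ℂ) {ρ : ℝ} (hρ : 0 < ρ) (z : ℂ) : WW w ρ z ^ 2 * nn w ρ z = 1 := by
  unfold WW; rw [inv_pow, Real.sq_sqrt (nn_pos w hρ z).le, inv_mul_cancel₀ (nn_pos w hρ z).ne']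

lemma WW_contDiff (w : ℂ) {ρ : ℝ} (hρ : 0 < ρ) : ContDiff ℝ ∞ (WW w ρ) :=
  ((nn_contDiff w ρ).sqrt fun z => (nn_pos w hρ z).ne').inv
    fun z => (Real.sqrt_pos.2 (nn_pos w hρ z)).ne'

lemma hasDerivAt_invsqrt {t : ℝ} (ht : 0 < t) :
    HasDerivAt (fun t => (Real.sqrt t)⁻¹) (-(1/2) * (Real.sqrt t)⁻¹ ^ 3) t := by
  have h := (Real.hasDerivAt_sqrt ht.ne').inv (Real.sqrt_pos.2 ht).ne'
  refine h.congr_deriv ?_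
  have := (Real.sqrt_pos.2 ht).ne'
  field_simp

lemma pdx_WW (w : ℂ) {ρ : ℝ} (hρ : 0 < ρ) (z : ℂ) : pdx (WW w ρ) z = - (z - w).re * WW w ρ z ^ 3 := by
  have := pdx_comp (nn_contDiff w ρ) (hasDerivAt_invsqrt (nn_pos w hρ z))
  unfold WW
  rw [this, pdx_nn]; ring

lemma pdy_WW (w : ℂ) {ρ : ℝ} (hρ : 0 < ρ) (z : ℂ) : pdy (WW w ρ) z = - (z - w).im * WW w ρ z ^ 3 := by
  have := pdy_comp (nn_contDiff w ρ) (hasDerivAt_invsqrt (nn_pos w hρ z))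
  unfold WW
  rw [this, pdy_nn]; ring

lemma re_contDiff (w : ℂ) : ContDiff ℝ ∞ (fun z : ℂ => (z - w).re) :=
  Complex.reCLM.contDiff.comp (sub_contDiff w)

lemma im_contDiff (w : ℂ) : ContDiff ℝ ∞ (fun z : ℂ => (z - w).im) :=
  Complex.imCLM.contDiff.comp (sub_contDiff w)

lemma pdx_re (w z : ℂ) : pdx (fun z : ℂ => (z - w).re) z = 1 := by
  have := pdx_clm Complex.reCLM (sub_contDiff w) z
  simpa [pdx_idsub] using this

lemma pdy_im (w z : ℂ) : pdy (fun z : ℂ => (z - w).im) z = 1 := by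
  have := pdy_clm Complex.imCLM (sub_contDiff w) z
  simpa [pdy_idsub] using this

lemma nsq_contDiff {h : ℂ → ℂ} (hh : ContDiff ℝ ∞ h) : ContDiff ℝ ∞ (fun z => Complex.normSq (h z)) :=
  normSq_contDiff.comp hh

lemma nsq_supp {h : ℂ → ℂ} (hh : HasCompactSupport h) : HasCompactSupport (fun z => Complex.normSq (h z)) :=
  hh.comp_left (g := fun x => Complex.normSq x) (by simp)

lemma grad_dot_le {h : ℂ → ℂ} (hh : ContDiff ℝ ∞ h) (z : ℂ) (a b c : ℝ) (hab : a ^ 2 + b ^ 2 ≤ c) :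
    -(pdx (fun z => Complex.normSq (h z)) z * a + pdy (fun z => Complex.normSq (h z)) z * b)
      ≤ Complex.normSq (h z) + c * gsq h z := by
  have h1 := grad_normSq_dot hh z a b
  have h2 := neg_abs_le (pdx (fun z => Complex.normSq (h z)) z * a + pdy (fun z => Complex.normSq (h z)) z * b)
  have g0 := gsq_nonneg h z
  have h3 : 2 * ‖h z‖ * Real.sqrt (gsq h z) * Real.sqrt (a ^ 2 + b ^ 2) ≤ ‖h z‖ ^ 2 + c * gsq h z := by
    have e1 := sq_nonneg (‖h z‖ - Real.sqrt (gsq h z) * Real.sqrt (a ^ 2 + b ^ 2))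
    have e2 : (Real.sqrt (gsq h z) * Real.sqrt (a ^ 2 + b ^ 2)) ^ 2 = gsq h z * (a ^ 2 + b ^ 2) := by
      rw [mul_pow, Real.sq_sqrt g0, Real.sq_sqrt (by positivity)]
    nlinarith [mul_le_mul_of_nonneg_left hab g0]
  rw [Complex.normSq_eq_norm_sq]; linarith

lemma poincare {h : ℂ → ℂ} (hh : ContDiff ℝ ∞ h) (hc : HasCompactSupport h) {w : ℂ} {R : ℝ}
    (hR : tsupport h ⊆ closedBall w R) :
    ∫ z, Complex.normSq (h z) ≤ R ^ 2 * ∫ z, gsq h z := by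
  have hd := div_thm (nsq_contDiff hh) (re_contDiff w) (im_contDiff w) (nsq_supp hc)
  simp_rw [pdx_re, pdy_im] at hd
  rw [integral_mul_const] at hd
  have i1 : Integrable (fun z => Complex.normSq (h z)) :=
    (nsq_contDiff hh).continuous.integrable_of_hasCompactSupport (nsq_supp hc)
  have i2 : Integrable (fun z => gsq h z) := (gsq_continuous hh).integrable_of_hasCompactSupport (gsq_supp hc)
  have i3 : Integrable (fun z => pdx (fun z => Complex.normSq (h z)) z * (z - w).re
      + pdy (fun z => Complex.normSq (h z)) z * (z - w).im) := by
    apply Continuous.integrable_of_hasCompactSupport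
    · exact ((pdx_contDiff (nsq_contDiff hh)).continuous.mul (re_contDiff w).continuous).add
        ((pdy_contDiff (nsq_contDiff hh)).continuous.mul (im_contDiff w).continuous)
    · exact (pdx_supp (nsq_supp hc)).mul_right.add (pdy_supp (nsq_supp hc)).mul_right
  have hle : ∫ z, -(pdx (fun z => Complex.normSq (h z)) z * (z - w).re
      + pdy (fun z => Complex.normSq (h z)) z * (z - w).im) ≤
      ∫ z, (Complex.normSq (h z) + R ^ 2 * gsq h z) := by
    apply integral_mono i3.neg (i1.add (i2.const_mul _))
    intro z
    by_cases hz : z ∈ tsupport h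
    · apply grad_dot_le hh
      have := hR hz
      rw [mem_closedBall, dist_eq_norm] at this
      have e : (z - w).re ^ 2 + (z - w).im ^ 2 = ‖z - w‖ ^ 2 := by
        rw [← Complex.normSq_eq_norm_sq, Complex.normSq_apply]; ring
      rw [e]; gcongr
    · have h0 : h z = 0 := image_eq_zero_of_notMem_tsupport hz
      simp only [Pi.neg_apply, Pi.add_apply]
      rw [pdx_normSq hh, pdy_normSq hh, h0]
      have := gsq_nonneg h z
      simp; positivity
  rw [integral_neg, integral_add i1 (i2.const_mul _), integral_const_mul, hd] at hle
  linarith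

lemma hardy {h : ℂ → ℂ} (hh : ContDiff ℝ ∞ h) (hc : HasCompactSupport h) (w : ℂ) {ρ : ℝ} (hρ : 0 < ρ) :
    ∫ z, Complex.normSq (h z) * WW w ρ z ≤ (∫ z, Complex.normSq (h z)) + ∫ z, gsq h z := by
  have sW := WW_contDiff w hρ
  have hd := div_thm (nsq_contDiff hh) ((re_contDiff w).mul sW) ((im_contDiff w).mul sW) (nsq_supp hc)
  have i1 : Integrable (fun z => Complex.normSq (h z)) :=
    (nsq_contDiff hh).continuous.integrable_of_hasCompactSupport (nsq_supp hc)
  have i2 : Integrable (fun z => gsq h z) := (gsq_continuous hh).integrable_of_hasCompactSupport (gsq_supp hc)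
  have i3 : Integrable (fun z => pdx (fun z => Complex.normSq (h z)) z * ((z - w).re * WW w ρ z)
      + pdy (fun z => Complex.normSq (h z)) z * ((z - w).im * WW w ρ z)) := by
    apply Continuous.integrable_of_hasCompactSupport
    · exact ((pdx_contDiff (nsq_contDiff hh)).continuous.mul ((re_contDiff w).mul sW).continuous).add
        ((pdy_contDiff (nsq_contDiff hh)).continuous.mul ((im_contDiff w).mul sW).continuous)
    · exact (pdx_supp (nsq_supp hc)).mul_right.add (pdy_supp (nsq_supp hc)).mul_right
  have i4 : Integrable (fun z => Complex.normSq (h z) * WW w ρ z) :=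
    ((nsq_contDiff hh).continuous.mul sW.continuous).integrable_of_hasCompactSupport (nsq_supp hc).mul_right
  have i5 : Integrable (fun z => Complex.normSq (h z) * (pdx (fun z => (z - w).re * WW w ρ z) z
      + pdy (fun z => (z - w).im * WW w ρ z) z)) :=
    ((nsq_contDiff hh).continuous.mul ((pdx_contDiff ((re_contDiff w).mul sW)).add
      (pdy_contDiff ((im_contDiff w).mul sW))).continuous).integrable_of_hasCompactSupport (nsq_supp hc).mul_right
  have hdiv : ∀ z, WW w ρ z ≤ pdx (fun z => (z - w).re * WW w ρ z) z
      + pdy (fun z => (z - w).im * WW w ρ z) z := by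
    intro z
    rw [pdx_mul (re_contDiff w) sW, pdy_mul (im_contDiff w) sW, pdx_re, pdy_im, pdx_WW w hρ, pdy_WW w hρ]
    have h1 := WW_sq w hρ z
    have h2 := WW_pos w hρ z
    rw [nn_eq] at h1
    have : ((z - w).re ^ 2 + (z - w).im ^ 2) * WW w ρ z ^ 2 ≤ 1 := by nlinarith [mul_pos (pow_pos h2 2) (pow_pos hρ 2)]
    nlinarith [mul_le_mul_of_nonneg_right this h2.le]
  have hle1 : ∫ z, Complex.normSq (h z) * WW w ρ z ≤ ∫ z, Complex.normSq (h z) *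
      (pdx (fun z => (z - w).re * WW w ρ z) z + pdy (fun z => (z - w).im * WW w ρ z) z) :=
    integral_mono i4 i5 fun z => mul_le_mul_of_nonneg_left (hdiv z) (Complex.normSq_nonneg _)
  have hle : ∫ z, -(pdx (fun z => Complex.normSq (h z)) z * ((z - w).re * WW w ρ z)
      + pdy (fun z => Complex.normSq (h z)) z * ((z - w).im * WW w ρ z)) ≤
      ∫ z, (Complex.normSq (h z) + 1 * gsq h z) := by
    apply integral_mono i3.neg (i1.add (i2.const_mul _))
    intro z
    apply grad_dot_le hh
    have h1 := WW_sq w hρ z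
    have h2 := WW_pos w hρ z
    rw [nn_eq] at h1
    nlinarith [mul_pos (pow_pos h2 2) (pow_pos hρ 2)]
  rw [integral_neg, integral_add i1 (i2.const_mul _), integral_const_mul, hd] at hle
  linarith

lemma isq {g : ℂ → ℂ} (h1 : Continuous g) (h2 : HasCompactSupport g) : Integrable (fun t => ‖g t‖ ^ 2) := by
  have h3 : HasCompactSupport (fun t => ‖g t‖ ^ 2) := h2.comp_left (g := fun x : ℂ => ‖x‖ ^ 2) (by simp)
  have h4 : Continuous (fun t => ‖g t‖ ^ 2) := h1.norm.pow 2
  exact h4.integrable_of_hasCompactSupport h3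

lemma partB (w : ℂ) {R : ℝ} (hR : 2 ≤ R) (M : ℝ≥0) : ∃ N : ℝ, 0 ≤ N ∧
    ∀ D : Set ℂ, IsOpen D → D ⊆ ball w R → ∀ z ∈ D, ‖z - w‖ < 1 → bergmanKernel D z ≤ M →
    ∃ v h : ℂ → ℂ, IsTest D v ∧ ContDiff ℝ ∞ h ∧ HasCompactSupport h ∧
      (∀ t ∈ ball w R, v t = 1 - (t - z) * h t) ∧
      (∫ t, gsq h t ≤ N) ∧ ∀ ρ, 0 < ρ → ∫ t, Complex.normSq (h t) * WW w ρ t ≤ N := by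
  let b : ContDiffBump w := ⟨R, R + 1, by linarith, by linarith⟩
  set η : ℂ → ℂ := fun t => ((b t : ℝ) : ℂ) with hη
  have sη : ContDiff ℝ ∞ η := ofReal_contDiff b.contDiff
  have cη : HasCompactSupport η := b.hasCompactSupport.comp_left (g := fun x : ℝ => (x : ℂ)) (by simp)
  have η1 : ∀ t ∈ ball w R, η t = 1 := fun t ht => by
    simp only [hη]; rw [b.one_of_mem_closedBall (ball_subset_closedBall ht)]; simp
  have η0 : ∀ t, t ∉ closedBall w (R + 1) → η t = 0 := fun t ht => by
    simp only [hη]; rw [b.zero_of_le_dist]; · simp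
    exact (not_le.1 ht).le
  set A := ∫ t, ‖dbar η t‖ ^ 2 with hA
  have hA0 : 0 ≤ A := integral_nonneg fun t => by positivity
  set M2 := 2 * A + 2 * (mZ ^ 2 * M + 1) with hM2
  have hM20 : 0 ≤ M2 := by positivity
  refine ⟨(R + 1) ^ 2 * M2 + M2, by positivity, ?_⟩
  intro D hD hDR z hz hzw hK
  obtain ⟨ε, hε, hεD⟩ := Metric.isOpen_iff.1 hD z hz
  set δ := ε / 4 with hδdef
  have hδ : 0 < δ := by positivity
  have hb : closedBall z (2 * δ) ⊆ D := (closedBall_subset_ball (by linarith)).trans hεD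
  obtain ⟨φ, ⟨sφ, cφ, tφ⟩, hφ⟩ := duality hD hK hδ hb
  have hδ1 : ∀ t, ‖t - z‖ < δ → η t = 1 := by
    intro t ht
    apply η1 t (hDR (hb _))
    rw [mem_closedBall, dist_eq_norm]; linarith
  obtain ⟨sq, dq⟩ := dbar_quot_kap sη hδ hδ hδ1
  have skap : ContDiff ℝ ∞ (fun t : ℂ => ((kap δ (t - z) : ℝ) : ℂ)) :=
    ofReal_contDiff ((kap_contDiff δ).comp (sub_contDiff z))
  set h : ℂ → ℂ := fun t => (η t - kap δ (t - z)) / (t - z) - φ t with hh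
  have sh : ContDiff ℝ ∞ h := sq.sub sφ
  have th : tsupport h ⊆ closedBall w (R + 1) := by
    apply closure_minimal _ isClosed_closedBall
    intro t ht
    by_contra hn
    apply ht
    have hnD : t ∉ D := fun h => hn (closedBall_subset_closedBall (by linarith) (ball_subset_closedBall (hDR h)))
    have e1 : φ t = 0 := image_eq_zero_of_notMem_tsupport fun h => hnD (tφ h)
    have e2 : ((kap δ (t - z) : ℝ) : ℂ) = 0 :=
      image_eq_zero_of_notMem_tsupport (f := fun t : ℂ => ((kap δ (t - z) : ℝ) : ℂ))
        fun h => hnD (hb (tsupport_kap_sub hδ z h))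
    simp only [hh]
    rw [e1, e2, η0 t hn]; simp
  have ch : HasCompactSupport h := (isCompact_closedBall w (R + 1)).of_isClosed_subset (isClosed_tsupport _) th
  have dh : ∀ t, dbar h t = dbar η t / (t - z) + (chi δ (t - z) - dbar φ t) := by
    intro t
    simp only [hh]
    rw [dbar_sub sq sφ, dq]; ring
  have hg : ∫ t, gsq h t ≤ M2 := by
    rw [integral_dbar_sq sh ch]
    have sχ : ContDiff ℝ ∞ (fun t : ℂ => ((chi δ (t - z) : ℝ) : ℂ)) :=
      ofReal_contDiff ((chi_contDiff δ).comp (sub_contDiff z))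
    have cχ : HasCompactSupport (fun t : ℂ => ((chi δ (t - z) : ℝ) : ℂ)) :=
      ((isCompact_closedBall z (2*δ)).of_isClosed_subset (isClosed_tsupport _) (tsupport_chi_sub hδ z))
    have i1 := isq (dbar_contDiff sh).continuous (dbar_supp ch)
    have i2 := isq (dbar_contDiff sη).continuous (dbar_supp cη)
    have i3 : Integrable (fun t => ‖(chi δ (t - z) : ℂ) - dbar φ t‖ ^ 2) :=
      isq (sχ.continuous.sub (dbar_contDiff sφ).continuous) (cχ.sub (dbar_supp cφ))
    have : ∫ t, ‖dbar h t‖ ^ 2 ≤ ∫ t, (2 * ‖dbar η t‖ ^ 2 + 2 * ‖(chi δ (t - z) : ℂ) - dbar φ t‖ ^ 2) := by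
      apply integral_mono i1 ((i2.const_mul 2).add (i3.const_mul 2))
      intro t
      simp only [Pi.add_apply]
      rw [dh]
      have e1 : ‖dbar η t / (t - z)‖ ≤ ‖dbar η t‖ := by
        by_cases ht : t ∈ ball w R
        · have : dbar η t = 0 := by
            have e : η =ᶠ[𝓝 t] fun _ => 1 := by
              filter_upwards [isOpen_ball.mem_nhds ht] with s hs using η1 s hs
            unfold dbar pdx pdy; rw [e.fderiv_eq]; simp
          rw [this]; simp
        · rw [norm_div]
          apply div_le_self (norm_nonneg _)
          rw [mem_ball, dist_eq_norm, not_lt] at ht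
          have := norm_sub_le_norm_sub_add_norm_sub t z w
          linarith
      have e2 := norm_add_le (dbar η t / (t - z)) ((chi δ (t - z) : ℂ) - dbar φ t)
      have e3 : ‖dbar η t / (t - z) + ((chi δ (t - z) : ℂ) - dbar φ t)‖ ^ 2 ≤
          (‖dbar η t‖ + ‖(chi δ (t - z) : ℂ) - dbar φ t‖) ^ 2 := by
        apply pow_le_pow_left₀ (norm_nonneg _); linarith
      nlinarith [sq_nonneg (‖dbar η t‖ - ‖(chi δ (t - z) : ℂ) - dbar φ t‖)]
    rw [integral_add (i2.const_mul 2) (i3.const_mul 2), integral_const_mul, integral_const_mul] at this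
    rw [hM2]; linarith
  have hp := poincare sh ch th
  have hN1 : (∫ t, Complex.normSq (h t)) ≤ (R + 1) ^ 2 * M2 := hp.trans (by gcongr)
  refine ⟨fun t => kap δ (t - z) + (t - z) * φ t, h, ⟨skap.add ((sub_contDiff z).mul sφ), ?_, ?_⟩, sh, ch, ?_, ?_, ?_⟩
  · refine HasCompactSupport.add (f := fun t : ℂ => ((kap δ (t - z) : ℝ) : ℂ)) ?_ cφ.mul_left
    exact (isCompact_closedBall z (2*δ)).of_isClosed_subset (isClosed_tsupport _) (tsupport_kap_sub hδ z)
  · refine (tsupport_add (fun t : ℂ => ((kap δ (t - z) : ℝ) : ℂ)) (fun t => (t - z) * φ t)).trans (union_subset ?_ ?_)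
    · exact (tsupport_kap_sub hδ z).trans hb
    · exact (tsupport_mul_subset_right (f := fun t => t - z)).trans tφ
  · intro t ht
    simp only [hh]
    rw [η1 t ht]
    by_cases htz : t = z
    · subst htz; simp [kap_eq_one hδ (x := 0) (by simpa using hδ.le)]
    · have := sub_ne_zero.2 htz
      field_simp
      ring
  · have : 0 ≤ (R + 1) ^ 2 * M2 := by positivity
    linarith
  · intro ρ hρ
    have := hardy sh ch w hρ
    linarith

noncomputable def lap (S : ℂ → ℝ) (t : ℂ) : ℝ := pdx (pdx S) t + pdy (pdy S) t

noncomputable def gsr (S : ℂ → ℝ) (t : ℂ) : ℝ := pdx S t ^ 2 + pdy S t ^ 2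

lemma gsr_nonneg (S : ℂ → ℝ) (t : ℂ) : 0 ≤ gsr S t := by unfold gsr; positivity

lemma gsr_continuous {S : ℂ → ℝ} (hS : ContDiff ℝ ∞ S) : Continuous (gsr S) :=
  ((pdx_contDiff hS).continuous.pow 2).add ((pdy_contDiff hS).continuous.pow 2)

lemma test_lap {S q : ℂ → ℝ} (hS : ContDiff ℝ ∞ S) (hq : ContDiff ℝ ∞ q) (hc : HasCompactSupport q)
    (hp : ∀ t, 0 ≤ q t * lap S t) : ∫ t, (pdx q t * pdx S t + pdy q t * pdy S t) ≤ 0 := by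
  rw [div_thm hq (pdx_contDiff hS) (pdy_contDiff hS) hc]
  have : 0 ≤ ∫ t, q t * lap S t := integral_nonneg fun t => hp t
  unfold lap at this
  linarith

lemma dot_bound {k : ℂ → ℂ} (hk : ContDiff ℝ ∞ k) (t : ℂ) (c : ℝ) (hc : 0 ≤ c) (a b : ℝ) :
    |c * (pdx (fun z => Complex.normSq (k z)) t * a + pdy (fun z => Complex.normSq (k z)) t * b)| ≤
      2 * (c * ‖k t‖ * Real.sqrt (gsq k t) * Real.sqrt (a ^ 2 + b ^ 2)) := by
  rw [abs_mul, abs_of_nonneg hc]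
  have := mul_le_mul_of_nonneg_left (grad_normSq_dot hk t a b) hc
  linarith

lemma core_ineq {k : ℂ → ℂ} {S L : ℂ → ℝ} (hk : ContDiff ℝ ∞ k) (hc : HasCompactSupport k)
    (hS : ContDiff ℝ ∞ S) (hL : ContDiff ℝ ∞ L) (hS0 : ∀ t, 0 ≤ S t)
    (hlap : ∀ t ∈ tsupport k, 0 ≤ lap S t) (hL0 : ∀ t ∈ tsupport k, 0 ≤ L t) {α : ℝ} (hα : 0 < α) :
    ∫ t, S t * Complex.normSq (k t) * (- lap L t) ≤ 4 / α * (∫ t, S t ^ 2 * gsq k t)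
      + α * (∫ t, L t ^ 2 * gsq k t) + 2 * ∫ t, S t * ‖k t‖ * Real.sqrt (gsq k t) * Real.sqrt (gsr L t) := by
  set κ : ℂ → ℝ := fun z => Complex.normSq (k z) with hκ
  have sκ : ContDiff ℝ ∞ κ := nsq_contDiff hk
  have cκ : HasCompactSupport κ := nsq_supp hc
  have κ0 : ∀ t, 0 ≤ κ t := fun t => Complex.normSq_nonneg _
  have κz : ∀ t, t ∉ tsupport k → κ t = 0 := fun t ht => by
    simp [hκ, image_eq_zero_of_notMem_tsupport ht]
  have κn : ∀ t, κ t = ‖k t‖ ^ 2 := fun t => Complex.normSq_eq_norm_sq _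
  have csx := (pdx_contDiff hS).continuous
  have csy := (pdy_contDiff hS).continuous
  have clx := (pdx_contDiff hL).continuous
  have cly := (pdy_contDiff hL).continuous
  have ckx := (pdx_contDiff sκ).continuous
  have cky := (pdy_contDiff sκ).continuous
  have cS := hS.continuous
  have cL := hL.continuous
  have cK := sκ.continuous
  have cg := gsq_continuous hk
  have cG := gsr_continuous hS
  have cGL := gsr_continuous hL
  have cSl : Continuous (lap L) := ((pdx_contDiff (pdx_contDiff hL)).add (pdy_contDiff (pdy_contDiff hL))).continuous
  -- integrability
  have I : ∀ {f : ℂ → ℝ}, Continuous f → (∀ t, t ∉ tsupport k → f t = 0) → Integrable f := by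
    intro f hf h0
    apply hf.integrable_of_hasCompactSupport
    exact HasCompactSupport.of_support_subset_isCompact hc fun t ht => by
      by_contra hn; exact ht (h0 t hn)
  have gz : ∀ t, t ∉ tsupport k → gsq k t = 0 := by
    intro t ht
    have : fderiv ℝ k t = 0 := by
      have := support_fderiv_subset ℝ (f := k)
      by_contra hn; exact ht (this hn)
    unfold gsq pdx pdy; rw [this]; simp
  have kxz : ∀ t, t ∉ tsupport k → pdx κ t = 0 := by
    intro t ht
    rw [hκ, pdx_normSq hk, image_eq_zero_of_notMem_tsupport ht]; simp
  have kyz : ∀ t, t ∉ tsupport k → pdy κ t = 0 := by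
    intro t ht
    rw [hκ, pdy_normSq hk, image_eq_zero_of_notMem_tsupport ht]; simp
  set Sg : ℂ → ℝ := fun t => S t ^ 2 * gsq k t
  set Lg : ℂ → ℝ := fun t => L t ^ 2 * gsq k t
  set T : ℂ → ℝ := fun t => S t * ‖k t‖ * Real.sqrt (gsq k t) * Real.sqrt (gsr L t)
  set G : ℂ → ℝ := fun t => κ t * gsr S t
  set SKS : ℂ → ℝ := fun t => S t * (pdx κ t * pdx S t + pdy κ t * pdy S t)
  set LKS : ℂ → ℝ := fun t => L t * (pdx κ t * pdx S t + pdy κ t * pdy S t)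
  set SKL : ℂ → ℝ := fun t => S t * (pdx κ t * pdx L t + pdy κ t * pdy L t)
  set KSL : ℂ → ℝ := fun t => κ t * (pdx S t * pdx L t + pdy S t * pdy L t)
  have iSg : Integrable Sg := I (by fun_prop) fun t ht => by simp [Sg, gz t ht]
  have iLg : Integrable Lg := I (by fun_prop) fun t ht => by simp [Lg, gz t ht]
  have iT : Integrable T := I (by have := hk.continuous; fun_prop) fun t ht => by simp [T, gz t ht]
  have iG : Integrable G := I (by fun_prop) fun t ht => by simp [G, κz t ht]
  have iSKS : Integrable SKS := I (by fun_prop) fun t ht => by simp [SKS, kxz t ht, kyz t ht]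
  have iLKS : Integrable LKS := I (by fun_prop) fun t ht => by simp [LKS, kxz t ht, kyz t ht]
  have iSKL : Integrable SKL := I (by fun_prop) fun t ht => by simp [SKL, kxz t ht, kyz t ht]
  have iKSL : Integrable KSL := I (by fun_prop) fun t ht => by simp [KSL, κz t ht]
  -- (1)
  have h1 : ∫ t, (G t + SKS t) ≤ 0 := by
    have := test_lap hS (hS.mul sκ) cκ.mul_left (fun t => by
      by_cases ht : t ∈ tsupport k
      · exact mul_nonneg (mul_nonneg (hS0 t) (κ0 t)) (hlap t ht)
      · simp [κz t ht])
    refine le_trans (le_of_eq ?_) this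
    congr 1; ext t
    rw [pdx_mul hS sκ, pdy_mul hS sκ]
    simp only [G, SKS, gsr]; ring
  rw [integral_add iG iSKS] at h1
  have h1' : - ∫ t, SKS t ≤ ∫ t, (1 / 2 * G t + 2 * Sg t) := by
    rw [← integral_neg]
    apply integral_mono iSKS.neg ((iG.const_mul _).add (iSg.const_mul _))
    intro t
    have e1 := dot_bound hk t (S t) (hS0 t) (pdx S t) (pdy S t)
    have e2 := neg_abs_le (SKS t)
    have e3 : (‖k t‖ * Real.sqrt (gsr S t)) ^ 2 = G t := by
      rw [mul_pow, Real.sq_sqrt (gsr_nonneg _ _), ← κn]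
    have e4 : (S t * Real.sqrt (gsq k t)) ^ 2 = Sg t := by
      rw [mul_pow, Real.sq_sqrt (gsq_nonneg _ _)]
    have e5 := sq_nonneg (‖k t‖ * Real.sqrt (gsr S t) - 2 * (S t * Real.sqrt (gsq k t)))
    change |SKS t| ≤ 2 * (S t * ‖k t‖ * Real.sqrt (gsq k t) * Real.sqrt (gsr S t)) at e1
    simp only [Pi.neg_apply, Pi.add_apply]
    nlinarith
  rw [integral_add (iG.const_mul _) (iSg.const_mul _), integral_const_mul, integral_const_mul] at h1'
  have hcac : ∫ t, G t ≤ 4 * ∫ t, Sg t := by linarith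
  -- (2)
  have h2 : ∫ t, (KSL t + LKS t) ≤ 0 := by
    have := test_lap hS (hL.mul sκ) cκ.mul_left (fun t => by
      by_cases ht : t ∈ tsupport k
      · exact mul_nonneg (mul_nonneg (hL0 t ht) (κ0 t)) (hlap t ht)
      · simp [κz t ht])
    refine le_trans (le_of_eq ?_) this
    congr 1; ext t
    rw [pdx_mul hL sκ, pdy_mul hL sκ]
    simp only [KSL, LKS]; ring
  rw [integral_add iKSL iLKS] at h2
  have h3 : ∫ t, (KSL t + SKL t) = ∫ t, S t * κ t * (- lap L t) := by
    have := div_thm (hS.mul sκ) (pdx_contDiff hL) (pdy_contDiff hL) cκ.mul_left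
    rw [← integral_neg] at this
    convert this using 2
    · ext t
      rw [pdx_mul hS sκ, pdy_mul hS sκ]
      simp only [KSL, SKL]; ring
    · ext t
      simp only [lap]; ring
  rw [integral_add iKSL iSKL] at h3
  have h4 : ∫ t, SKL t ≤ ∫ t, 2 * T t := by
    apply integral_mono iSKL (iT.const_mul _)
    intro t
    have e1 := dot_bound hk t (S t) (hS0 t) (pdx L t) (pdy L t)
    exact (le_abs_self _).trans e1
  have h5 : - ∫ t, LKS t ≤ ∫ t, (1 / α * G t + α * Lg t) := by
    rw [← integral_neg]
    apply integral_mono iLKS.neg ((iG.const_mul _).add (iLg.const_mul _))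
    intro t
    simp only [Pi.neg_apply, Pi.add_apply]
    by_cases ht : t ∈ tsupport k
    · have e1 := dot_bound hk t (L t) (hL0 t ht) (pdx S t) (pdy S t)
      have e2 := neg_abs_le (LKS t)
      have e3 : (‖k t‖ * Real.sqrt (gsr S t)) ^ 2 = G t := by
        rw [mul_pow, Real.sq_sqrt (gsr_nonneg _ _), ← κn]
      have e4 : (L t * Real.sqrt (gsq k t)) ^ 2 = Lg t := by
        rw [mul_pow, Real.sq_sqrt (gsq_nonneg _ _)]
      change |LKS t| ≤ 2 * (L t * ‖k t‖ * Real.sqrt (gsq k t) * Real.sqrt (gsr S t)) at e1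
      have e5 := sq_nonneg (‖k t‖ * Real.sqrt (gsr S t) - α * (L t * Real.sqrt (gsq k t)))
      have e6 : 2 * (L t * ‖k t‖ * Real.sqrt (gsq k t) * Real.sqrt (gsr S t)) * α ≤ G t + α ^ 2 * Lg t := by
        nlinarith
      have e7 : 2 * (L t * ‖k t‖ * Real.sqrt (gsq k t) * Real.sqrt (gsr S t)) ≤ 1 / α * G t + α * Lg t := by
        have : 1 / α * G t + α * Lg t = (G t + α ^ 2 * Lg t) / α := by field_simp
        rw [this, le_div_iff₀ hα]; exact e6
      linarith
    · have z1 : LKS t = 0 := by simp [LKS, kxz t ht, kyz t ht]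
      have z2 : G t = 0 := by simp [G, κz t ht]
      have z3 : Lg t = 0 := by simp [Lg, gz t ht]
      rw [z1, z2, z3]; simp
  rw [integral_add (iG.const_mul _) (iLg.const_mul _), integral_const_mul, integral_const_mul] at h5
  rw [integral_const_mul] at h4
  have h6 : 1 / α * ∫ t, G t ≤ 4 / α * ∫ t, Sg t := by
    have := mul_le_mul_of_nonneg_left hcac (one_div_pos.2 hα).le
    calc _ ≤ _ := this
      _ = _ := by ring
  rw [← h3]
  linarith

noncomputable def LL (w : ℂ) (ρ r : ℝ) (t : ℂ) : ℝ := Real.log (2 * r) - 1 / 2 * Real.log (nn w ρ t)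

lemma LL_contDiff (w : ℂ) {ρ : ℝ} (hρ : 0 < ρ) (r : ℝ) : ContDiff ℝ ∞ (LL w ρ r) :=
  contDiff_const.sub (contDiff_const.mul ((nn_contDiff w ρ).log fun z => (nn_pos w hρ z).ne'))

lemma WW_sq' (w : ℂ) {ρ : ℝ} (hρ : 0 < ρ) (z : ℂ) : (nn w ρ z)⁻¹ = WW w ρ z ^ 2 :=
  (eq_inv_of_mul_eq_one_left (WW_sq w hρ z)).symm

lemma hasDerivAt_LLaux (r : ℝ) {t : ℝ} (ht : 0 < t) :
    HasDerivAt (fun t => Real.log (2 * r) - 1 / 2 * Real.log t) (-(1 / 2) * t⁻¹) t := by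
  refine (((Real.hasDerivAt_log ht.ne').const_mul (1/2 : ℝ)).const_sub (Real.log (2 * r))).congr_deriv ?_
  ring

lemma pdx_LL (w : ℂ) {ρ : ℝ} (hρ : 0 < ρ) (r : ℝ) (z : ℂ) :
    pdx (LL w ρ r) z = - ((z - w).re * (WW w ρ z * WW w ρ z)) := by
  have := pdx_comp (nn_contDiff w ρ) (hasDerivAt_LLaux r (nn_pos w hρ z))
  unfold LL
  rw [this, pdx_nn, WW_sq' w hρ]; ring

lemma pdy_LL (w : ℂ) {ρ : ℝ} (hρ : 0 < ρ) (r : ℝ) (z : ℂ) :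
    pdy (LL w ρ r) z = - ((z - w).im * (WW w ρ z * WW w ρ z)) := by
  have := pdy_comp (nn_contDiff w ρ) (hasDerivAt_LLaux r (nn_pos w hρ z))
  unfold LL
  rw [this, pdy_nn, WW_sq' w hρ]; ring

lemma lap_LL (w : ℂ) {ρ : ℝ} (hρ : 0 < ρ) (r : ℝ) (z : ℂ) :
    - lap (LL w ρ r) z = 2 * ρ ^ 2 * WW w ρ z ^ 4 := by
  have sW := WW_contDiff w hρ
  have e1 : pdx (LL w ρ r) = fun z => - ((z - w).re * (WW w ρ z * WW w ρ z)) := by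
    ext z; exact pdx_LL w hρ r z
  have e2 : pdy (LL w ρ r) = fun z => - ((z - w).im * (WW w ρ z * WW w ρ z)) := by
    ext z; exact pdy_LL w hρ r z
  have n1 : ∀ f : ℂ → ℝ, pdx (fun z => - f z) z = - pdx f z := by
    intro f; unfold pdx; rw [fderiv_fun_neg]; rfl
  have n2 : ∀ f : ℂ → ℝ, pdy (fun z => - f z) z = - pdy f z := by
    intro f; unfold pdy; rw [fderiv_fun_neg]; rfl
  unfold lap
  rw [e1, e2, n1, n2, pdx_mul (re_contDiff w) (sW.mul sW), pdy_mul (im_contDiff w) (sW.mul sW),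
    pdx_mul sW sW, pdy_mul sW sW, pdx_re, pdy_im, pdx_WW w hρ, pdy_WW w hρ]
  have h := WW_sq w hρ z
  rw [nn_eq] at h
  linear_combination (-2 * WW w ρ z ^ 2) * h

lemma gsr_LL (w : ℂ) {ρ : ℝ} (hρ : 0 < ρ) (r : ℝ) (z : ℂ) :
    Real.sqrt (gsr (LL w ρ r) z) ≤ WW w ρ z := by
  have h2 := WW_pos w hρ z
  apply Real.sqrt_le_iff.2 ⟨h2.le, ?_⟩
  unfold gsr
  rw [pdx_LL w hρ, pdy_LL w hρ]
  have h := WW_sq w hρ z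
  rw [nn_eq] at h
  have : ((z - w).re ^ 2 + (z - w).im ^ 2) * WW w ρ z ^ 2 ≤ 1 := by
    nlinarith [mul_pos (pow_pos h2 2) (pow_pos hρ 2)]
  nlinarith [mul_le_mul_of_nonneg_right this (sq_nonneg (WW w ρ z))]

lemma normsub_WW_le (w : ℂ) {ρ : ℝ} (hρ : 0 < ρ) (t : ℂ) : ‖t - w‖ * WW w ρ t ≤ 1 := by
  have h2 := WW_pos w hρ t
  have h := WW_sq w hρ t
  rw [nn_eq'] at h
  have : (‖t - w‖ * WW w ρ t) ^ 2 ≤ 1 ^ 2 := by nlinarith [mul_pos (pow_pos h2 2) (pow_pos hρ 2)]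
  exact le_of_sq_le_sq this (by norm_num)

lemma rho_WW_le (w : ℂ) {ρ : ℝ} (hρ : 0 < ρ) (t : ℂ) : ρ * WW w ρ t ≤ 1 := by
  have h2 := WW_pos w hρ t
  have h := WW_sq w hρ t
  rw [nn_eq'] at h
  have : (ρ * WW w ρ t) ^ 2 ≤ 1 ^ 2 := by nlinarith [sq_nonneg (‖t - w‖ * WW w ρ t)]
  exact le_of_sq_le_sq this (by norm_num)

lemma one_le_rWW (w : ℂ) {ρ r : ℝ} (hρ : 0 < ρ) (hr : ρ ≤ r) {t : ℂ} (ht : ‖t - w‖ ≤ r) :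
    1 ≤ 2 * r * WW w ρ t := by
  have hr0 : 0 < r := hρ.trans_le hr
  have h2 := WW_pos w hρ t
  have h := WW_sq w hρ t
  rw [nn_eq'] at h
  have h3 : ‖t - w‖ ^ 2 + ρ ^ 2 ≤ (2 * r) ^ 2 := by nlinarith [norm_nonneg (t - w)]
  have : 1 ^ 2 ≤ (2 * r * WW w ρ t) ^ 2 := by
    nlinarith [mul_le_mul_of_nonneg_left h3 (sq_nonneg (WW w ρ t))]
  exact le_of_sq_le_sq this (by positivity)

lemma LL_eq (w : ℂ) {ρ r : ℝ} (hρ : 0 < ρ) (hr : 0 < r) (t : ℂ) :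
    LL w ρ r t = Real.log (2 * r * WW w ρ t) := by
  unfold LL WW
  have h := nn_pos w hρ t
  rw [Real.log_mul (by positivity) (inv_pos.2 (Real.sqrt_pos.2 h)).ne', Real.log_inv, Real.log_sqrt h.le]
  ring

lemma LL_sq_le (w : ℂ) {ρ r : ℝ} (hρ : 0 < ρ) (hr : ρ ≤ r) {t : ℂ} (ht : ‖t - w‖ ≤ r) :
    0 ≤ LL w ρ r t ∧ LL w ρ r t ^ 2 ≤ 8 * r * WW w ρ t := by
  have h1 := one_le_rWW w hρ hr ht
  rw [LL_eq w hρ (hρ.trans_le hr)]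
  set x := 2 * r * WW w ρ t
  have hl := Real.log_nonneg h1
  refine ⟨hl, ?_⟩
  have h2 : Real.log x ≤ 2 * Real.sqrt x := by
    have := Real.log_le_sub_one_of_pos (Real.sqrt_pos.2 (by linarith : 0 < x))
    rw [Real.log_sqrt (by linarith)] at this
    linarith
  have h3 : Real.log x ^ 2 ≤ (2 * Real.sqrt x) ^ 2 := pow_le_pow_left₀ hl h2 2
  rw [mul_pow, Real.sq_sqrt (by linarith)] at h3
  simp only [x] at h3 ⊢
  linarith

lemma LL_sq_le' (w : ℂ) {ρ r : ℝ} (hρ : 0 < ρ) (hr : ρ ≤ r) {t : ℂ} (ht : ‖t - w‖ ≤ r)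
    (ht' : r / 2 ≤ ‖t - w‖) : r * WW w ρ t ≤ 2 ∧ LL w ρ r t ^ 2 ≤ 16 := by
  have h0 := WW_pos w hρ t
  have h1 := normsub_WW_le w hρ t
  have : r * WW w ρ t ≤ 2 := by nlinarith
  refine ⟨this, (LL_sq_le w hρ hr ht).2.trans (by linarith)⟩

lemma integral_WW (w : ℂ) {ρ r : ℝ} (hρ : 0 < ρ) (hr : 0 < r) :
    ∫ t in closedBall w r, WW w ρ t ≤ 2 * mZ * r := by
  have sW := WW_contDiff w hρ
  have sq : ContDiff ℝ ∞ (fun t => kap r (t - w)) := (kap_contDiff r).comp (sub_contDiff w)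
  have cq : HasCompactSupport (fun t => kap r (t - w)) :=
    (isCompact_closedBall w (2 * r)).of_isClosed_subset (isClosed_tsupport _) (by
      apply closure_minimal _ isClosed_closedBall
      intro t ht
      by_contra h
      apply ht
      simp only
      rw [kap_eq_zero hr]
      rw [mem_closedBall, dist_eq_norm] at h; exact (not_le.1 h).le)
  have cχ : HasCompactSupport (fun t => chi r (t - w)) :=
    (isCompact_closedBall w (2 * r)).of_isClosed_subset (isClosed_tsupport _) (by
      apply closure_minimal _ isClosed_closedBall
      intro t ht
      by_contra h
      apply ht
      simp only
      rw [chi_eq_zero_out hr]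
      rw [mem_closedBall, dist_eq_norm] at h; exact (not_le.1 h).le)
  have sχ : ContDiff ℝ ∞ (fun t => chi r (t - w)) := (chi_contDiff r).comp (sub_contDiff w)
  have hd := div_thm sq ((re_contDiff w).mul sW) ((im_contDiff w).mul sW) cq
  have hdiv : ∀ z, WW w ρ z ≤ pdx (fun z => (z - w).re * WW w ρ z) z
      + pdy (fun z => (z - w).im * WW w ρ z) z := by
    intro z
    rw [pdx_mul (re_contDiff w) sW, pdy_mul (im_contDiff w) sW, pdx_re, pdy_im, pdx_WW w hρ, pdy_WW w hρ]
    have h1 := WW_sq w hρ z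
    have h2 := WW_pos w hρ z
    rw [nn_eq] at h1
    have : ((z - w).re ^ 2 + (z - w).im ^ 2) * WW w ρ z ^ 2 ≤ 1 := by nlinarith [mul_pos (pow_pos h2 2) (pow_pos hρ 2)]
    nlinarith [mul_le_mul_of_nonneg_right this h2.le]
  have i1 : Integrable (fun t => kap r (t - w) * WW w ρ t) :=
    (sq.continuous.mul sW.continuous).integrable_of_hasCompactSupport cq.mul_right
  have i2 : Integrable (fun z => kap r (z - w) * (pdx (fun z => (z - w).re * WW w ρ z) z
      + pdy (fun z => (z - w).im * WW w ρ z) z)) :=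
    (sq.continuous.mul ((pdx_contDiff ((re_contDiff w).mul sW)).add
      (pdy_contDiff ((im_contDiff w).mul sW))).continuous).integrable_of_hasCompactSupport cq.mul_right
  have i3 : Integrable (fun t => chi r (t - w) * (2 * r)) :=
    (sχ.continuous.mul continuous_const).integrable_of_hasCompactSupport cχ.mul_right
  have a1 : ∫ t in closedBall w r, WW w ρ t ≤ ∫ t, kap r (t - w) * WW w ρ t := by
    have : ∫ t in closedBall w r, WW w ρ t = ∫ t in closedBall w r, kap r (t - w) * WW w ρ t := by
      apply setIntegral_congr_fun measurableSet_closedBall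
      intro t ht
      rw [mem_closedBall, dist_eq_norm] at ht
      simp only
      rw [kap_eq_one hr ht, one_mul]
    rw [this]
    exact setIntegral_le_integral i1 (ae_of_all _ fun t => mul_nonneg (kap_nonneg _ _) (WW_pos w hρ t).le)
  have a2 : ∫ t, kap r (t - w) * WW w ρ t ≤ ∫ z, kap r (z - w) * (pdx (fun z => (z - w).re * WW w ρ z) z
      + pdy (fun z => (z - w).im * WW w ρ z) z) :=
    integral_mono i1 i2 fun z => mul_le_mul_of_nonneg_left (hdiv z) (kap_nonneg _ _)
  have a3 : ∫ z, kap r (z - w) * (pdx (fun z => (z - w).re * WW w ρ z) z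
      + pdy (fun z => (z - w).im * WW w ρ z) z) ≤ ∫ t, chi r (t - w) * (2 * r) := by
    rw [← neg_neg (∫ z, kap r (z - w) * _), ← hd, ← integral_neg]
    apply integral_mono _ i3
    · intro t
      simp only
      rw [pdx_trans (kap r), pdy_trans (kap r), pdx_kap, pdy_kap]
      have e : (t - w).re ^ 2 + (t - w).im ^ 2 = ‖t - w‖ ^ 2 := by
        rw [← Complex.normSq_eq_norm_sq, Complex.normSq_apply]; ring
      have : -(-chi r (t - w) * (t - w).re * ((t - w).re * WW w ρ t) + -chi r (t - w) * (t - w).im * ((t - w).im * WW w ρ t))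
        = chi r (t - w) * (‖t - w‖ * (‖t - w‖ * WW w ρ t)) := by
        linear_combination (chi r (t - w) * WW w ρ t) * e
      rw [this]
      by_cases ht : ‖t - w‖ < 2 * r
      · apply mul_le_mul_of_nonneg_left _ (chi_nonneg _ _)
        have := mul_le_mul_of_nonneg_left (normsub_WW_le w hρ t) (norm_nonneg (t - w))
        linarith
      · rw [chi_eq_zero_out hr (not_lt.1 ht)]; simp
    · apply Integrable.neg
      apply Continuous.integrable_of_hasCompactSupport
      · exact ((pdx_contDiff sq).continuous.mul ((re_contDiff w).mul sW).continuous).add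
          ((pdy_contDiff sq).continuous.mul ((im_contDiff w).mul sW).continuous)
      · exact (pdx_supp cq).mul_right.add (pdy_supp cq).mul_right
  rw [integral_mul_const, integral_sub_right_eq_self (fun t => chi r t), integral_chi hr] at a3
  linarith

lemma vol_ball_real (w : ℂ) {r : ℝ} (hr : 0 < r) : volume.real (closedBall w r) = Real.pi * r ^ 2 := by
  rw [Measure.real, Complex.volume_closedBall]
  simp [ENNReal.toReal_ofReal hr.le]; ring

def Ann (w : ℂ) (r : ℝ) : Set ℂ := {t | r / 2 ≤ ‖t - w‖ ∧ ‖t - w‖ ≤ r}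

lemma Ann_meas (w : ℂ) (r : ℝ) : MeasurableSet (Ann w r) := by
  apply IsClosed.measurableSet
  have hc : Continuous (fun t : ℂ => ‖t - w‖) := (continuous_id.sub continuous_const).norm
  exact (isClosed_le continuous_const hc).inter (isClosed_le hc continuous_const)

lemma Ann_sub (w : ℂ) (r : ℝ) : Ann w r ⊆ closedBall w r := by
  intro t ht; rw [mem_closedBall, dist_eq_norm]; exact ht.2

lemma master_bound {w : ℂ} {ρ r ε N : ℝ} (hρ : 0 < ρ) (hr : 0 < r) {h : ℂ → ℂ} (hh : ContDiff ℝ ∞ h)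
    (hc : HasCompactSupport h) {S : ℂ → ℝ} (hS : Continuous S)
    (hε : ∫ t in Ann w r, S t ≤ ε) (hN1 : ∫ t, gsq h t ≤ N) (hN2 : ∫ t, Complex.normSq (h t) * WW w ρ t ≤ N)
    {f : ℂ → ℝ} (hf : Continuous f) (hz : ∀ t, t ∉ closedBall w r → f t = 0) {a b c d e : ℝ}
    (ha : 0 ≤ a) (hb : 0 ≤ b) (hc' : 0 ≤ c) (hd : 0 ≤ d)
    (hle : ∀ t ∈ closedBall w r, f t ≤ a * (Ann w r).indicator S t + b * (Complex.normSq (h t) * WW w ρ t)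
      + c * gsq h t + d * WW w ρ t + e) :
    ∫ t, f t ≤ a * ε + b * N + c * N + d * (2 * mZ * r) + e * (Real.pi * r ^ 2) := by
  rw [← setIntegral_eq_integral_of_forall_compl_eq_zero hz]
  have K := isCompact_closedBall w r
  have ci : ∀ {g : ℂ → ℝ}, Continuous g → IntegrableOn g (closedBall w r) := fun hg =>
    hg.continuousOn.integrableOn_compact K
  have cW := (WW_contDiff w hρ).continuous
  have cH := (nsq_contDiff hh).continuous
  have j1 : IntegrableOn (fun t => a * (Ann w r).indicator S t) (closedBall w r) :=
    (Integrable.indicator (ci hS) (Ann_meas w r)).const_mul a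
  have j2 : IntegrableOn (fun t => b * (Complex.normSq (h t) * WW w ρ t)) (closedBall w r) :=
    ci (continuous_const.mul (cH.mul cW))
  have j3 : IntegrableOn (fun t => c * gsq h t) (closedBall w r) := ci (continuous_const.mul (gsq_continuous hh))
  have j4 : IntegrableOn (fun t => d * WW w ρ t) (closedBall w r) := ci (continuous_const.mul cW)
  have j5 : IntegrableOn (fun _ : ℂ => e) (closedBall w r) := ci continuous_const
  have h1 := setIntegral_mono_on (ci hf) ((((j1.add j2).add j3).add j4).add j5) measurableSet_closedBall hle
  refine h1.trans ?_
  have e1 : ∫ t in closedBall w r, (a * (Ann w r).indicator S t + b * (Complex.normSq (h t) * WW w ρ t)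
      + c * gsq h t + d * WW w ρ t + e) = a * (∫ t in closedBall w r, (Ann w r).indicator S t) +
      b * (∫ t in closedBall w r, (Complex.normSq (h t) * WW w ρ t)) + c * (∫ t in closedBall w r, gsq h t)
      + d * (∫ t in closedBall w r, WW w ρ t) + ∫ t in closedBall w r, e := by
    rw [← integral_const_mul, ← integral_const_mul, ← integral_const_mul, ← integral_const_mul]
    have k2 : IntegrableOn (fun t => a * (Ann w r).indicator S t + b * (Complex.normSq (h t) * WW w ρ t))
      (closedBall w r) := j1.add j2
    have k3 : IntegrableOn (fun t => a * (Ann w r).indicator S t + b * (Complex.normSq (h t) * WW w ρ t)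
      + c * gsq h t) (closedBall w r) := k2.add j3
    have k4 : IntegrableOn (fun t => a * (Ann w r).indicator S t + b * (Complex.normSq (h t) * WW w ρ t)
      + c * gsq h t + d * WW w ρ t) (closedBall w r) := k3.add j4
    rw [integral_add k4 j5, integral_add k3 j4, integral_add k2 j3, integral_add j1 j2]
  refine (le_of_eq e1).trans ?_
  have f1 : ∫ t in closedBall w r, (Ann w r).indicator S t ≤ ε := by
    rw [setIntegral_indicator (Ann_meas w r), inter_eq_right.2 (Ann_sub w r)]; exact hε
  have f2 : ∫ t in closedBall w r, (Complex.normSq (h t) * WW w ρ t) ≤ N := by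
    refine (setIntegral_le_integral ?_ (ae_of_all _ fun t => mul_nonneg (Complex.normSq_nonneg _) (WW_pos w hρ t).le)).trans hN2
    exact (cH.mul cW).integrable_of_hasCompactSupport (nsq_supp hc).mul_right
  have f3 : ∫ t in closedBall w r, gsq h t ≤ N := by
    refine (setIntegral_le_integral ?_ (ae_of_all _ fun t => gsq_nonneg h t)).trans hN1
    exact (gsq_continuous hh).integrable_of_hasCompactSupport (gsq_supp hc)
  have f4 := integral_WW w hρ hr
  have f5 : ∫ t in closedBall w r, e = e * (Real.pi * r ^ 2) := by
    rw [setIntegral_const, vol_ball_real w hr, smul_eq_mul, mul_comm]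
  rw [f5]
  gcongr

/-- pure real inequality 1 -/
lemma real1 {x y W T m i S r D g : ℝ} (hx : 0 ≤ x) (hW : 0 ≤ W) (hT : 0 ≤ T) (hT2 : T ≤ 2 * r)
    (hm0 : 0 ≤ m) (hm : m ≤ 1 + T * x) (hi : i = 0 ∨ i = 1) (hS0 : 0 ≤ S) (hS1 : S ≤ 1)
    (hr : 0 < r) (hr1 : r ≤ 1) (hrW : 1 ≤ 2 * r * W) (hD : 0 ≤ D)
    (hg : g ≤ (i * (D / r * m) + 2 * x + 2 * T * y) ^ 2) (hg0 : 0 ≤ g) :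
    S ^ 2 * g ≤ 6 * D ^ 2 / r ^ 2 * (i * S) + (48 * D ^ 2 + 24) * r * (x ^ 2 * W) + 48 * r * y ^ 2 := by
  have hm2 : m ^ 2 ≤ 2 + 8 * r ^ 2 * x ^ 2 := by
    have h1 : m ^ 2 ≤ (1 + T * x) ^ 2 := pow_le_pow_left₀ hm0 hm 2
    have h2 : (T * x) ^ 2 ≤ (2 * r * x) ^ 2 := pow_le_pow_left₀ (by positivity) (by gcongr) 2
    nlinarith [sq_nonneg (1 - T * x)]
  have hx2 : x ^ 2 ≤ 2 * r * (x ^ 2 * W) := by nlinarith [sq_nonneg x]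
  have hT2' : T ^ 2 * y ^ 2 ≤ 4 * r * y ^ 2 := by
    have : T ^ 2 ≤ 4 * r := by nlinarith
    gcongr
  have hii : i ^ 2 = i := by rcases hi with h | h <;> simp [h]
  have hi0 : 0 ≤ i := by rcases hi with h | h <;> simp [h]
  have hi1 : i ≤ 1 := by rcases hi with h | h <;> simp [h]
  have hg2 : g ≤ 3 * (i * (D ^ 2 / r ^ 2 * m ^ 2)) + 12 * x ^ 2 + 12 * (T ^ 2 * y ^ 2) := by
    have : (i * (D / r * m)) ^ 2 = i * (D ^ 2 / r ^ 2 * m ^ 2) := by rw [mul_pow, hii]; ring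
    nlinarith [sq_nonneg (i * (D / r * m) - 2 * x), sq_nonneg (i * (D / r * m) - 2 * T * y),
      sq_nonneg (2 * x - 2 * T * y)]
  have hS2 : S ^ 2 ≤ S := by nlinarith
  have e1 : S ^ 2 * g ≤ S * (3 * (i * (D ^ 2 / r ^ 2 * m ^ 2)) + 12 * x ^ 2 + 12 * (T ^ 2 * y ^ 2)) := by
    gcongr
  have e2 : S * (12 * x ^ 2 + 12 * (T ^ 2 * y ^ 2)) ≤ 1 * (12 * x ^ 2 + 12 * (T ^ 2 * y ^ 2)) := by
    gcongr
  have e3 : S * i * (D ^ 2 / r ^ 2 * m ^ 2) ≤ S * i * (D ^ 2 / r ^ 2 * (2 + 8 * r ^ 2 * x ^ 2)) := by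
    gcongr
  have e4 : S * i * (D ^ 2 / r ^ 2 * (2 + 8 * r ^ 2 * x ^ 2)) =
      2 * D ^ 2 / r ^ 2 * (i * S) + S * i * (8 * D ^ 2 * x ^ 2) := by field_simp
  have e5 : S * i * (8 * D ^ 2 * x ^ 2) ≤ 1 * 1 * (8 * D ^ 2 * x ^ 2) := by gcongr
  have e6 : D ^ 2 * x ^ 2 ≤ D ^ 2 * (2 * r * (x ^ 2 * W)) := by gcongr
  have e7 : 6 * D ^ 2 / r ^ 2 * (i * S) = 3 * (2 * D ^ 2 / r ^ 2 * (i * S)) := by ring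
  nlinarith

lemma real2 {x y W T m i r D g L2 : ℝ} (hx : 0 ≤ x) (hW : 0 ≤ W) (hT : 0 ≤ T) (hT2 : T ≤ 2 * r)
    (hTW : T * W ≤ 2)
    (hm0 : 0 ≤ m) (hm : m ≤ 1 + T * x) (hi : i = 0 ∨ i = 1)
    (hr : 0 < r) (hr1 : r ≤ 1) (hrW : 1 ≤ 2 * r * W) (hD : 0 ≤ D) (hL0 : 0 ≤ L2) (hL : L2 ≤ 8 * r * W)
    (hLi : i * L2 ≤ i * 16)
    (hg : g ≤ (i * (D / r * m) + 2 * x + 2 * T * y) ^ 2) :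
    L2 * g ≤ (768 * D ^ 2 + 96) * r * (x ^ 2 * W) + 384 * r * y ^ 2 + 96 * D ^ 2 / r ^ 2 := by
  have hm2 : m ^ 2 ≤ 2 + 8 * r ^ 2 * x ^ 2 := by
    have h1 : m ^ 2 ≤ (1 + T * x) ^ 2 := pow_le_pow_left₀ hm0 hm 2
    have h2 : (T * x) ^ 2 ≤ (2 * r * x) ^ 2 := pow_le_pow_left₀ (by positivity) (by gcongr) 2
    nlinarith [sq_nonneg (1 - T * x)]
  have hx2 : x ^ 2 ≤ 2 * r * (x ^ 2 * W) := by nlinarith [sq_nonneg x]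
  have hii : i ^ 2 = i := by rcases hi with h | h <;> simp [h]
  have hi0 : 0 ≤ i := by rcases hi with h | h <;> simp [h]
  have hi1 : i ≤ 1 := by rcases hi with h | h <;> simp [h]
  have hg2 : g ≤ 3 * (i * (D ^ 2 / r ^ 2 * m ^ 2)) + 12 * x ^ 2 + 12 * (T ^ 2 * y ^ 2) := by
    have : (i * (D / r * m)) ^ 2 = i * (D ^ 2 / r ^ 2 * m ^ 2) := by rw [mul_pow, hii]; ring
    nlinarith [sq_nonneg (i * (D / r * m) - 2 * x), sq_nonneg (i * (D / r * m) - 2 * T * y),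
      sq_nonneg (2 * x - 2 * T * y)]
  have e1 : L2 * g ≤ L2 * (3 * (i * (D ^ 2 / r ^ 2 * m ^ 2)) + 12 * x ^ 2 + 12 * (T ^ 2 * y ^ 2)) := by
    gcongr
  have e2 : L2 * (12 * x ^ 2 + 12 * (T ^ 2 * y ^ 2)) ≤ 8 * r * W * (12 * x ^ 2 + 12 * (T ^ 2 * y ^ 2)) := by
    gcongr
  have e22 : r * W * (T ^ 2 * y ^ 2) ≤ 4 * r * y ^ 2 := by
    have : r * W * T ^ 2 ≤ 4 * r := by
      have h1 : (T * W) * T ≤ 2 * (2 * r) := by gcongr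
      have h2 : r * ((T * W) * T) ≤ 1 * (2 * (2 * r)) := by gcongr
      nlinarith
    nlinarith [sq_nonneg y]
  have e3 : i * L2 * (D ^ 2 / r ^ 2 * m ^ 2) ≤ i * 16 * (D ^ 2 / r ^ 2 * (2 + 8 * r ^ 2 * x ^ 2)) := by
    gcongr
  have e33 : i * 16 * (D ^ 2 / r ^ 2 * (2 + 8 * r ^ 2 * x ^ 2)) ≤ 1 * 16 * (D ^ 2 / r ^ 2 * (2 + 8 * r ^ 2 * x ^ 2)) := by
    gcongr
  have e4 : 1 * 16 * (D ^ 2 / r ^ 2 * (2 + 8 * r ^ 2 * x ^ 2)) =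
      32 * D ^ 2 / r ^ 2 + 128 * D ^ 2 * x ^ 2 := by field_simp; ring
  have e6 : D ^ 2 * x ^ 2 ≤ D ^ 2 * (2 * r * (x ^ 2 * W)) := by gcongr
  have e7 : 96 * D ^ 2 / r ^ 2 = 3 * (32 * D ^ 2 / r ^ 2) := by ring
  nlinarith

lemma real3 {x y W T m i S r σ D s k v : ℝ} (hx : 0 ≤ x) (hy : 0 ≤ y) (hW : 0 ≤ W) (hT : 0 ≤ T) (hT2 : T ≤ 2 * r)
    (hTW : T * W ≤ 2) (hσ : 0 < σ) (hσr : σ ^ 2 = r)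
    (hm0 : 0 ≤ m) (hm : m ≤ 1 + T * x) (hi : i = 0 ∨ i = 1) (hS0 : 0 ≤ S) (hS1 : S ≤ 1)
    (hr : 0 < r) (hr1 : r ≤ 1) (hrW : 1 ≤ 2 * r * W) (hD : 0 ≤ D) (hiW : i * (r * W) ≤ i * 2)
    (hk0 : 0 ≤ k) (hk : k ≤ m) (hs0 : 0 ≤ s) (hv0 : 0 ≤ v) (hv : v ≤ W)
    (hs : s ≤ i * (D / r * m) + 2 * x + 2 * T * y) :
    S * k * s * v ≤ 4 * D / r ^ 2 * (i * S) + (8 * D + 17) * σ * (x ^ 2 * W) + 6 * σ * y ^ 2 + 1 / σ * W + 2 / r := by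
  have hm2 : m ^ 2 ≤ 2 + 8 * r ^ 2 * x ^ 2 := by
    have h1 : m ^ 2 ≤ (1 + T * x) ^ 2 := pow_le_pow_left₀ hm0 hm 2
    have h2 : (T * x) ^ 2 ≤ (2 * r * x) ^ 2 := pow_le_pow_left₀ (by positivity) (by gcongr) 2
    nlinarith [sq_nonneg (1 - T * x)]
  have hσ1 : σ ≤ 1 := by nlinarith
  have hrσ : r ≤ σ := by nlinarith
  have hx2 : x ^ 2 ≤ 2 * r * (x ^ 2 * W) := by nlinarith [sq_nonneg x]
  have hi0 : 0 ≤ i := by rcases hi with h | h <;> simp [h]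
  have hi1 : i ≤ 1 := by rcases hi with h | h <;> simp [h]
  have e1 : S * k * s * v ≤ S * m * (i * (D / r * m) + 2 * x + 2 * T * y) * W := by gcongr
  have e2 : S * m * (i * (D / r * m) + 2 * x + 2 * T * y) * W =
    S * (i * W) * (D / r * m ^ 2) + S * (m * (2 * x + 2 * T * y) * W) := by ring
  have e3 : S * (m * (2 * x + 2 * T * y) * W) ≤ 1 * ((1 + T * x) * (2 * x + 2 * T * y) * W) := by gcongr
  have e4 : S * (i * W) * (D / r * m ^ 2) ≤ S * (i * W) * (D / r * (2 + 8 * r ^ 2 * x ^ 2)) := by gcongr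
  have e5 : S * (i * W) * (D / r * (2 + 8 * r ^ 2 * x ^ 2)) =
     2 * D / r ^ 2 * S * (i * (r * W)) + S * i * (8 * D * r * (x ^ 2 * W)) := by field_simp
  have e6 : 2 * D / r ^ 2 * S * (i * (r * W)) ≤ 2 * D / r ^ 2 * S * (i * 2) := by gcongr
  have e7 : S * i * (8 * D * r * (x ^ 2 * W)) ≤ 1 * 1 * (8 * D * σ * (x ^ 2 * W)) := by gcongr
  have e8 : 2 * x * W ≤ 1 / σ * W + σ * (x ^ 2 * W) := by
    have h1 : 2 * x ≤ 1 / σ + σ * x ^ 2 := by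
      have : 0 ≤ (1 / σ) * (1 - σ * x) ^ 2 := by positivity
      have h2 : (1 / σ) * (1 - σ * x) ^ 2 = 1 / σ - 2 * x + σ * x ^ 2 := by field_simp; ring
      linarith
    nlinarith
  have h1W : 2 * r * (x ^ 2 * W) ≤ 2 * σ * (x ^ 2 * W) := by gcongr
  have e9 : 2 * T * y * W ≤ 2 / r + 2 * σ * y ^ 2 := by
    have h1 : 4 * y ≤ 2 / r + 2 * r * y ^ 2 := by
      have : 0 ≤ (2 / r) * (1 - r * y) ^ 2 := by positivity
      have h2 : (2 / r) * (1 - r * y) ^ 2 = 2 / r - 4 * y + 2 * r * y ^ 2 := by field_simp; ring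
      linarith
    have h2 : T * W * (2 * y) ≤ 2 * (2 * y) := by gcongr
    have h3 : 2 * r * y ^ 2 ≤ 2 * σ * y ^ 2 := by gcongr
    linarith
  have e10 : T * x * (2 * x) * W ≤ 4 * (2 * σ * (x ^ 2 * W)) := by
    have h1 : T * W * (2 * x ^ 2) ≤ 2 * (2 * x ^ 2) := by gcongr
    linarith
  have e11 : T * x * (2 * T * y) * W ≤ 8 * σ * (x ^ 2 * W) + 4 * σ * y ^ 2 := by
    have h1 : T * W * (2 * T * (x * y)) ≤ 2 * (2 * (2 * r) * (x * y)) := by gcongr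
    have h3 : 0 ≤ 4 * r * (x - y) ^ 2 := by positivity
    have h4 : 4 * r * y ^ 2 ≤ 4 * σ * y ^ 2 := by gcongr
    have h5 : 4 * r * x ^ 2 ≤ 4 * 1 * x ^ 2 := by gcongr
    linarith
  have e12 : 4 * D / r ^ 2 * (i * S) = 2 * D / r ^ 2 * S * (i * 2) := by ring
  have e13 : (1 + T * x) * (2 * x + 2 * T * y) * W = 2 * x * W + 2 * T * y * W + T * x * (2 * x) * W
    + T * x * (2 * T * y) * W := by ring
  linarith

noncomputable def mm (z : ℂ) (h : ℂ → ℂ) (t : ℂ) : ℂ := 1 - (t - z) * h t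

noncomputable def kk (w z : ℂ) (r : ℝ) (h : ℂ → ℂ) (t : ℂ) : ℂ := ((kap (r / 2) (t - w) : ℝ) : ℂ) * mm z h t

lemma mm_contDiff (z : ℂ) {h : ℂ → ℂ} (hh : ContDiff ℝ ∞ h) : ContDiff ℝ ∞ (mm z h) :=
  contDiff_const.sub ((sub_contDiff z).mul hh)

lemma kk_contDiff (w z : ℂ) (r : ℝ) {h : ℂ → ℂ} (hh : ContDiff ℝ ∞ h) : ContDiff ℝ ∞ (kk w z r h) :=
  (ofReal_contDiff ((kap_contDiff (r / 2)).comp (sub_contDiff w))).mul (mm_contDiff z hh)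

lemma kk_tsupport (w z : ℂ) {r : ℝ} (hr : 0 < r) (h : ℂ → ℂ) : tsupport (kk w z r h) ⊆ closedBall w r := by
  have h1 := tsupport_kap_sub (half_pos hr) w
  rw [show 2 * (r / 2) = r by ring] at h1
  exact (tsupport_mul_subset_left (f := fun t : ℂ => ((kap (r / 2) (t - w) : ℝ) : ℂ)) (g := mm z h)).trans h1

lemma kk_supp (w z : ℂ) {r : ℝ} (hr : 0 < r) (h : ℂ → ℂ) : HasCompactSupport (kk w z r h) :=
  (isCompact_closedBall w r).of_isClosed_subset (isClosed_tsupport _) (kk_tsupport w z hr h)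

lemma kk_norm_le (w z : ℂ) (r : ℝ) (h : ℂ → ℂ) (t : ℂ) : ‖kk w z r h t‖ ≤ ‖mm z h t‖ := by
  unfold kk
  rw [norm_mul, Complex.norm_real, Real.norm_of_nonneg (kap_nonneg _ _)]
  exact mul_le_of_le_one_left (norm_nonneg _) (kap_le_one _ _)

lemma grad_kk : ∃ D : ℝ, 0 < D ∧ ∀ (w z : ℂ) (r : ℝ) (h : ℂ → ℂ), 0 < r → ContDiff ℝ ∞ h → ∀ t,
    Real.sqrt (gsq (kk w z r h) t) ≤ (Ann w r).indicator (fun _ => (1:ℝ)) t * (D / r * ‖mm z h t‖) + 2 * ‖h t‖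
      + 2 * ‖t - z‖ * Real.sqrt (gsq h t) := by
  obtain ⟨C, hC, hb⟩ := chi_bound
  refine ⟨8 * C, by positivity, fun w z r h hr hh t => ?_⟩
  have sθ : ContDiff ℝ ∞ (fun t : ℂ => ((kap (r / 2) (t - w) : ℝ) : ℂ)) :=
    ofReal_contDiff ((kap_contDiff (r / 2)).comp (sub_contDiff w))
  have sm := mm_contDiff z hh
  have h1 := pdx_clm Complex.ofRealCLM (kap_contDiff (r / 2)) (t - w)
  have h2 := pdy_clm Complex.ofRealCLM (kap_contDiff (r / 2)) (t - w)
  simp only [Complex.ofRealCLM_apply] at h1 h2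
  have tx : pdx (fun t : ℂ => ((kap (r / 2) (t - w) : ℝ) : ℂ)) t = ((-chi (r/2) (t-w) * (t-w).re : ℝ) : ℂ) := by
    rw [pdx_trans (fun s : ℂ => ((kap (r / 2) s : ℝ) : ℂ)), h1, pdx_kap]
  have ty : pdy (fun t : ℂ => ((kap (r / 2) (t - w) : ℝ) : ℂ)) t = ((-chi (r/2) (t-w) * (t-w).im : ℝ) : ℂ) := by
    rw [pdy_trans (fun s : ℂ => ((kap (r / 2) s : ℝ) : ℂ)), h2, pdy_kap]
  have mx : pdx (mm z h) t = -(h t + (t - z) * pdx h t) := by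
    unfold mm
    rw [pdx_sub contDiff_const ((sub_contDiff z).mul hh), pdx_mul (sub_contDiff z) hh, pdx_idsub]
    simp [pdx]
  have my : pdy (mm z h) t = -(Complex.I * h t + (t - z) * pdy h t) := by
    unfold mm
    rw [pdy_sub contDiff_const ((sub_contDiff z).mul hh), pdy_mul (sub_contDiff z) hh, pdy_idsub]
    simp [pdy]
  set i := (Ann w r).indicator (fun _ => (1:ℝ)) t with hi
  have hchi : chi (r/2) (t-w) * ‖t - w‖ ≤ i * (4 * C / r) := by
    by_cases ht : t ∈ Ann w r
    · rw [hi, indicator_of_mem ht]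
      have := hb (r / 2) (t - w)
      have h3 : chi (r/2) (t-w) * ‖t - w‖ ≤ C / (r/2)^2 * r :=
        mul_le_mul this ht.2 (norm_nonneg _) (by positivity)
      refine h3.trans (le_of_eq ?_)
      field_simp; norm_num
    · rw [hi, indicator_of_notMem ht]
      rcases lt_or_ge ‖t - w‖ (r/2) with h3 | h3
      · rw [chi_eq_zero_in (half_pos hr) h3]; simp
      · rcases lt_or_ge r ‖t - w‖ with h4 | h4
        · rw [chi_eq_zero_out (half_pos hr) (by linarith)]; simp
        · exact absurd ⟨h3, h4⟩ ht
  have hk1 : ‖((kap (r / 2) (t - w) : ℝ) : ℂ)‖ ≤ 1 := by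
    rw [Complex.norm_real, Real.norm_of_nonneg (kap_nonneg _ _)]; exact kap_le_one _ _
  have c0 := chi_nonneg (r/2) (t - w)
  have gx : ‖pdx h t‖ ≤ Real.sqrt (gsq h t) := Real.le_sqrt_of_sq_le (by unfold gsq; nlinarith [sq_nonneg ‖pdy h t‖])
  have gy : ‖pdy h t‖ ≤ Real.sqrt (gsq h t) := Real.le_sqrt_of_sq_le (by unfold gsq; nlinarith [sq_nonneg ‖pdx h t‖])
  have gen : ∀ (a : ℝ) (p q : ℂ), |a| ≤ ‖t - w‖ → ‖p‖ = ‖h t‖ → ‖q‖ ≤ Real.sqrt (gsq h t) →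
      ‖((-chi (r/2) (t-w) * a : ℝ) : ℂ) * mm z h t + ((kap (r / 2) (t - w) : ℝ) : ℂ) * (-(p + (t - z) * q))‖ ≤
       i * (4 * C / r) * ‖mm z h t‖ + ‖h t‖ + ‖t - z‖ * Real.sqrt (gsq h t) := by
    intro a p q ha hp hq
    refine (norm_add_le _ _).trans ?_
    rw [norm_mul, norm_mul, Complex.norm_real, norm_neg, Real.norm_eq_abs, abs_mul, abs_neg, abs_of_nonneg c0]
    have e1 : chi (r/2) (t-w) * |a| * ‖mm z h t‖ ≤ i * (4 * C / r) * ‖mm z h t‖ := by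
      apply mul_le_mul_of_nonneg_right _ (norm_nonneg _)
      exact (mul_le_mul_of_nonneg_left ha c0).trans hchi
    have e2 : ‖((kap (r / 2) (t - w) : ℝ) : ℂ)‖ * ‖p + (t - z) * q‖ ≤ ‖h t‖ + ‖t - z‖ * Real.sqrt (gsq h t) := by
      refine (mul_le_of_le_one_left (norm_nonneg _) hk1).trans ((norm_add_le _ _).trans ?_)
      rw [hp, norm_mul]; gcongr
    linarith
  have ex : ‖pdx (kk w z r h) t‖ ≤ i * (4 * C / r) * ‖mm z h t‖ + ‖h t‖ + ‖t - z‖ * Real.sqrt (gsq h t) := by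
    unfold kk
    rw [pdx_mul sθ sm, tx, mx]
    exact gen _ _ _ (Complex.abs_re_le_norm _) rfl gx
  have ey : ‖pdy (kk w z r h) t‖ ≤ i * (4 * C / r) * ‖mm z h t‖ + ‖h t‖ + ‖t - z‖ * Real.sqrt (gsq h t) := by
    unfold kk
    rw [pdy_mul sθ sm, ty, my]
    exact gen _ _ _ (Complex.abs_im_le_norm _) (by simp) gy
  have hs : Real.sqrt (gsq (kk w z r h) t) ≤ ‖pdx (kk w z r h) t‖ + ‖pdy (kk w z r h) t‖ := by
    apply Real.sqrt_le_iff.2 ⟨by positivity, ?_⟩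
    unfold gsq
    nlinarith [mul_nonneg (norm_nonneg (pdx (kk w z r h) t)) (norm_nonneg (pdy (kk w z r h) t))]
  have e0 : i * (8 * C / r * ‖mm z h t‖) = 2 * (i * (4 * C / r) * ‖mm z h t‖) := by ring
  rw [e0]; linarith

lemma gsq_eq_zero {k : ℂ → ℂ} {t : ℂ} (ht : t ∉ tsupport k) : gsq k t = 0 := by
  have h : fderiv ℝ k t = 0 := by
    by_contra h'
    exact ht (support_fderiv_subset ℝ (by simpa using h'))
  simp [gsq, pdx, pdy, h]

lemma lower_est {w z : ℂ} {ρ r N : ℝ} {h : ℂ → ℂ} {S : ℂ → ℝ} (hρ : 0 < ρ) (hr : 2 * ρ ≤ r)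
    (hz : ‖z - w‖ ≤ ρ) (hh : ContDiff ℝ ∞ h) (hc : HasCompactSupport h) (hS : ContDiff ℝ ∞ S)
    (hS0 : ∀ t, 0 ≤ S t) (hS2 : ∀ t ∈ tsupport (kk w z r h), ‖t - w‖ ≤ ρ → 1 / 2 ≤ S t)
    (hN2 : ∫ t, Complex.normSq (h t) * WW w ρ t ≤ N) :
    Real.pi / 8 - 2 * r * N ≤ ∫ t, S t * Complex.normSq (kk w z r h t) * (- lap (LL w ρ r) t) := by
  have hr0 : 0 < r := by linarith
  have cW := (WW_contDiff w hρ).continuous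
  have cH := (nsq_contDiff hh).continuous
  have sk := kk_contDiff w z r hh
  simp only [lap_LL w hρ]
  have cF : Continuous (fun t => S t * Complex.normSq (kk w z r h t) * (2 * ρ ^ 2 * WW w ρ t ^ 4)) :=
    (hS.continuous.mul (nsq_contDiff sk).continuous).mul (continuous_const.mul (cW.pow 4))
  have iF : Integrable (fun t => S t * Complex.normSq (kk w z r h t) * (2 * ρ ^ 2 * WW w ρ t ^ 4)) :=
    cF.integrable_of_hasCompactSupport ((nsq_supp (kk_supp w z hr0 h)).mul_left.mul_right)
  have hF0 : ∀ t, 0 ≤ S t * Complex.normSq (kk w z r h t) * (2 * ρ ^ 2 * WW w ρ t ^ 4) := fun t =>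
    mul_nonneg (mul_nonneg (hS0 t) (Complex.normSq_nonneg _)) (by positivity)
  refine le_trans ?_ (setIntegral_le_integral (s := closedBall w ρ) iF (ae_of_all _ hF0))
  have K := isCompact_closedBall w ρ
  have iHW : Integrable (fun t => Complex.normSq (h t) * WW w ρ t) :=
    (cH.mul cW).integrable_of_hasCompactSupport (nsq_supp hc).mul_right
  have j1 : IntegrableOn (fun _ : ℂ => 1 / (8 * ρ ^ 2)) (closedBall w ρ) :=
    continuous_const.continuousOn.integrableOn_compact K
  have j2 : IntegrableOn (fun t => 2 * r * (Complex.normSq (h t) * WW w ρ t)) (closedBall w ρ) :=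
    (iHW.const_mul _).integrableOn
  have key : ∀ t ∈ closedBall w ρ, 1 / (8 * ρ ^ 2) - 2 * r * (Complex.normSq (h t) * WW w ρ t) ≤
      S t * Complex.normSq (kk w z r h t) * (2 * ρ ^ 2 * WW w ρ t ^ 4) := by
    intro t ht
    rw [mem_closedBall, dist_eq_norm] at ht
    have hk : kk w z r h t = mm z h t := by
      unfold kk; rw [kap_eq_one (half_pos hr0) (by linarith)]; simp
    have h1 := one_le_rWW w hρ (by linarith : ρ ≤ r) (t := t) (by linarith)
    have hT : ‖t - z‖ ≤ 2 * ρ := by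
      have : ‖t - z‖ ≤ ‖t - w‖ + ‖z - w‖ := by
        have := norm_sub_le (t - w) (z - w); simpa using this
      linarith
    set x := ‖h t‖ with hx
    have hx0 : 0 ≤ x := norm_nonneg _
    have hm : 1 - 2 * ρ * x ≤ ‖mm z h t‖ := by
      have h3 := norm_sub_norm_le (1 : ℂ) ((t - z) * h t)
      rw [norm_one, norm_mul] at h3
      have : ‖t - z‖ * ‖h t‖ ≤ 2 * ρ * x := by rw [hx]; gcongr
      unfold mm; linarith
    have hm2 : 1 / 2 - 4 * ρ ^ 2 * x ^ 2 ≤ ‖mm z h t‖ ^ 2 := by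
      rcases le_or_gt (2 * ρ * x) 1 with h4 | h4
      · have := pow_le_pow_left₀ (by linarith) hm 2
        nlinarith [sq_nonneg (1 - 4 * ρ * x)]
      · nlinarith [sq_nonneg ‖mm z h t‖]
    have hN : Complex.normSq (h t) = x ^ 2 := Complex.normSq_eq_norm_sq _
    have hxW : x ^ 2 ≤ 2 * r * (x ^ 2 * WW w ρ t) := by nlinarith [sq_nonneg x]
    have hQ : 1 / (4 * ρ ^ 2) * ‖mm z h t‖ ^ 2 ≤ S t * Complex.normSq (kk w z r h t) * (2 * ρ ^ 2 * WW w ρ t ^ 4) := by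
      rw [Complex.normSq_eq_norm_sq, hk]
      by_cases hts : t ∈ tsupport (kk w z r h)
      · have hs := hS2 t hts ht
        have hW2 : 1 / (2 * ρ ^ 2) ≤ WW w ρ t ^ 2 := by
          rw [← WW_sq' w hρ, ← one_div]
          apply one_div_le_one_div_of_le (nn_pos w hρ t)
          rw [nn_eq']; nlinarith [norm_nonneg (t - w)]
        have hW4 : 1 / (4 * ρ ^ 4) ≤ WW w ρ t ^ 4 := by
          have := pow_le_pow_left₀ (by positivity) hW2 2
          calc 1 / (4 * ρ ^ 4) = (1 / (2 * ρ ^ 2)) ^ 2 := by field_simp; norm_num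
            _ ≤ _ := this
            _ = _ := by ring
        calc 1 / (4 * ρ ^ 2) * ‖mm z h t‖ ^ 2 = 1 / 2 * ‖mm z h t‖ ^ 2 * (2 * ρ ^ 2 * (1 / (4 * ρ ^ 4))) := by
              field_simp
          _ ≤ _ := by gcongr
      · have : mm z h t = 0 := by rw [← hk]; exact image_eq_zero_of_notMem_tsupport hts
        rw [this]; simp
    have h5 : 1 / (4 * ρ ^ 2) * (1 / 2 - 4 * ρ ^ 2 * x ^ 2) ≤ 1 / (4 * ρ ^ 2) * ‖mm z h t‖ ^ 2 := by gcongr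
    have h6 : 1 / (4 * ρ ^ 2) * (1 / 2 - 4 * ρ ^ 2 * x ^ 2) = 1 / (8 * ρ ^ 2) - x ^ 2 := by field_simp; ring
    rw [hN]; linarith
  have h1 := setIntegral_mono_on (j1.sub j2) iF.integrableOn measurableSet_closedBall key
  refine le_trans ?_ h1
  have e1 : ∫ t in closedBall w ρ, (1 / (8 * ρ ^ 2) - 2 * r * (Complex.normSq (h t) * WW w ρ t)) =
      Real.pi / 8 - 2 * r * ∫ t in closedBall w ρ, Complex.normSq (h t) * WW w ρ t := by
    rw [integral_sub j1 j2, integral_const_mul, setIntegral_const, vol_ball_real w hρ, smul_eq_mul]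
    congr 1; field_simp
  refine le_trans ?_ (le_of_eq e1.symm)
  have f2 : ∫ t in closedBall w ρ, (Complex.normSq (h t) * WW w ρ t) ≤ N :=
    (setIntegral_le_integral iHW (ae_of_all _ fun t => mul_nonneg (Complex.normSq_nonneg _) (WW_pos w hρ t).le)).trans hN2
  gcongr

set_option maxHeartbeats 1600000 in
lemma core_estimate : ∃ c0 : ℝ, 0 < c0 ∧ ∀ (w z : ℂ) (ρ r ε N : ℝ) (h : ℂ → ℂ) (S : ℂ → ℝ), 0 < ρ → 2 * ρ ≤ r →
    r ≤ 1 → ‖z - w‖ ≤ ρ → 0 ≤ ε → 0 ≤ N → ContDiff ℝ ∞ h → HasCompactSupport h → ContDiff ℝ ∞ S →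
    (∀ t, 0 ≤ S t) → (∀ t, S t ≤ 1) → (∀ t ∈ tsupport (kk w z r h), 0 ≤ lap S t) →
    (∀ t ∈ tsupport (kk w z r h), ‖t - w‖ ≤ ρ → 1 / 2 ≤ S t) →
    ∫ t in Ann w r, S t ≤ ε → ∫ t, gsq h t ≤ N → ∫ t, Complex.normSq (h t) * WW w ρ t ≤ N →
    c0 ≤ ε / r ^ 2 + Real.sqrt r * (1 + N) := by
  obtain ⟨D, hD, hgrad⟩ := grad_kk
  have hmZ := mZ_pos
  have hpi := Real.pi_pos
  set C3 : ℝ := 768 * D ^ 2 + 480 + 96 * Real.pi * D ^ 2 with hC3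
  have hC3p : 0 < C3 := by positivity
  set K : ℝ := 3 + 32 * C3 * (48 * D ^ 2 + 72) + 2 * (8 * D + 23 + 2 * mZ + 2 * Real.pi) with hK
  have hKp : 0 < K := by positivity
  refine ⟨1 / (4 * K), by positivity, ?_⟩
  intro w z ρ r ε N h S hρ hr2 hr1 hz hε0 hN0 hh hc hS hS0 hS1 hlap hS2 hε hN1 hN2
  have hr : 0 < r := by linarith
  have hρr : ρ ≤ r := by linarith
  set σ := Real.sqrt r with hσ
  have hσ0 : 0 < σ := Real.sqrt_pos.2 hr
  have hσr : σ ^ 2 = r := Real.sq_sqrt hr.le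
  have hσ1 : σ ≤ 1 := by nlinarith
  have hrσ : r ≤ σ := by nlinarith
  set k := kk w z r h with hk
  have sk : ContDiff ℝ ∞ k := kk_contDiff w z r hh
  have ck : HasCompactSupport k := kk_supp w z hr h
  have hkB := kk_tsupport w z hr h
  have sL := LL_contDiff w hρ r
  have cW := (WW_contDiff w hρ).continuous
  have cg := gsq_continuous sk
  have hgz : ∀ t, t ∉ closedBall w r → gsq k t = 0 := fun t ht => gsq_eq_zero fun h' => ht (hkB h')
  -- pointwise data
  have hT : ∀ t ∈ closedBall w r, ‖t - z‖ ≤ 2 * r ∧ ‖t - z‖ * WW w ρ t ≤ 2 := by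
    intro t ht
    rw [mem_closedBall, dist_eq_norm] at ht
    have h1 : ‖t - z‖ ≤ ‖t - w‖ + ‖z - w‖ := by
      have := norm_sub_le (t - w) (z - w); simpa using this
    refine ⟨by linarith, ?_⟩
    have h2 := normsub_WW_le w hρ t
    have h3 := rho_WW_le w hρ t
    have h4 : ‖t - z‖ * WW w ρ t ≤ (‖t - w‖ + ρ) * WW w ρ t :=
      mul_le_mul_of_nonneg_right (by linarith) (WW_pos w hρ t).le
    linarith
  have hrW : ∀ t ∈ closedBall w r, 1 ≤ 2 * r * WW w ρ t := fun t ht =>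
    one_le_rWW w hρ hρr (by rwa [mem_closedBall, dist_eq_norm] at ht)
  have hm : ∀ t, ‖mm z h t‖ ≤ 1 + ‖t - z‖ * ‖h t‖ := fun t => by
    unfold mm; refine (norm_sub_le _ _).trans ?_; rw [norm_one, norm_mul]
  have hi : ∀ t, (Ann w r).indicator (fun _ => (1:ℝ)) t = 0 ∨ (Ann w r).indicator (fun _ => (1:ℝ)) t = 1 := by
    intro t; by_cases ht : t ∈ Ann w r
    · right; exact indicator_of_mem ht _
    · left; exact indicator_of_notMem ht _
  have hiS : ∀ t, (Ann w r).indicator S t = (Ann w r).indicator (fun _ => (1:ℝ)) t * S t := by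
    intro t; by_cases ht : t ∈ Ann w r
    · simp [indicator_of_mem ht]
    · simp [indicator_of_notMem ht]
  have hgq : ∀ t, gsq k t ≤ ((Ann w r).indicator (fun _ => (1:ℝ)) t * (D / r * ‖mm z h t‖) + 2 * ‖h t‖
      + 2 * ‖t - z‖ * Real.sqrt (gsq h t)) ^ 2 := fun t => by
    have := pow_le_pow_left₀ (Real.sqrt_nonneg _) (hgrad w z r h hr hh t) 2
    rwa [Real.sq_sqrt (gsq_nonneg _ _)] at this
  have hG : ∀ t, Real.sqrt (gsq h t) ^ 2 = gsq h t := fun t => Real.sq_sqrt (gsq_nonneg _ _)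
  have hH : ∀ t, Complex.normSq (h t) = ‖h t‖ ^ 2 := fun t => Complex.normSq_eq_norm_sq _
  have hAnn : ∀ t, t ∈ Ann w r → r * WW w ρ t ≤ 2 ∧ LL w ρ r t ^ 2 ≤ 16 := fun t ht =>
    LL_sq_le' w hρ hρr ht.2 ht.1
  -- X1
  have X1 : ∫ t, S t ^ 2 * gsq k t ≤ 6 * D ^ 2 / r ^ 2 * ε + (48 * D ^ 2 + 24) * r * N + 48 * r * N
      + 0 * (2 * mZ * r) + 0 * (Real.pi * r ^ 2) := by
    apply master_bound hρ hr hh hc hS.continuous hε hN1 hN2 (f := fun t => S t ^ 2 * gsq k t) ((hS.continuous.pow 2).mul cg)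
      (fun t ht => by simp only [hgz t ht, mul_zero]) (by positivity) (by positivity) (by positivity) le_rfl
    intro t ht
    have := real1 (norm_nonneg (h t)) (WW_pos w hρ t).le (norm_nonneg _) (hT t ht).1 (norm_nonneg _) (hm t) (hi t)
      (hS0 t) (hS1 t) hr hr1 (hrW t ht) hD.le (hgq t) (gsq_nonneg _ _)
    rw [hG] at this
    rw [hiS, hH]; linarith
  have X2 : ∫ t, LL w ρ r t ^ 2 * gsq k t ≤ 0 * ε + (768 * D ^ 2 + 96) * r * N + 384 * r * N
      + 0 * (2 * mZ * r) + 96 * D ^ 2 / r ^ 2 * (Real.pi * r ^ 2) := by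
    apply master_bound hρ hr hh hc hS.continuous hε hN1 hN2 (f := fun t => LL w ρ r t ^ 2 * gsq k t) ((sL.continuous.pow 2).mul cg)
      (fun t ht => by simp only [hgz t ht, mul_zero]) le_rfl (by positivity) (by positivity) le_rfl
    intro t ht
    have htn := ht
    rw [mem_closedBall, dist_eq_norm] at htn
    have := real2 (norm_nonneg (h t)) (WW_pos w hρ t).le (norm_nonneg _) (hT t ht).1 (hT t ht).2
      (norm_nonneg _) (hm t) (hi t) hr hr1 (hrW t ht) hD.le (sq_nonneg (LL w ρ r t)) (LL_sq_le w hρ hρr htn).2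
      (by
        by_cases hA : t ∈ Ann w r
        · rw [indicator_of_mem hA]; linarith [(hAnn t hA).2]
        · rw [indicator_of_notMem hA]; simp) (hgq t)
    rw [hG] at this
    rw [hH]; linarith
  have X3 : ∫ t, S t * ‖k t‖ * Real.sqrt (gsq k t) * Real.sqrt (gsr (LL w ρ r) t) ≤
      4 * D / r ^ 2 * ε + (8 * D + 17) * σ * N + 6 * σ * N
      + 1 / σ * (2 * mZ * r) + 2 / r * (Real.pi * r ^ 2) := by
    apply master_bound hρ hr hh hc hS.continuous hε hN1 hN2
      (f := fun t => S t * ‖k t‖ * Real.sqrt (gsq k t) * Real.sqrt (gsr (LL w ρ r) t))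
      (((hS.continuous.mul sk.continuous.norm).mul cg.sqrt).mul (gsr_continuous sL).sqrt)
      (fun t ht => by simp [hgz t ht]) (by positivity) (by positivity) (by positivity) (by positivity)
    intro t ht
    have := real3 (norm_nonneg (h t)) (Real.sqrt_nonneg _) (WW_pos w hρ t).le (norm_nonneg _) (hT t ht).1 (hT t ht).2
      hσ0 hσr (norm_nonneg _) (hm t) (hi t) (hS0 t) (hS1 t) hr hr1 (hrW t ht) hD.le
      (by
        by_cases hA : t ∈ Ann w r
        · rw [indicator_of_mem hA]; linarith [(hAnn t hA).1]
        · rw [indicator_of_notMem hA]; simp)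
      (norm_nonneg _) (kk_norm_le w z r h t) (Real.sqrt_nonneg _) (Real.sqrt_nonneg _) (gsr_LL w hρ r t)
      (hgrad w z r h hr hh t)
    rw [hG] at this
    rw [hiS, hH]; linarith
  have hL0 : ∀ t ∈ tsupport k, 0 ≤ LL w ρ r t := fun t ht =>
    (LL_sq_le w hρ hρr (by have := hkB ht; rwa [mem_closedBall, dist_eq_norm] at this)).1
  have core := core_ineq sk ck hS sL hS0 hlap hL0 (α := 1 / (8 * C3)) (by positivity)
  have low := lower_est hρ hr2 hz hh hc hS hS0 hS2 hN2
  have hα : 4 / (1 / (8 * C3)) = 32 * C3 := by field_simp; norm_num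
  rw [hα] at core
  set e := ε / r ^ 2 with he
  have he0 : 0 ≤ e := by positivity
  have hrN : r * N ≤ σ * N := by gcongr
  have hσN : 0 ≤ σ * N := by positivity
  have Y1 : ∫ t, S t ^ 2 * gsq k t ≤ (48 * D ^ 2 + 72) * (e + σ * (1 + N)) := by
    refine X1.trans ?_
    have : 6 * D ^ 2 / r ^ 2 * ε = 6 * D ^ 2 * e := by rw [he]; ring
    rw [this]
    nlinarith [mul_nonneg (sq_nonneg D) he0, mul_nonneg (sq_nonneg D) (sub_nonneg.2 hrN), mul_nonneg (sq_nonneg D) hσ0.le]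
  have Y2 : 1 / (8 * C3) * ∫ t, LL w ρ r t ^ 2 * gsq k t ≤ 1 / 8 + 1 / 8 * (σ * N) := by
    have h1 : ∫ t, LL w ρ r t ^ 2 * gsq k t ≤ C3 * (1 + r * N) := by
      refine X2.trans ?_
      have : 96 * D ^ 2 / r ^ 2 * (Real.pi * r ^ 2) = 96 * Real.pi * D ^ 2 := by field_simp
      rw [this, hC3]
      have : 0 ≤ Real.pi * D ^ 2 * (r * N) := by positivity
      nlinarith [sq_nonneg D]
    have h2 : 1 / (8 * C3) * ∫ t, LL w ρ r t ^ 2 * gsq k t ≤ 1 / (8 * C3) * (C3 * (1 + r * N)) := by gcongr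
    have h3 : 1 / (8 * C3) * (C3 * (1 + r * N)) = 1 / 8 * (1 + r * N) := by field_simp
    linarith
  have Y3 : ∫ t, S t * ‖k t‖ * Real.sqrt (gsq k t) * Real.sqrt (gsr (LL w ρ r) t) ≤
      (8 * D + 23 + 2 * mZ + 2 * Real.pi) * (e + σ * (1 + N)) := by
    refine X3.trans ?_
    have h1 : 4 * D / r ^ 2 * ε = 4 * D * e := by rw [he]; ring
    have h2 : 1 / σ * (2 * mZ * r) = 2 * mZ * σ := by rw [← hσr]; field_simp
    have h3 : 2 / r * (Real.pi * r ^ 2) = 2 * Real.pi * r := by field_simp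
    rw [h1, h2, h3]
    have h4 : Real.pi * r ≤ Real.pi * σ := by gcongr
    have := mul_nonneg hD.le he0
    have := mul_nonneg hmZ.le he0
    have := mul_nonneg hpi.le he0
    have := mul_nonneg hD.le hσ0.le
    have := mul_nonneg hmZ.le hσN
    have := mul_nonneg hpi.le hσN
    linarith
  have hτ : 0 ≤ e + σ * (1 + N) := by positivity
  have Z1 : 32 * C3 * ∫ t, S t ^ 2 * gsq k t ≤ 32 * C3 * ((48 * D ^ 2 + 72) * (e + σ * (1 + N))) := by gcongr
  have fin : 1 / 4 ≤ K * (e + σ * (1 + N)) := by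
    have hp3 := Real.pi_gt_three
    rw [hK]
    have h7 : 2 * r * N + 1 / 8 * (σ * N) ≤ 3 * (e + σ * (1 + N)) := by linarith
    linarith only [h7, Z1, Y2, Y3, core, low, hp3]
  rw [div_le_iff₀ (by positivity)]
  linarith

lemma param_deriv {F F' : ℝ → ℝ → ℝ} (hF : Continuous (Function.uncurry F)) (hF' : Continuous (Function.uncurry F'))
    (hd : ∀ R θ, HasDerivAt (fun R => F R θ) (F' R θ) R) (a b R : ℝ) :
    HasDerivAt (fun R => ∫ θ in a..b, F R θ) (∫ θ in a..b, F' R θ) R := by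
  have K : IsCompact (closedBall R 1 ×ˢ uIcc a b) := (isCompact_closedBall R 1).prod isCompact_uIcc
  obtain ⟨C, hC⟩ := K.exists_bound_of_continuousOn hF'.continuousOn
  have c1 : ∀ R, Continuous (F R) := fun R => hF.comp (Continuous.prodMk_right R)
  have c2 : ∀ R, Continuous (F' R) := fun R => hF'.comp (Continuous.prodMk_right R)
  refine (intervalIntegral.hasDerivAt_integral_of_dominated_loc_of_deriv_le (bound := fun _ => C)
    (closedBall_mem_nhds R one_pos) (Eventually.of_forall fun x => (c1 x).aestronglyMeasurable)
    ((c1 R).intervalIntegrable _ _) (c2 R).aestronglyMeasurable ?_ (by simp) ?_).2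
  · exact ae_of_all _ fun t ht x hx => hC (x, t) ⟨hx, uIoc_subset_uIcc ht⟩
  · exact ae_of_all _ fun t _ x _ => hd x t

noncomputable def cir (x : ℂ) (R θ : ℝ) : ℂ := x + R * Complex.exp (θ * Complex.I)

lemma cir_continuous (x : ℂ) : Continuous (Function.uncurry (cir x)) := by
  unfold cir Function.uncurry; fun_prop

lemma exp_eq (θ : ℝ) : Complex.exp (θ * Complex.I) = Real.cos θ • (1:ℂ) + Real.sin θ • Complex.I := by
  rw [Complex.exp_mul_I]; simp

lemma cir_deriv {f : ℂ → ℝ} (hf : ContDiff ℝ ∞ f) (x : ℂ) (R θ : ℝ) :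
    HasDerivAt (fun R => f (cir x R θ)) (pdx f (cir x R θ) * Real.cos θ + pdy f (cir x R θ) * Real.sin θ) R := by
  have h1 : HasDerivAt (fun R : ℝ => cir x R θ) (Complex.exp (θ * Complex.I)) R := by
    unfold cir
    have := ((Complex.ofRealCLM.hasDerivAt (x := R)).mul_const (Complex.exp (θ * Complex.I))).const_add x
    simpa using this
  have h2 := (smooth_diff hf (cir x R θ)).hasFDerivAt.comp_hasDerivAt R h1
  refine h2.congr_deriv ?_
  rw [exp_eq, map_add, map_smul, map_smul, smul_eq_mul, smul_eq_mul]
  unfold pdx pdy; ring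

lemma lap_nonneg_of_submean {S : ℂ → ℝ} (hS : ContDiff ℝ ∞ S) (x : ℂ) {d : ℝ} (hd : 0 < d)
    (h : ∀ R, 0 < R → R < d → 2 * Real.pi * S x ≤ ∫ θ in (0:ℝ)..(2 * Real.pi), S (cir x R θ)) : 0 ≤ lap S x := by
  by_contra hneg
  push Not at hneg
  have sx := pdx_contDiff hS
  have sy := pdy_contDiff hS
  have cc : ∀ {f : ℂ → ℝ}, ContDiff ℝ ∞ f → Continuous (fun p : ℝ × ℝ => f (cir x p.1 p.2)) := fun hf =>
    hf.continuous.comp (cir_continuous x)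
  set P : ℝ → ℝ → ℝ := fun R θ => pdx S (cir x R θ) * Real.cos θ + pdy S (cir x R θ) * Real.sin θ with hP
  set Q : ℝ → ℝ → ℝ := fun R θ => (pdx (pdx S) (cir x R θ) * Real.cos θ + pdy (pdx S) (cir x R θ) * Real.sin θ) * Real.cos θ
    + (pdx (pdy S) (cir x R θ) * Real.cos θ + pdy (pdy S) (cir x R θ) * Real.sin θ) * Real.sin θ with hQ
  have cos2 : Continuous (fun p : ℝ × ℝ => Real.cos p.2) := Real.continuous_cos.comp continuous_snd
  have sin2 : Continuous (fun p : ℝ × ℝ => Real.sin p.2) := Real.continuous_sin.comp continuous_snd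
  have cP : Continuous (Function.uncurry P) := ((cc sx).mul cos2).add ((cc sy).mul sin2)
  have cQ : Continuous (Function.uncurry Q) :=
    ((((cc (pdx_contDiff sx)).mul cos2).add ((cc (pdy_contDiff sx)).mul sin2)).mul cos2).add
    ((((cc (pdx_contDiff sy)).mul cos2).add ((cc (pdy_contDiff sy)).mul sin2)).mul sin2)
  have d1 := param_deriv (F := fun R θ => S (cir x R θ)) (F' := P) (cc hS) cP (fun R θ => cir_deriv hS x R θ) 0 (2 * Real.pi)
  have d2 := param_deriv (F := P) (F' := Q) cP cQ (fun R θ =>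
    ((cir_deriv sx x R θ).mul_const _).add ((cir_deriv sy x R θ).mul_const _)) 0 (2 * Real.pi)
  set G : ℝ → ℝ := fun R => ∫ θ in (0:ℝ)..(2 * Real.pi), S (cir x R θ) with hG
  set G' : ℝ → ℝ := fun R => ∫ θ in (0:ℝ)..(2 * Real.pi), P R θ with hG'
  have z0 : ∀ θ, cir x 0 θ = x := fun θ => by simp [cir]
  have G0 : G 0 = 2 * Real.pi * S x := by simp [hG, z0]
  have ic : ∀ {f : ℝ → ℝ}, Continuous f → IntervalIntegrable f volume 0 (2 * Real.pi) := fun hf => hf.intervalIntegrable _ _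
  have G'0 : G' 0 = 0 := by
    simp only [hG', hP, z0]
    rw [intervalIntegral.integral_add (ic (by fun_prop)) (ic (by fun_prop)), intervalIntegral.integral_const_mul,
      intervalIntegral.integral_const_mul, integral_cos, integral_sin]
    simp
  have Q0 : ∫ θ in (0:ℝ)..(2 * Real.pi), Q 0 θ = Real.pi * lap S x := by
    simp only [hQ, z0]
    have e : ∀ θ : ℝ, (pdx (pdx S) x * Real.cos θ + pdy (pdx S) x * Real.sin θ) * Real.cos θ
      + (pdx (pdy S) x * Real.cos θ + pdy (pdy S) x * Real.sin θ) * Real.sin θ =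
      pdx (pdx S) x * Real.cos θ ^ 2 + (pdy (pdx S) x + pdx (pdy S) x) * (Real.sin θ * Real.cos θ)
      + pdy (pdy S) x * Real.sin θ ^ 2 := fun θ => by ring
    simp only [e]
    rw [intervalIntegral.integral_add (ic (by fun_prop)) (ic (by fun_prop)),
      intervalIntegral.integral_add (ic (by fun_prop)) (ic (by fun_prop)), intervalIntegral.integral_const_mul,
      intervalIntegral.integral_const_mul, intervalIntegral.integral_const_mul, integral_cos_sq, integral_sin_sq,
      integral_sin_mul_cos₁]
    simp [lap]; ring
  have dG' := d2 0
  rw [Q0] at dG'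
  have hneg' : Real.pi * lap S x < 0 := mul_neg_of_pos_of_neg Real.pi_pos hneg
  have ev : ∀ᶠ R in 𝓝[>] (0:ℝ), G' R < 0 := by
    have h1 := (hasDerivAt_iff_tendsto_slope.1 dG').eventually (gt_mem_nhds hneg')
    have h2 : ∀ᶠ R in 𝓝[>] (0:ℝ), slope (fun R => ∫ θ in (0:ℝ)..(2 * Real.pi), P R θ) 0 R < 0 :=
      h1.filter_mono (nhdsWithin_mono _ (fun y hy => ne_of_gt hy))
    filter_upwards [h2, self_mem_nhdsWithin] with R h3 hR
    rw [slope_def_field] at h3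
    have hR' : (0:ℝ) < R := hR
    have h4 : G' R - G' 0 < 0 := by
      by_contra h5
      push Not at h5
      exact absurd h3 (not_lt.2 (div_nonneg h5 (by linarith)))
    rw [G'0] at h4; linarith
  obtain ⟨u, hu, hu2⟩ := mem_nhdsGT_iff_exists_Ioo_subset.1 ev
  have hu0 : (0:ℝ) < u := hu
  set R := min u d / 2 with hR
  have hm : 0 < min u d := lt_min hu0 hd
  have hR0 : 0 < R := by positivity
  have hRd : R < d := by have := min_le_right u d; linarith
  have hRu : R < u := by have := min_le_left u d; linarith
  obtain ⟨c, hc, hce⟩ := exists_hasDerivAt_eq_slope G G' hR0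
    (fun y _ => (d1 y).continuousAt.continuousWithinAt) (fun y _ => d1 y)
  have h5 : G' c < 0 := hu2 ⟨hc.1, hc.2.trans hRu⟩
  have h6 := h R hR0 hRd
  rw [hce, G0, sub_zero] at h5
  have : 0 ≤ (G R - 2 * Real.pi * S x) / R := div_nonneg (sub_nonneg.2 h6) hR0.le
  linarith

lemma exists_moll {δ : ℝ} (hδ : 0 < δ) : ∃ φ : ℂ → ℝ, ContDiff ℝ ∞ φ ∧ HasCompactSupport φ ∧ (∀ y, 0 ≤ φ y) ∧
    ∫ y, φ y = 1 ∧ ∀ y, y ∉ ball (0:ℂ) δ → φ y = 0 := by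
  let b : ContDiffBump (0:ℂ) := ⟨δ / 2, δ, half_pos hδ, half_lt_self hδ⟩
  refine ⟨b.normed volume, b.contDiff_normed, b.hasCompactSupport_normed, b.nonneg_normed, b.integral_normed, fun y hy => ?_⟩
  have := b.support_normed_eq (μ := volume)
  by_contra h
  exact hy (by rw [← this]; exact h)

noncomputable def mo (φ s : ℂ → ℝ) (x : ℂ) : ℝ := ∫ y, φ y * s (x - y)

lemma mo_eq (φ s : ℂ → ℝ) : mo φ s = convolution φ s (ContinuousLinearMap.lsmul ℝ ℝ) volume := by
  ext x; simp [mo, convolution_def]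

lemma loc_int {s : ℂ → ℝ} (hm : Measurable s) (h0 : ∀ x, 0 ≤ s x) (h1 : ∀ x, s x ≤ 1) : LocallyIntegrable s := by
  apply (locallyIntegrable_const (1:ℝ)).mono hm.aestronglyMeasurable
  exact ae_of_all _ fun x => by rw [Real.norm_of_nonneg (h0 x)]; simpa using h1 x

lemma mo_int {φ s : ℂ → ℝ} (hφ : ContDiff ℝ ∞ φ) (hc : HasCompactSupport φ) (hm : Measurable s)
    (h0 : ∀ x, 0 ≤ s x) (h1 : ∀ x, s x ≤ 1) (x : ℂ) : Integrable (fun y => φ y * s (x - y)) := by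
  apply (hφ.continuous.integrable_of_hasCompactSupport hc).mul_bdd (c := 1)
  · exact (hm.comp (measurable_const.sub measurable_id)).aestronglyMeasurable
  · exact ae_of_all _ fun y => by rw [Real.norm_of_nonneg (h0 _)]; exact h1 _

lemma mollify {s : ℂ → ℝ} (hm : Measurable s) (h0 : ∀ x, 0 ≤ s x) (h1 : ∀ x, s x ≤ 1) {Ω K : Set ℂ}
    (hΩ : IsOpen Ω) (hK : IsCompact K) (hKΩ : K ⊆ Ω)
    (hsub : ∀ c R, 0 < R → closedBall c R ⊆ Ω → 2 * Real.pi * s c ≤ ∫ θ in (0:ℝ)..(2 * Real.pi), s (cir c R θ))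
    {d : ℝ} (hd : 0 < d) :
    ∃ S : ℂ → ℝ, ContDiff ℝ ∞ S ∧ (∀ x, 0 ≤ S x) ∧ (∀ x, S x ≤ 1) ∧ (∀ x ∈ K, 0 ≤ lap S x) ∧
      (∀ x ∈ K, ∀ b : ℝ, (∀ y ∈ ball x d ∩ Ω, b ≤ s y) → b ≤ S x) ∧
      (∀ A A' : Set ℂ, MeasurableSet A → MeasurableSet A' → (∀ x ∈ A, ∀ y ∈ ball x d, y ∈ A') → IntegrableOn s A' →
        ∫ x in A, S x ≤ ∫ x in A', s x) := by
  obtain ⟨δ₁, hδ₁, hth⟩ := hK.exists_thickening_subset_open hΩ hKΩ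
  set δ := min d (δ₁ / 2) with hδdef
  have hδ : 0 < δ := lt_min hd (half_pos hδ₁)
  have hδd : δ ≤ d := min_le_left _ _
  have hδ2 : δ ≤ δ₁ / 2 := min_le_right _ _
  obtain ⟨φ, sφ, cφ, φ0, φ1, φz⟩ := exists_moll hδ
  have iφ : Integrable φ := sφ.continuous.integrable_of_hasCompactSupport cφ
  have hin : ∀ x ∈ K, ∀ y, ‖y - x‖ < δ₁ → y ∈ Ω := fun x hx y hy =>
    hth (mem_thickening_iff.2 ⟨x, hx, by rwa [dist_eq_norm]⟩)
  have I := fun x => mo_int sφ cφ hm h0 h1 x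
  have sS : ContDiff ℝ ∞ (mo φ s) := by
    rw [mo_eq]
    exact cφ.contDiff_convolution_left _ sφ (loc_int hm h0 h1)
  refine ⟨mo φ s, sS, fun x => integral_nonneg fun y => mul_nonneg (φ0 y) (h0 _), fun x => ?_, fun x hx => ?_,
    fun x hx b hb => ?_, fun A A' hA hA' hAA hs => ?_⟩
  · rw [← φ1]
    exact integral_mono (I x) iφ fun y => mul_le_of_le_one_right (φ0 y) (h1 _)
  · apply lap_nonneg_of_submean sS x (half_pos hδ₁)
    intro R hR hRd
    have hF : Integrable (Function.uncurry fun (θ : ℝ) (y : ℂ) => φ y * s (cir x R θ - y))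
        ((volume.restrict (Set.uIoc 0 (2 * Real.pi))).prod volume) := by
      have j : Integrable (fun p : ℝ × ℂ => φ p.2) ((volume.restrict (Set.uIoc 0 (2 * Real.pi))).prod volume) := by
        have : IsFiniteMeasure (volume.restrict (Set.uIoc 0 (2 * Real.pi))) := by
          constructor; simp [uIoc]
        exact iφ.comp_snd _
      apply j.mul_bdd (c := 1)
      · apply Measurable.aestronglyMeasurable
        apply hm.comp
        have c : Continuous (fun p : ℝ × ℂ => cir x R p.1 - p.2) := by unfold cir; fun_prop
        exact c.measurable
      · exact ae_of_all _ fun y => by rw [Real.norm_of_nonneg (h0 _)]; exact h1 _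
    have sw := intervalIntegral_integral_swap hF
    have e1 : ∫ θ in (0:ℝ)..(2 * Real.pi), mo φ s (cir x R θ) =
      ∫ y, φ y * ∫ θ in (0:ℝ)..(2 * Real.pi), s (cir x R θ - y) := by
      unfold mo; rw [sw]; congr 1; ext y; rw [intervalIntegral.integral_const_mul]
    rw [e1]
    unfold mo
    rw [← integral_const_mul]
    have hle : ∀ y, 2 * Real.pi * (φ y * s (x - y)) ≤ φ y * ∫ θ in (0:ℝ)..(2 * Real.pi), s (cir x R θ - y) := by
      intro y
      by_cases hy : y ∈ ball (0:ℂ) δ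
      · rw [mem_ball_zero_iff] at hy
        have h2 := hsub (x - y) R hR (fun t ht => by
          apply hin x hx
          rw [mem_closedBall, dist_eq_norm] at ht
          have : ‖t - x‖ ≤ ‖t - (x - y)‖ + ‖y‖ := by
            have := norm_sub_le (t - (x - y)) y
            rwa [show t - (x - y) - y = t - x by ring] at this
          linarith)
        have e2 : ∀ θ, cir (x - y) R θ = cir x R θ - y := fun θ => by unfold cir; ring
        simp only [e2] at h2
        have := mul_le_mul_of_nonneg_left h2 (φ0 y)
        linarith
      · rw [φz y hy]; simp
    apply integral_mono ((I x).const_mul _) _ hle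
    have := hF.integral_prod_right
    refine this.congr (ae_of_all _ fun y => ?_)
    simp only [Function.uncurry]
    rw [intervalIntegral.integral_of_le (by positivity), uIoc_of_le (by positivity), integral_const_mul]
  · have e1 : b = ∫ y, φ y * b := by rw [integral_mul_const, φ1, one_mul]
    rw [e1]
    apply integral_mono (iφ.mul_const b) (I x)
    intro y
    by_cases hy : y ∈ ball (0:ℂ) δ
    · rw [mem_ball_zero_iff] at hy
      apply mul_le_mul_of_nonneg_left _ (φ0 y)
      have hn : ‖x - y - x‖ = ‖y‖ := by rw [show x - y - x = -y by ring, norm_neg]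
      refine hb _ ⟨?_, hin x hx _ ?_⟩
      · rw [mem_ball, dist_eq_norm, hn]; linarith
      · rw [hn]; linarith
    · simp [φz y hy]
  · set s' := A'.indicator s with hs'
    have js' : Integrable s' := (integrable_indicator_iff hA').2 hs
    have m' : Measurable s' := hm.indicator hA'
    have s0 : ∀ x, 0 ≤ s' x := fun x => indicator_nonneg (fun x _ => h0 x) x
    have s1 : ∀ x, s' x ≤ 1 := fun x => (indicator_le_self' (fun x _ => h0 x) x).trans (h1 x)
    have I' := fun x => mo_int sφ cφ m' s0 s1 x
    have jm : Integrable (mo φ s') := by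
      rw [mo_eq]; exact iφ.integrable_convolution _ js'
    have e1 : ∫ x, mo φ s' x = ∫ x in A', s x := by
      rw [mo_eq, integral_convolution _ iφ js', φ1, hs', integral_indicator hA']; simp
    rw [← e1]
    have hle : ∀ x ∈ A, mo φ s x = mo φ s' x := by
      intro x hx
      unfold mo
      congr 1; ext y
      by_cases hy : y ∈ ball (0:ℂ) δ
      · rw [hs', indicator_of_mem]
        apply hAA x hx
        rw [mem_ball_zero_iff] at hy
        rw [mem_ball, dist_eq_norm, show x - y - x = -y by ring, norm_neg]; linarith
      · simp [φz y hy]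
    rw [setIntegral_congr_fun hA hle]
    exact setIntegral_le_integral jm (ae_of_all _ fun x => integral_nonneg fun y => mul_nonneg (φ0 y) (s0 _))

lemma barrier {Ω : Set ℂ} {u : ℂ → EReal} (hΩ : IsOpen Ω) (hu : SubharmonicOn u Ω) (hneg : ∀ z ∈ Ω, u z < 0) :
    ∃ q : ℂ → ℝ, Measurable q ∧ (∀ x, -1 ≤ q x) ∧ (∀ x, q x < 0) ∧
      (∀ c R, 0 < R → closedBall c R ⊆ Ω → 2 * Real.pi * q c ≤ ∫ θ in (0:ℝ)..(2 * Real.pi), q (cir c R θ)) ∧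
      ∀ x ∈ Ω, ∀ b : ℝ, (b : EReal) < u x → b ≤ q x := by
  classical
  set g : ℂ → EReal := fun ζ => if ζ ∈ Ω then u ζ else ⊥ with hg
  have gm : Measurable g := by
    apply measurable_of_Iio
    intro c
    have e : g ⁻¹' Iio c = (Ω ∩ {x | u x < c}) ∪ (Ωᶜ ∩ {_x | (⊥ : EReal) < c}) := by
      ext x
      by_cases hx : x ∈ Ω <;> simp [hg, hx]
    rw [e]
    refine MeasurableSet.union (IsOpen.measurableSet ?_) (hΩ.measurableSet.compl.inter (by simp))
    rw [isOpen_iff_mem_nhds]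
    rintro x ⟨hx, hxc⟩
    have := hu.1 x hx c hxc
    rw [hΩ.nhdsWithin_eq hx] at this
    exact inter_mem (hΩ.mem_nhds hx) this
  have hm1 : (-(((1:ℕ) : ℝ) : EReal)) = ((-1 : ℝ) : EReal) := by simp
  set q : ℂ → ℝ := fun ζ => (max (g ζ) (-(((1:ℕ) : ℝ) : EReal))).toReal with hq
  have gneg : ∀ x, g x < 0 := fun x => by
    by_cases hx : x ∈ Ω
    · simp only [hg, hx, if_true]; exact hneg x hx
    · simp [hg, hx]
  have qc : ∀ x, ((q x : ℝ) : EReal) = max (g x) ((-1 : ℝ) : EReal) := fun x => by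
    simp only [hq, hm1]
    rw [EReal.coe_toReal]
    · intro h
      have : max (g x) ((-1 : ℝ) : EReal) < ⊤ := max_lt ((gneg x).trans (EReal.coe_lt_top 0)) (EReal.coe_lt_top _)
      exact this.ne h
    · intro h
      have : ⊥ < max (g x) ((-1 : ℝ) : EReal) := lt_max_of_lt_right (EReal.bot_lt_coe _)
      exact this.ne' h
  have q1 : ∀ x, -1 ≤ q x := fun x => by
    have : ((-1 : ℝ) : EReal) ≤ (q x : EReal) := by rw [qc]; exact le_max_right _ _
    exact_mod_cast this
  have q0 : ∀ x, q x < 0 := fun x => by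
    have : (q x : EReal) < ((0:ℝ) : EReal) := by
      rw [qc]; exact max_lt (gneg x) (by exact_mod_cast (by norm_num : (-1:ℝ) < 0))
    exact_mod_cast this
  have qm : Measurable q := (gm.max measurable_const).ereal_toReal
  refine ⟨q, qm, q1, q0, fun c R hR hB => ?_, fun x hx b hb => ?_⟩
  · have hc : c ∈ Ω := hB (mem_closedBall_self hR.le)
    have h1 := (hu.2.2 c hc R hR hB).trans (iInf_le _ 1)
    have hcirc : ∀ θ : ℝ, c + R * Complex.exp (θ * Complex.I) ∈ Ω := fun θ => by
      apply hB
      rw [mem_closedBall, dist_eq_norm]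
      simp [Complex.norm_exp_ofReal_mul_I, abs_of_pos hR]
    have e1 : circleAvgTrunc u c R 1 = (2 * Real.pi)⁻¹ * ∫ θ in (0:ℝ)..(2 * Real.pi), q (cir c R θ) := by
      unfold circleAvgTrunc
      congr 2
      ext θ
      simp only [hq, hg, cir, hcirc θ, if_true]
    rw [e1] at h1
    have iq : IntervalIntegrable (fun θ => q (cir c R θ)) volume 0 (2 * Real.pi) := by
      rw [intervalIntegrable_iff]
      apply Measure.integrableOn_of_bounded (M := 1)
      · simp [uIoc]
      · exact (qm.comp ((cir_continuous c).comp (Continuous.prodMk_right R)).measurable).aestronglyMeasurable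
      · exact ae_of_all _ fun θ => by rw [Real.norm_eq_abs, abs_le]; exact ⟨q1 _, (q0 _).le.trans zero_le_one⟩
    have h2 : -1 ≤ (2 * Real.pi)⁻¹ * ∫ θ in (0:ℝ)..(2 * Real.pi), q (cir c R θ) := by
      have : ∫ θ in (0:ℝ)..(2 * Real.pi), (-1:ℝ) ≤ ∫ θ in (0:ℝ)..(2 * Real.pi), q (cir c R θ) :=
        intervalIntegral.integral_mono (by positivity) (by simp) iq fun θ => q1 _
      rw [intervalIntegral.integral_const] at this
      have h3 := mul_le_mul_of_nonneg_left this (by positivity : 0 ≤ (2 * Real.pi)⁻¹)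
      refine le_trans (le_of_eq ?_) h3
      have := Real.pi_pos
      simp; field_simp
    have h3 : (q c : EReal) ≤ (((2 * Real.pi)⁻¹ * ∫ θ in (0:ℝ)..(2 * Real.pi), q (cir c R θ) : ℝ) : EReal) := by
      rw [qc]
      apply max_le
      · simp only [hg, hc, if_true]; exact h1
      · exact_mod_cast h2
    have h4 : q c ≤ (2 * Real.pi)⁻¹ * ∫ θ in (0:ℝ)..(2 * Real.pi), q (cir c R θ) := by exact_mod_cast h3
    have hp : 0 < 2 * Real.pi := by positivity
    rwa [inv_mul_eq_div, le_div_iff₀ hp, mul_comm] at h4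
  · have : (b : EReal) ≤ (q x : EReal) := by
      rw [qc]; simp only [hg, hx, if_true]; exact hb.le.trans (le_max_left _ _)
    exact_mod_cast this

noncomputable def ss (q : ℂ → ℝ) (a : ℝ) (x : ℂ) : ℝ := max 0 (1 + a * q x)

lemma ss_int (q : ℂ → ℝ) (hq : Measurable q) (hq0 : ∀ x, q x < 0) {A : Set ℂ} 
    (hAf : volume A ≠ ⊤) {ε : ℝ} (hε : 0 < ε) : ∃ a : ℝ, 1 ≤ a ∧ ∫ x in A, ss q a x < ε ∧ IntegrableOn (ss q a) A := by
  have mS : ∀ a, Measurable (ss q a) := fun a => measurable_const.max ((hq.const_mul a).const_add 1)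
  have b1 : ∀ a, 0 ≤ a → ∀ x, ‖ss q a x‖ ≤ 1 := fun a ha x => by
    unfold ss
    rw [Real.norm_of_nonneg (le_max_left _ _)]
    exact max_le zero_le_one (by nlinarith [hq0 x])
  have hfin : IsFiniteMeasure (volume.restrict A) := ⟨by simpa using hAf.lt_top⟩
  have T : Tendsto (fun n : ℕ => ∫ x in A, ss q ((n:ℝ) + 1) x) atTop (𝓝 (∫ x in A, (0:ℝ))) := by
    apply tendsto_integral_of_dominated_convergence (fun _ => (1:ℝ))
    · exact fun n => (mS _).aestronglyMeasurable
    · exact integrable_const _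
    · exact fun n => ae_of_all _ fun x => b1 _ (by positivity) x
    · refine ae_of_all _ fun x => ?_
      obtain ⟨n, hn⟩ := exists_nat_gt (1 / (- q x))
      have hqx : 0 < - q x := by linarith [hq0 x]
      apply tendsto_const_nhds.congr'
      filter_upwards [eventually_ge_atTop n] with m hm
      unfold ss
      rw [max_eq_left]
      rw [div_lt_iff₀ hqx] at hn
      have : (n:ℝ) ≤ m := by exact_mod_cast hm
      nlinarith
  rw [integral_zero] at T
  obtain ⟨n, hn⟩ := (T.eventually (gt_mem_nhds hε)).exists
  refine ⟨n + 1, by linarith [n.cast_nonneg (α := ℝ)], hn, ?_⟩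
  exact (integrable_const (1:ℝ)).mono' (mS _).aestronglyMeasurable (ae_of_all _ fun x => b1 _ (by positivity) x)

lemma ss_submean {q : ℂ → ℝ} {a : ℝ} (ha : 0 ≤ a) (hq : Measurable q) (q1 : ∀ x, -1 ≤ q x) (q0 : ∀ x, q x < 0) {c : ℂ} {R : ℝ}
    (h : 2 * Real.pi * q c ≤ ∫ θ in (0:ℝ)..(2 * Real.pi), q (cir c R θ)) :
    2 * Real.pi * ss q a c ≤ ∫ θ in (0:ℝ)..(2 * Real.pi), ss q a (cir c R θ) := by
  have ib : ∀ {f : ℂ → ℝ} (M : ℝ), Measurable f → (∀ x, ‖f x‖ ≤ M) →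
      IntervalIntegrable (fun θ => f (cir c R θ)) volume 0 (2 * Real.pi) := by
    intro f M hf hM
    rw [intervalIntegrable_iff]
    apply Measure.integrableOn_of_bounded (M := M)
    · simp [uIoc]
    · exact (hf.comp ((cir_continuous c).comp (Continuous.prodMk_right R)).measurable).aestronglyMeasurable
    · exact ae_of_all _ fun θ => hM _
  have iq := ib 1 hq fun x => by rw [Real.norm_eq_abs, abs_le]; exact ⟨q1 _, (q0 _).le.trans zero_le_one⟩
  have is : IntervalIntegrable (fun θ => ss q a (cir c R θ)) volume 0 (2 * Real.pi) := by
    apply ib 1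
    · exact measurable_const.max ((hq.const_mul a).const_add 1)
    · intro x
      unfold ss
      rw [Real.norm_of_nonneg (le_max_left _ _)]
      exact max_le zero_le_one (by nlinarith [q0 x])
  have hp : 0 < 2 * Real.pi := by positivity
  have h1 : 0 ≤ ∫ θ in (0:ℝ)..(2 * Real.pi), ss q a (cir c R θ) :=
    intervalIntegral.integral_nonneg hp.le fun θ _ => le_max_left _ _
  have h2 : ∫ θ in (0:ℝ)..(2 * Real.pi), (1 + a * q (cir c R θ)) ≤ ∫ θ in (0:ℝ)..(2 * Real.pi), ss q a (cir c R θ) :=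
    intervalIntegral.integral_mono hp.le ((by simp : IntervalIntegrable (fun _ => (1:ℝ)) volume 0 (2*Real.pi)).add (iq.const_mul a)) is fun θ => le_max_right _ _
  rw [intervalIntegral.integral_add (by simp) (iq.const_mul a), intervalIntegral.integral_const_mul,
    intervalIntegral.integral_const] at h2
  simp only [sub_zero, smul_eq_mul, mul_one] at h2
  have h3 := mul_le_mul_of_nonneg_left h ha
  unfold ss at *
  rcases max_cases 0 (1 + a * q c) with h4 | h4
  · rw [h4.1]; simpa using h1
  · rw [h4.1]; linarith

lemma kk_sub_v {D : Set ℂ} {w z : ℂ} {r R : ℝ} (hr : 0 < r) (hrR : r < R) {v h : ℂ → ℂ} (hv : IsTest D v)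
    (hvh : ∀ t ∈ ball w R, v t = 1 - (t - z) * h t) : tsupport (kk w z r h) ⊆ D := by
  have e : kk w z r h = fun t => ((kap (r / 2) (t - w) : ℝ) : ℂ) * v t := by
    funext t
    by_cases ht : t ∈ ball w R
    · rw [hvh t ht]; rfl
    · have : r ≤ ‖t - w‖ := by
        rw [mem_ball, dist_eq_norm, not_lt] at ht; linarith
      unfold kk
      rw [kap_eq_zero (half_pos hr) (by linarith)]; simp
  rw [e]
  exact (tsupport_mul_subset_right (f := fun t : ℂ => ((kap (r / 2) (t - w) : ℝ) : ℂ)) (g := v)).trans hv.2.2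

lemma main_aux (D : Set ℂ)
    (hopen : IsOpen D) (hbd : Bornology.IsBounded D)
    (w : ℂ) (hreg : RegularBoundaryPt D w) :
    Tendsto (fun z => bergmanKernel D z) (𝓝[D] w) (𝓝 (⊤ : ℝ≥0∞)) := by
  rw [ENNReal.tendsto_nhds_top_iff_nnreal]
  intro M
  obtain ⟨c0, hc0, core⟩ := core_estimate
  obtain ⟨R0, hR0⟩ := hbd.subset_ball w
  obtain ⟨R, hR2, hRD⟩ : ∃ R : ℝ, 2 ≤ R ∧ D ⊆ ball w R :=
    ⟨max 2 R0, le_max_left _ _, hR0.trans (ball_subset_ball (le_max_right _ _))⟩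
  obtain ⟨N, hN0, hB⟩ := partB w hR2 M
  obtain ⟨U, hU, hwU, u, hu, hneg, htend⟩ := hreg
  have hΩ : IsOpen (U ∩ D) := hU.inter hopen
  obtain ⟨q, qm, q1, q0, qsub, qu⟩ := barrier hΩ hu hneg
  obtain ⟨r₁, hr₁, hr₁U⟩ := Metric.isOpen_iff.1 hU w hwU
  obtain ⟨r, hr, hr1, hrU, hrs⟩ : ∃ r : ℝ, 0 < r ∧ r ≤ 1 ∧ closedBall w r ⊆ U ∧ Real.sqrt r * (1 + N) < c0 / 2 := by
    have T : Tendsto (fun r : ℝ => Real.sqrt r * (1 + N)) (𝓝[>] 0) (𝓝 0) := by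
      have : Continuous (fun r : ℝ => Real.sqrt r * (1 + N)) := by fun_prop
      have h := this.tendsto 0
      simp only [Real.sqrt_zero, zero_mul] at h
      exact h.mono_left nhdsWithin_le_nhds
    have e1 := T.eventually (gt_mem_nhds (half_pos hc0))
    have e2 : ∀ᶠ r : ℝ in 𝓝[>] 0, r ∈ Ioo 0 (min 1 r₁) := Ioo_mem_nhdsGT (lt_min one_pos hr₁)
    obtain ⟨r, h1, h2⟩ := (e1.and e2).exists
    exact ⟨r, h2.1, (h2.2.trans_le (min_le_left _ _)).le,
      (closedBall_subset_ball (h2.2.trans_le (min_le_right _ _))).trans hr₁U, h1⟩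
  have hε : 0 < c0 * r ^ 2 / 4 := by positivity
  obtain ⟨a, ha1, hint, hion⟩ := ss_int q qm q0 (A := closedBall w (2 * r))
    (isCompact_closedBall w (2 * r)).measure_ne_top hε
  have ha0 : 0 < a := by linarith
  obtain ⟨ρ₁, hρ₁, hρu⟩ : ∃ ρ₁ > 0, ∀ ζ ∈ U ∩ D, ζ ∈ ball w ρ₁ → ((-(1 / (2 * a)) : ℝ) : EReal) < u ζ := by
    have : ((-(1 / (2 * a)) : ℝ) : EReal) < 0 := by
      rw [← EReal.coe_zero, EReal.coe_lt_coe_iff]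
      have : 0 < 1 / (2 * a) := by positivity
      linarith
    have e := htend.eventually (lt_mem_nhds this)
    rw [eventually_nhdsWithin_iff, Metric.eventually_nhds_iff_ball] at e
    obtain ⟨ρ₁, h1, h2⟩ := e
    exact ⟨ρ₁, h1, fun ζ h3 h4 => h2 ζ h4 h3⟩
  have hss : ∀ ζ ∈ U ∩ D, ζ ∈ ball w ρ₁ → 1 / 2 ≤ ss q a ζ := by
    intro ζ h1 h2
    have h3 := qu ζ h1 _ (hρu ζ h1 h2)
    refine le_trans ?_ (le_max_right _ _)
    have : a * (-(1 / (2 * a))) ≤ a * q ζ := mul_le_mul_of_nonneg_left h3 ha0.le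
    have e : a * (-(1 / (2 * a))) = -(1/2) := by field_simp
    linarith
  set ρ := min (ρ₁ / 2) (r / 2) with hρdef
  have hρ : 0 < ρ := lt_min (by positivity) (by positivity)
  have hρ1 : ρ ≤ ρ₁ / 2 := min_le_left _ _
  have hρr : ρ ≤ r / 2 := min_le_right _ _
  have ev : ∀ᶠ z in 𝓝[D] w, z ∈ ball w ρ := mem_nhdsWithin_of_mem_nhds (ball_mem_nhds w hρ)
  filter_upwards [ev, self_mem_nhdsWithin] with z hz hzD
  by_contra hcon
  rw [not_lt] at hcon
  rw [mem_ball, dist_eq_norm] at hz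
  obtain ⟨v, h, hv, hh, hhc, hvh, hg, hW⟩ := hB D hopen hRD z hzD (by linarith) hcon
  have hK := kk_supp w z hr h
  have hKb := kk_tsupport w z hr h
  have hKΩ : tsupport (kk w z r h) ⊆ U ∩ D :=
    subset_inter (hKb.trans hrU) (kk_sub_v hr (by linarith) hv hvh)
  obtain ⟨S, sS, S0, S1, Slap, Slow, Sint⟩ := mollify (s := ss q a)
    (measurable_const.max ((qm.const_mul a).const_add 1)) (fun x => le_max_left _ _)
    (fun x => max_le zero_le_one (by nlinarith [q0 x])) hΩ hK hKΩ
    (fun c R hR hcR => ss_submean ha0.le qm q1 q0 (qsub c R hR hcR)) hρ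
  have key := core w z ρ r (c0 * r ^ 2 / 4) N h S hρ (by linarith) hr1 hz.le hε.le hN0 hh hhc sS S0 S1 Slap
    (fun t ht htw => Slow t ht _ (fun y hy => hss y hy.2 (by
      have h1 := hy.1
      rw [mem_ball] at h1 ⊢
      rw [← dist_eq_norm] at htw
      linarith [dist_triangle y t w])))
    ((Sint (Ann w r) (closedBall w (2 * r)) (Ann_meas w r) measurableSet_closedBall (fun x hx y hy => by
      have h1 : dist x w ≤ r := by rw [dist_eq_norm]; exact hx.2
      rw [mem_ball] at hy
      rw [mem_closedBall]
      linarith [dist_triangle y x w]) hion).trans hint.le) hg (hW ρ hρ)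
  have e : c0 * r ^ 2 / 4 / r ^ 2 = c0 / 4 := by field_simp
  rw [e] at key
  linarith

/-- **Proposition 6.** If `D ⊆ ℂ` is a bounded domain and `w ∈ ∂D` is a regular boundary
point, then `K_D(z) → ∞` as `D ∋ z → w`. -/
theorem bergman_tendsto_top_of_regular (D : Set ℂ)
    (hopen : IsOpen D) (hconn : IsConnected D) (hbd : Bornology.IsBounded D)
    (w : ℂ) (hw : w ∈ frontier D) (hreg : RegularBoundaryPt D w) :
    Tendsto (fun z => bergmanKernel D z) (𝓝[D] w) (𝓝 (⊤ : ℝ≥0∞)) := by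
  exact main_aux D hopen hbd w hreg
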